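/- Let P be a graph with a vertex v such that P∖v (the graph obtained by deleting v) is a forest, and let Q be an outerplanar graph. Then there exists a number p = p(P,Q) such that every 2-connected graph of path-width at least p has a minor isomorphic to P or a minor isomorphic to Q. -/

import Mathlib

/-!
Common definitions: minors, widths, connectivity, the specific graphs
`K4`, `K23`, `C32`, `graphA`, the binary trees `CT_h`, the graphs `𝒫_k`, `𝒬_k`,
the trees `T_h`, homeomorphic embeddings, cascades, and related notions,
following Dang--Thomas, "Minors of two-connected graphs of large path-width".
-/

open SimpleGraph

/-- A minor model of `H` in `G`: branch sets `f w` are nonempty, connected,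
pairwise disjoint, and edges of `H` are realized by edges of `G` between branch sets. -/
def IsMinorModel {W V : Type*} (H : SimpleGraph W) (G : SimpleGraph V) (f : W → Set V) : Prop :=
  (∀ w, (f w).Nonempty) ∧
  (∀ w, (G.induce (f w)).Connected) ∧
  (∀ w₁ w₂ : W, w₁ ≠ w₂ → Disjoint (f w₁) (f w₂)) ∧
  (∀ w₁ w₂ : W, H.Adj w₁ w₂ → ∃ v₁ ∈ f w₁, ∃ v₂ ∈ f w₂, G.Adj v₁ v₂)

/-- `H` is (isomorphic to) a minor of `G`. -/
def IsMinor {W V : Type*} (H : SimpleGraph W) (G : SimpleGraph V) : Prop :=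
  ∃ f : W → Set V, IsMinorModel H G f

/-- The complete graph on four vertices. -/
def K4 : SimpleGraph (Fin 4) := ⊤

/-- The complete bipartite graph `K_{2,3}`. -/
def K23 : SimpleGraph (Fin 2 ⊕ Fin 3) := completeBipartiteGraph (Fin 2) (Fin 3)

/-- The graph `A`: a cycle `a₁a₂a₃a₄a₅a₆a₁` plus the edges `a₁a₃`, `a₃a₅`, `a₅a₁`. -/
def graphA : SimpleGraph (Fin 6) :=
  SimpleGraph.fromEdgeSet
    {s(0, 1), s(1, 2), s(2, 3), s(3, 4), s(4, 5), s(5, 0), s(0, 2), s(2, 4), s(4, 0)}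

/-- The graph `C_{3,2}`: two disjoint triangles. -/
def C32 : SimpleGraph (Fin 2 × Fin 3) :=
  SimpleGraph.fromRel (fun u v => u.1 = v.1)

/-- A graph is outerplanar iff it has no `K₄` minor and no `K_{2,3}` minor
(the classical characterization of outerplanarity). -/
def Outerplanar {V : Type*} (G : SimpleGraph V) : Prop :=
  ¬ IsMinor K4 G ∧ ¬ IsMinor K23 G

/-- `G` is `k`-connected: it has more than `k` vertices and deleting fewer than `k`
vertices leaves a connected graph. -/
def IsKConnected {V : Type*} [Fintype V] (k : ℕ) (G : SimpleGraph V) : Prop :=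
  k + 1 ≤ Fintype.card V ∧
  ∀ S : Finset V, S.card < k → (G.induce ((↑S : Set V)ᶜ)).Connected

/-- `(Tr, X)` is a tree-decomposition of `G`: `Tr` is a tree, the bags `X t` cover all
vertices and edges (W1), and whenever `t₂` lies on the path of `Tr` between `t₁` and `t₃`
we have `X t₁ ∩ X t₃ ⊆ X t₂` (W2). -/
def IsTreeDecomp {V T : Type*} (G : SimpleGraph V) (Tr : SimpleGraph T) (X : T → Finset V) :
    Prop :=
  Tr.IsTree ∧
  (∀ v : V, ∃ t, v ∈ X t) ∧
  (∀ u v : V, G.Adj u v → ∃ t, u ∈ X t ∧ v ∈ X t) ∧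
  (∀ (t₁ t₂ t₃ : T) (p : Tr.Walk t₁ t₃), p.IsPath → t₂ ∈ p.support →
    ∀ v : V, v ∈ X t₁ → v ∈ X t₃ → v ∈ X t₂)

/-- A path-decomposition of `G`, with bags indexed by `Fin n`. -/
def IsPathDecomp {V : Type*} (G : SimpleGraph V) {n : ℕ} (X : Fin n → Finset V) : Prop :=
  (∀ v : V, ∃ i, v ∈ X i) ∧
  (∀ u v : V, G.Adj u v → ∃ i, u ∈ X i ∧ v ∈ X i) ∧
  (∀ i j k : Fin n, i ≤ j → j ≤ k → ∀ v : V, v ∈ X i → v ∈ X k → v ∈ X j)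

/-- The path-width of a finite graph: the least `w` such that `G` has a
path-decomposition all of whose bags have at most `w + 1` vertices. -/
noncomputable def pathwidth {V : Type*} [Fintype V] (G : SimpleGraph V) : ℕ :=
  sInf {w | ∃ (n : ℕ) (X : Fin n → Finset V), IsPathDecomp G X ∧ ∀ i, (X i).card ≤ w + 1}

/-- The tree-width of a finite graph: the least `w` such that `G` has a
tree-decomposition all of whose bags have at most `w + 1` vertices. -/
noncomputable def treewidth {V : Type*} [Fintype V] (G : SimpleGraph V) : ℕ :=
  sInf {w | ∃ (T : Type) (_ : Fintype T) (Tr : SimpleGraph T) (X : T → Finset V),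
    IsTreeDecomp G Tr X ∧ ∀ t, (X t).card ≤ w + 1}

/-- Vertices of the binary tree `CT_h`: paths from the root, recorded as reversed
lists of left/right moves, of length at most `h`. -/
abbrev CTVert (h : ℕ) := {l : List Bool // l.length ≤ h}

/-- The binary tree `CT_h` of height `h`. -/
def CTgraph (h : ℕ) : SimpleGraph (CTVert h) :=
  SimpleGraph.fromEdgeSet
    {e | ∃ (b : Bool) (σ : List Bool) (hσ : σ.length < h),
      e = s((⟨σ, le_of_lt hσ⟩ : CTVert h), (⟨b :: σ, by simpa using hσ⟩ : CTVert h))}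

/-- The graph `𝒫_k`: the binary tree `CT_k` together with one extra vertex (`none`)
adjacent to every leaf of `CT_k`. -/
def Pgraph (k : ℕ) : SimpleGraph (Option (CTVert k)) :=
  SimpleGraph.fromEdgeSet
    ({e | ∃ (b : Bool) (σ : List Bool) (hσ : σ.length < k),
        e = s(some (⟨σ, le_of_lt hσ⟩ : CTVert k), some (⟨b :: σ, by simpa using hσ⟩ : CTVert k))} ∪
     {e | ∃ l : CTVert k, l.1.length = k ∧ e = s(none, some l)})

/-- Vertices of `𝒬_k`: the two base vertices of the root triangle (`Sum.inl false` and
`Sum.inl true`), together with one apex vertex for each node of the complete binary tree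
of depth `< k` (recorded as a reversed list of moves). -/
abbrev QVert (k : ℕ) := Bool ⊕ {l : List Bool // l.length < k}

/-- The two ends of the base edge of the copy of the triangle at node `σ` of `𝒬_k`. -/
def qbase (k : ℕ) : List Bool → QVert k × QVert k
  | [] => (Sum.inl false, Sum.inl true)
  | b :: σ =>
      ((if b then (qbase k σ).2 else (qbase k σ).1),
        if h : σ.length < k then Sum.inr ⟨σ, h⟩ else Sum.inl false)

/-- The graph `𝒬_k`, built from triangles as in the recursive definition: the triangle at
node `σ` consists of the base edge `qbase k σ` together with the apex vertex `Sum.inr σ`;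
the base edge of `𝒬_k` is `s(Sum.inl false, Sum.inl true)`. -/
def Qgraph (k : ℕ) : SimpleGraph (QVert k) :=
  SimpleGraph.fromEdgeSet
    ({s(Sum.inl false, Sum.inl true)} ∪
     {e | ∃ (σ : List Bool) (h : σ.length < k),
        e = s(Sum.inr ⟨σ, h⟩, (qbase k σ).1) ∨ e = s(Sum.inr ⟨σ, h⟩, (qbase k σ).2)})

/-- The minor vertices of the tree `T_h` (one for each string of length `≤ h`). -/
abbrev MVert (h : ℕ) := {l : List Bool // l.length ≤ h}

/-- The major vertices of the tree `T_h` (one for each string of length `≤ h - 1`). -/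
abbrev JVert (h : ℕ) := {l : List Bool // l.length + 1 ≤ h}

/-- Vertices of the tree `T_h` (obtained from `CT_h` by subdividing every edge not incident
with a degree-one vertex and adding the minor root). -/
abbrev TVert (h : ℕ) := MVert h ⊕ JVert h

/-- The tree `T_h`: each major vertex `σ` is adjacent to the minor vertices `σ` (its parent),
`false :: σ` (its left neighbor) and `true :: σ` (its right neighbor). -/
def Tgraph (h : ℕ) : SimpleGraph (TVert h) :=
  SimpleGraph.fromEdgeSet
    {e | ∃ (σ : List Bool) (hσ : σ.length + 1 ≤ h),
      e = s(Sum.inr ⟨σ, hσ⟩, Sum.inl ⟨σ, Nat.le_of_succ_le hσ⟩) ∨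
      ∃ b : Bool, e = s(Sum.inr ⟨σ, hσ⟩, Sum.inl ⟨b :: σ, by simpa using hσ⟩)}

/-- A homeomorphic embedding of `TA` into `TB`: an injection such that for any two edges of
`TA` sharing an end `t`, the corresponding paths of `TB` are edge-disjoint. -/
def IsHomeoEmb {A B : Type*} (TA : SimpleGraph A) (TB : SimpleGraph B) (η : A → B) : Prop :=
  Function.Injective η ∧
  ∀ ⦃t t₁ t₂ : A⦄, TA.Adj t t₁ → TA.Adj t t₂ → t₁ ≠ t₂ →
    ∀ (p₁ : TB.Walk (η t) (η t₁)) (p₂ : TB.Walk (η t) (η t₂)),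
      p₁.IsPath → p₂.IsPath → ∀ e ∈ p₁.edges, e ∉ p₂.edges

/-- `v` lies in the span of `η`: it lies on a path of `TB` between two vertices in the
image of `η`. -/
def inSpan {A B : Type*} (TB : SimpleGraph B) (η : A → B) (v : B) : Prop :=
  ∃ (a₁ a₂ : A) (p : TB.Walk (η a₁) (η a₂)), p.IsPath ∧ v ∈ p.support

/-- A cascade of height `h` and size `s` in the tree-decomposition `(Tr, X)`:
a homeomorphic embedding of `T_h` with `|X (η t)| = s` for every minor vertex `t`
and `|X t| ≥ s` for every `t` in the span. -/
def IsCascade {V T : Type*} (Tr : SimpleGraph T) (X : T → Finset V) (h s : ℕ)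
    (η : TVert h → T) : Prop :=
  IsHomeoEmb (Tgraph h) Tr η ∧
  (∀ l : MVert h, (X (η (Sum.inl l))).card = s) ∧
  (∀ t : T, inSpan Tr η t → s ≤ (X t).card)

/-- An injective cascade with common intersection set `I`. -/
def IsInjectiveCascade {V T : Type*} (Tr : SimpleGraph T) (X : T → Finset V) (h s : ℕ)
    (η : TVert h → T) (I : Finset V) : Prop :=
  IsCascade Tr X h s η ∧ I.card < s ∧
  ∀ t t' : TVert h, t ≠ t' → ((X (η t) : Set V) ∩ (X (η t') : Set V)) = (I : Set V)

/-- A family of `s` disjoint paths in `G \ I` (a linkage). -/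
def IsLinkage {V : Type*} (G : SimpleGraph V) (I : Finset V) {s : ℕ} {x y : Fin s → V}
    (P : ∀ i : Fin s, G.Walk (x i) (y i)) : Prop :=
  (∀ i, (P i).IsPath) ∧
  (∀ i, ∀ v ∈ (P i).support, v ∉ I) ∧
  (∀ i j, i ≠ j → ∀ v ∈ (P i).support, v ∉ (P j).support)

/-- An ordered cascade: an injective cascade of size `s + |I|` with common intersection set
`I`, together with orderings `ξ t : Fin s → X (η t) \ I` of the bags at minor vertices, such
that at every major vertex there are left and right linkages connecting corresponding
vertices. -/
def IsOrderedCascade {V T : Type*} (G : SimpleGraph V) (Tr : SimpleGraph T)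
    (X : T → Finset V) (h s : ℕ) (η : TVert h → T) (I : Finset V)
    (ξ : MVert h → Fin s → V) : Prop :=
  IsInjectiveCascade Tr X h (s + I.card) η I ∧
  (∀ t : MVert h, Function.Injective (ξ t) ∧
    Set.range (ξ t) = (X (η (Sum.inl t)) : Set V) \ (I : Set V)) ∧
  ∀ (σ : List Bool) (hσ : σ.length + 1 ≤ h),
    (∃ P : ∀ i : Fin s,
        G.Walk (ξ ⟨σ, Nat.le_of_succ_le hσ⟩ i) (ξ ⟨false :: σ, by simpa using hσ⟩ i),
      IsLinkage G I P) ∧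
    (∃ Q : ∀ i : Fin s,
        G.Walk (ξ ⟨σ, Nat.le_of_succ_le hσ⟩ i) (ξ ⟨true :: σ, by simpa using hσ⟩ i),
      IsLinkage G I Q)

/-- The vertex set of the `η`-torso at the major vertex `σ` of `T_h`: the union of the bags
`X t - I` over all `t` such that the path in `Tr` from `t` to `η σ` contains none of the
images of the three minor neighbors of `σ` as an internal vertex. -/
def torsoSet {V T : Type*} (Tr : SimpleGraph T) (X : T → Finset V) {h : ℕ}
    (η : TVert h → T) (I : Finset V) (σ : List Bool) (hσ : σ.length + 1 ≤ h) : Set V :=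
  {v | v ∉ I ∧ ∃ t : T,
    (∀ p : Tr.Walk t (η (Sum.inr ⟨σ, hσ⟩)), p.IsPath →
      ∀ u : T,
        (u = η (Sum.inl ⟨σ, Nat.le_of_succ_le hσ⟩) ∨
         u = η (Sum.inl ⟨false :: σ, by simpa using hσ⟩) ∨
         u = η (Sum.inl ⟨true :: σ, by simpa using hσ⟩)) →
        u ∈ p.support → u = t ∨ u = η (Sum.inr ⟨σ, hσ⟩)) ∧
    v ∈ X t}

/-- `H` is a tripod in `G` with all vertices in `S`, center `c` and feet `f₁, f₂, f₃`:
the union of three paths from `c` to the feet, pairwise disjoint except for `c`,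
at least two of which have length at least one. -/
def IsTripodOn {V : Type*} (G : SimpleGraph V) (S : Set V) (H : G.Subgraph)
    (c f₁ f₂ f₃ : V) : Prop :=
  ∃ (W₁ : G.Walk c f₁) (W₂ : G.Walk c f₂) (W₃ : G.Walk c f₃),
    W₁.IsPath ∧ W₂.IsPath ∧ W₃.IsPath ∧
    (∀ v ∈ W₁.support, v ∈ S) ∧ (∀ v ∈ W₂.support, v ∈ S) ∧ (∀ v ∈ W₃.support, v ∈ S) ∧
    (∀ v, v ∈ W₁.support → v ∈ W₂.support → v = c) ∧
    (∀ v, v ∈ W₁.support → v ∈ W₃.support → v = c) ∧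
    (∀ v, v ∈ W₂.support → v ∈ W₃.support → v = c) ∧
    ((1 ≤ W₁.length ∧ 1 ≤ W₂.length) ∨ (1 ≤ W₁.length ∧ 1 ≤ W₃.length) ∨
      (1 ≤ W₂.length ∧ 1 ≤ W₃.length)) ∧
    H = W₁.toSubgraph ⊔ W₂.toSubgraph ⊔ W₃.toSubgraph

/-- The major vertex `σ` has property `A_{ij}` in the ordered cascade `η` with orderings
`ξ`: there are two disjoint tripods in the `η`-torso at `σ`, with feet as prescribed. -/
def HasPropA {V T : Type*} (G : SimpleGraph V) (Tr : SimpleGraph T) (X : T → Finset V)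
    {h s : ℕ} (η : TVert h → T) (I : Finset V) (ξ : MVert h → Fin s → V)
    (σ : List Bool) (hσ : σ.length + 1 ≤ h) (i j : Fin s) : Prop :=
  ∃ (Li Lj : G.Subgraph) (ci cj : V),
    (∃ m₂ m₃ : Fin s, (m₂ = i ∨ m₂ = j) ∧ (m₃ = i ∨ m₃ = j) ∧
      IsTripodOn G (torsoSet Tr X η I σ hσ) Li ci
        (ξ ⟨σ, Nat.le_of_succ_le hσ⟩ i)
        (ξ ⟨false :: σ, by simpa using hσ⟩ m₂)
        (ξ ⟨true :: σ, by simpa using hσ⟩ m₃)) ∧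
    (∃ m₂ m₃ : Fin s, (m₂ = i ∨ m₂ = j) ∧ (m₃ = i ∨ m₃ = j) ∧
      IsTripodOn G (torsoSet Tr X η I σ hσ) Lj cj
        (ξ ⟨σ, Nat.le_of_succ_le hσ⟩ j)
        (ξ ⟨false :: σ, by simpa using hσ⟩ m₂)
        (ξ ⟨true :: σ, by simpa using hσ⟩ m₃)) ∧
    Disjoint Li.verts Lj.verts

/-- The major vertex `σ` has property `B_{ij}`: there are two tripods `L_i`, `L_j` in the
`η`-torso at `σ`, with feet `v_{m,1}, v_{m,2}, v_{m,3}` where `{v_{i,y}, v_{j,y}}` equals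
`{ξ_{t_y} i, ξ_{t_y} j}` for each `y`, which intersect exactly in a path that is the
intersection of the branch of `L_i` to `v_{i,3}` and the branch of `L_j` to `v_{j,2}`,
and which avoids both centers. -/
def HasPropB {V T : Type*} (G : SimpleGraph V) (Tr : SimpleGraph T) (X : T → Finset V)
    {h s : ℕ} (η : TVert h → T) (I : Finset V) (ξ : MVert h → Fin s → V)
    (σ : List Bool) (hσ : σ.length + 1 ≤ h) (i j : Fin s) : Prop :=
  ∃ (vi vj : Fin 3 → V) (ci cj : V)
    (Wi : ∀ y : Fin 3, G.Walk ci (vi y)) (Wj : ∀ y : Fin 3, G.Walk cj (vj y)),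
    (∀ y : Fin 3, ({vi y, vj y} : Set V) =
      {(![ξ ⟨σ, Nat.le_of_succ_le hσ⟩,
          ξ ⟨false :: σ, by simpa using hσ⟩,
          ξ ⟨true :: σ, by simpa using hσ⟩] : Fin 3 → Fin s → V) y i,
       (![ξ ⟨σ, Nat.le_of_succ_le hσ⟩,
          ξ ⟨false :: σ, by simpa using hσ⟩,
          ξ ⟨true :: σ, by simpa using hσ⟩] : Fin 3 → Fin s → V) y j}) ∧
    (∀ y, (Wi y).IsPath) ∧ (∀ y, (Wj y).IsPath) ∧
    (∀ y, ∀ v ∈ (Wi y).support, v ∈ torsoSet Tr X η I σ hσ) ∧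
    (∀ y, ∀ v ∈ (Wj y).support, v ∈ torsoSet Tr X η I σ hσ) ∧
    (∀ y y' : Fin 3, y ≠ y' → ∀ v, v ∈ (Wi y).support → v ∈ (Wi y').support → v = ci) ∧
    (∀ y y' : Fin 3, y ≠ y' → ∀ v, v ∈ (Wj y).support → v ∈ (Wj y').support → v = cj) ∧
    ((1 ≤ (Wi 0).length ∧ 1 ≤ (Wi 1).length) ∨ (1 ≤ (Wi 0).length ∧ 1 ≤ (Wi 2).length) ∨
      (1 ≤ (Wi 1).length ∧ 1 ≤ (Wi 2).length)) ∧
    ((1 ≤ (Wj 0).length ∧ 1 ≤ (Wj 1).length) ∨ (1 ≤ (Wj 0).length ∧ 1 ≤ (Wj 2).length) ∨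
      (1 ≤ (Wj 1).length ∧ 1 ≤ (Wj 2).length)) ∧
    (((Wi 0).toSubgraph ⊔ (Wi 1).toSubgraph ⊔ (Wi 2).toSubgraph) ⊓
      ((Wj 0).toSubgraph ⊔ (Wj 1).toSubgraph ⊔ (Wj 2).toSubgraph)
        = (Wi 2).toSubgraph ⊓ (Wj 1).toSubgraph) ∧
    ∃ (x y : V) (p : G.Walk x y), p.IsPath ∧
      (Wi 2).toSubgraph ⊓ (Wj 1).toSubgraph = p.toSubgraph ∧
      ci ∉ p.support ∧ cj ∉ p.support

/-- The major vertex `σ` has property `AB_{ij}`: in the `η`-torso at `σ` there are disjoint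
paths `L_i, L_j` from `ξ_{t₁}(m)` to `ξ_{t₂}(m)` and disjoint paths `R_i, R_j` from
`ξ_{t₁}(m)` to `ξ_{t₃}(m)`, for `m ∈ {i, j}`. -/
def HasPropAB {V T : Type*} (G : SimpleGraph V) (Tr : SimpleGraph T) (X : T → Finset V)
    {h s : ℕ} (η : TVert h → T) (I : Finset V) (ξ : MVert h → Fin s → V)
    (σ : List Bool) (hσ : σ.length + 1 ≤ h) (i j : Fin s) : Prop :=
  ∃ (Li : G.Walk (ξ ⟨σ, Nat.le_of_succ_le hσ⟩ i) (ξ ⟨false :: σ, by simpa using hσ⟩ i))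
    (Lj : G.Walk (ξ ⟨σ, Nat.le_of_succ_le hσ⟩ j) (ξ ⟨false :: σ, by simpa using hσ⟩ j))
    (Ri : G.Walk (ξ ⟨σ, Nat.le_of_succ_le hσ⟩ i) (ξ ⟨true :: σ, by simpa using hσ⟩ i))
    (Rj : G.Walk (ξ ⟨σ, Nat.le_of_succ_le hσ⟩ j) (ξ ⟨true :: σ, by simpa using hσ⟩ j)),
    Li.IsPath ∧ Lj.IsPath ∧ Ri.IsPath ∧ Rj.IsPath ∧
    (∀ v ∈ Li.support, v ∈ torsoSet Tr X η I σ hσ) ∧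
    (∀ v ∈ Lj.support, v ∈ torsoSet Tr X η I σ hσ) ∧
    (∀ v ∈ Ri.support, v ∈ torsoSet Tr X η I σ hσ) ∧
    (∀ v ∈ Rj.support, v ∈ torsoSet Tr X η I σ hσ) ∧
    (∀ v ∈ Li.support, v ∉ Lj.support) ∧
    (∀ v ∈ Ri.support, v ∉ Rj.support)

/-- A monotone homeomorphic embedding `T_a ↪ T_h`: the minor root maps to the minor root,
and for every major vertex with trinity `(t₁, t₂, t₃)`, the images of `t₂` and `t₃` are the
left and right neighbors of the (major) image of the vertex. -/
def IsMonotoneEmb (a h : ℕ) (γ : TVert a → TVert h) : Prop :=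
  IsHomeoEmb (Tgraph a) (Tgraph h) γ ∧
  γ (Sum.inl ⟨[], Nat.zero_le a⟩) = Sum.inl ⟨[], Nat.zero_le h⟩ ∧
  ∀ (σ : List Bool) (hσ : σ.length + 1 ≤ a),
    ∃ (τ : List Bool) (hτ : τ.length + 1 ≤ h),
      γ (Sum.inr ⟨σ, hσ⟩) = Sum.inr ⟨τ, hτ⟩ ∧
      γ (Sum.inl ⟨false :: σ, by simpa using hσ⟩) = Sum.inl ⟨false :: τ, by simpa using hτ⟩ ∧
      γ (Sum.inl ⟨true :: σ, by simpa using hσ⟩) = Sum.inl ⟨true :: τ, by simpa using hτ⟩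

set_option linter.all false

namespace PQ

section basics
variable {V : Type} {G : SimpleGraph V}

/-- there is an edge between the two sets -/
def Tch (G : SimpleGraph V) (A B : Set V) : Prop := ∃ a ∈ A, ∃ b ∈ B, G.Adj a b

/-- connected vertex set, in terms of cuts -/
def Conn (G : SimpleGraph V) (A : Set V) : Prop :=
  (∃ x, x ∈ A) ∧ ∀ K, K ⊆ A → (∃ x, x ∈ K) → (∃ x ∈ A, x ∉ K) → Tch G K (A \ K)

/-- disjointness, in a form convenient for automation -/
abbrev Dj (A B : Set V) : Prop := ∀ x ∈ A, x ∉ B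

theorem Dj.symm {A B : Set V} (h : Dj A B) : Dj B A := fun x hx hx' => h x hx' hx

theorem Tch.mono {A B A' B' : Set V} (h : Tch G A B) (hA : A ⊆ A') (hB : B ⊆ B') : Tch G A' B' := by
  obtain ⟨a, ha, b, hb, hab⟩ := h
  exact ⟨a, hA ha, b, hB hb, hab⟩

theorem Tch.symm {A B : Set V} (h : Tch G A B) : Tch G B A := by
  obtain ⟨a, ha, b, hb, hab⟩ := h
  exact ⟨b, hb, a, ha, hab.symm⟩

theorem Tch.ne {A B : Set V} (h : Tch G A B) : (∃ x, x ∈ A) ∧ ∃ x, x ∈ B := by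
  obtain ⟨a, ha, b, hb, hab⟩ := h
  exact ⟨⟨a, ha⟩, b, hb⟩

theorem Tch.of_union_left {A B C : Set V} (h : Tch G (A ∪ B) C) : Tch G A C ∨ Tch G B C := by
  obtain ⟨a, ha | ha, b, hb, hab⟩ := h
  · exact Or.inl ⟨a, ha, b, hb, hab⟩
  · exact Or.inr ⟨a, ha, b, hb, hab⟩

theorem Tch.of_union_right {A B C : Set V} (h : Tch G C (A ∪ B)) : Tch G C A ∨ Tch G C B := by
  obtain ⟨b, hb, a, ha | ha, hab⟩ := h
  · exact Or.inl ⟨b, hb, a, ha, hab⟩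
  · exact Or.inr ⟨b, hb, a, ha, hab⟩

theorem conn_singleton (x : V) : Conn G {x} := by
  refine ⟨⟨x, rfl⟩, fun K hK h1 h2 => ?_⟩
  grind

/-- extension lemma -/
theorem Conn.ext {A M : Set V} (hA : Conn G A)
    (h : ∀ K, K ⊆ M → (∃ x, x ∈ K) → Tch G K ((M \ K) ∪ A)) : Conn G (A ∪ M) := by
  obtain ⟨⟨a, ha⟩, hc⟩ := hA
  refine ⟨⟨a, Or.inl ha⟩, fun K hK h1 h2 => ?_⟩
  by_cases hAK : A ⊆ K
  · -- complement within M
    have := (h ((A ∪ M) \ K) (by grind) h2).symm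
    exact this.mono (by grind) (by grind)
  · by_cases hAK' : ∃ x ∈ A, x ∈ K
    · exact (hc (A ∩ K) (by grind) (by simpa using hAK') (by grind)).mono (by grind) (by grind)
    · exact (h K (by grind) h1).mono (by grind) (by grind)

theorem Conn.union {A B : Set V} (hA : Conn G A) (hB : Conn G B) (h : Tch G A B) :
    Conn G (A ∪ B) := by
  refine hA.ext fun K hK hne => ?_
  by_cases hBK : ∃ x ∈ B, x ∉ K
  · exact (hB.2 K hK hne hBK).mono (by grind) (by grind)
  · exact h.symm.mono (by grind) (by grind)

/-- union of two connected sets that meet -/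
theorem Conn.union' {A B : Set V} (hA : Conn G A) (hB : Conn G B) (h : ∃ x ∈ A, x ∈ B) :
    Conn G (A ∪ B) := by
  obtain ⟨x, hxA, hxB⟩ := h
  refine ⟨⟨x, Or.inl hxA⟩, fun K hK h1 h2 => ?_⟩
  by_cases h3 : (∃ y ∈ A, y ∈ K) ∧ (∃ y ∈ A, y ∉ K)
  · exact (hA.2 (A ∩ K) (by grind) (by simpa using h3.1) (by grind)).mono (by grind) (by grind)
  · by_cases h4 : (∃ y ∈ B, y ∈ K) ∧ (∃ y ∈ B, y ∉ K)
    · exact (hB.2 (B ∩ K) (by grind) (by simpa using h4.1) (by grind)).mono (by grind) (by grind)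
    · grind

theorem Conn.insert {A : Set V} {x a : V} (hA : Conn G A) (ha : a ∈ A) (h : G.Adj a x) :
    Conn G (insert x A) := by
  have := hA.union (conn_singleton x) ⟨a, ha, x, rfl, h⟩
  rwa [Set.union_singleton] at this

/-- component lemma -/
theorem exists_comp [Finite V] {Y : Set V} {A : Set V} (hA : Conn G A) (hAY : A ⊆ Y) :
    ∃ K, K ⊆ Y ∧ A ⊆ K ∧ Conn G K ∧ ¬ Tch G K (Y \ K) := by
  obtain ⟨K, hK⟩ := Set.Finite.exists_maximalFor (fun K : Set V => K)
    {K : Set V | K ⊆ Y ∧ A ⊆ K ∧ Conn G K} (Set.toFinite _) ⟨A, hAY, subset_rfl, hA⟩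
  obtain ⟨⟨h1, h2, h3⟩, h4⟩ := hK
  refine ⟨K, h1, h2, h3, ?_⟩
  rintro ⟨a, ha, b, hb, hab⟩
  have := h4 (j := insert b K) ⟨by grind, by grind, h3.insert ha hab⟩ (by grind)
  exact hb.2 (this (by grind))

theorem exists_comp_pt [Finite V] {Y : Set V} {y : V} (hy : y ∈ Y) :
    ∃ K, K ⊆ Y ∧ y ∈ K ∧ Conn G K ∧ ¬ Tch G K (Y \ K) := by
  obtain ⟨K, h1, h2, h3, h4⟩ := exists_comp (conn_singleton (G := G) y) (Y := Y) (by grind)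
  exact ⟨K, h1, by grind, h3, h4⟩

theorem conn_iff {A : Set V} : Conn G A ↔ (G.induce A).Connected := by
  constructor
  · rintro ⟨⟨a, ha⟩, h⟩
    have key : ∀ b : A, (G.induce A).Reachable ⟨a, ha⟩ b := by
      by_contra hcon
      push Not at hcon
      obtain ⟨b, hb⟩ := hcon
      obtain ⟨x, hx, y, hy, hxy⟩ := h {x | ∃ hx : x ∈ A, (G.induce A).Reachable ⟨a, ha⟩ ⟨x, hx⟩}
        (by rintro x ⟨hx, _⟩; exact hx) ⟨a, ha, SimpleGraph.Reachable.refl _⟩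
        ⟨b, b.2, by rintro ⟨_, h⟩; exact hb h⟩
      obtain ⟨hxA, hx⟩ := hx
      refine hy.2 ⟨hy.1, hx.trans (SimpleGraph.Adj.reachable ?_)⟩
      simpa using hxy
    haveI : Nonempty A := ⟨⟨a, ha⟩⟩
    exact SimpleGraph.Connected.mk fun u v => (key u).symm.trans (key v)
  · intro h
    obtain ⟨⟨a, ha⟩⟩ := h.nonempty
    refine ⟨⟨a, ha⟩, fun K hK ⟨x, hx⟩ ⟨y, hyA, hyK⟩ => ?_⟩
    by_contra hcon
    have : ∀ u v : A, (G.induce A).Walk u v → u.1 ∈ K → v.1 ∈ K := by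
      intro u v p
      induction p with
      | nil => exact id
      | @cons u w v hadj p ih =>
        intro hu
        apply ih
        by_contra hw
        exact hcon ⟨u, hu, w, ⟨w.2, hw⟩, by simpa using hadj⟩
    obtain ⟨p⟩ := h.preconnected ⟨x, hK hx⟩ ⟨y, hyA⟩
    exact hyK (this _ _ p hx)

/-- 2-connectivity in terms of cuts -/
def TC (G : SimpleGraph V) : Prop :=
  Conn G Set.univ ∧ ∀ (v : V) (K : Set V), (∃ x, x ∈ K) → v ∉ K → (∃ u, u ∉ K ∧ u ≠ v) →
    Tch G K ({v}ᶜ \ K)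

theorem tc_of_isKConnected [Fintype V] (h : IsKConnected 2 G) : TC G := by
  obtain ⟨h1, h2⟩ := h
  constructor
  · have := h2 ∅ (by simp)
    rw [← conn_iff] at this
    simpa using this
  · intro v K hK hv hu
    have := h2 {v} (by simp)
    rw [← conn_iff] at this
    have := this.2 K (by grind) hK (by grind)
    exact this.mono subset_rfl (by grind)

end basics
end PQ


namespace PQ

section colouring
variable {V : Type} {G : SimpleGraph V}

/-- hypotheses of the colouring lemma -/
structure CLH (G : SimpleGraph V) (R X Y Z : Set V) : Prop where
  cX : Conn G X
  cY : Conn G Y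
  dXY : Dj X Y
  dRX : Dj R X
  dRY : Dj R Y
  H0 : ∀ K ⊆ R, (∃ x, x ∈ K) → Tch G K ((R \ K) ∪ X ∪ Y)
  HX : ∀ K ⊆ R, Tch G (Z ∪ K) ((R \ K) ∪ Y)
  HY : ∀ K ⊆ R, Tch G (Z ∪ K) ((R \ K) ∪ X)
  HV : ∀ v ∈ R, ∀ K ⊆ R, v ∉ K → Tch G (Z ∪ K) (((R \ K) \ {v}) ∪ X ∪ Y)

theorem CLH.symm {R X Y Z : Set V} (h : CLH G R X Y Z) : CLH G R Y X Z where
  cX := h.cY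
  cY := h.cX
  dXY := h.dXY.symm
  dRX := h.dRY
  dRY := h.dRX
  H0 := fun K hK hx => (h.H0 K hK hx).mono subset_rfl (by grind)
  HX := h.HY
  HY := h.HX
  HV := fun v hv K hK hx => (h.HV v hv K hK hx).mono subset_rfl (by grind)

def CLC (G : SimpleGraph V) (R X Y Z : Set V) : Prop :=
  ∃ RX RY, (RX ⊆ R ∧ RY ⊆ R ∧ R ⊆ RX ∪ RY) ∧ Dj RX RY ∧ Conn G (X ∪ RX) ∧ Conn G (Y ∪ RY) ∧
    Tch G Z (X ∪ RX) ∧ Tch G Z (Y ∪ RY)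

theorem CLC.symm {R X Y Z : Set V} (h : CLC G R X Y Z) : CLC G R Y X Z := by
  obtain ⟨a, b, h1, h2, h3, h4, h5, h6⟩ := h
  exact ⟨b, a, by grind, h2.symm, h4, h3, h6, h5⟩

theorem CLH.step {R X Y Z : Set V} (h : CLH G R X Y Z)
    (IH : ∀ R' X' Y' : Set V, R'.ncard < R.ncard → CLH G R' X' Y' Z → CLC G R' X' Y' Z)
    {r x : V} (hr : r ∈ R) (hx : x ∈ X) (hrx : G.Adj x r) [Finite V]
    (hs : ∀ K ⊆ R \ {r}, Tch G (Z ∪ K) (((R \ {r}) \ K) ∪ Y)) : CLC G R X Y Z := by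
  have := IH (R \ {r}) (insert r X) Y (Set.ncard_diff_singleton_lt_of_mem hr)
    { cX := h.cX.insert hx hrx
      cY := h.cY
      dXY := by have := h.dXY; have := h.dRY; grind
      dRX := by have := h.dRX; grind
      dRY := by have := h.dRY; grind
      H0 := fun K hK hx => (h.H0 K (by grind) hx).mono subset_rfl (by grind)
      HX := hs
      HY := fun K hK => (h.HY K (by grind)).mono subset_rfl (by grind)
      HV := fun v hv K hK hx => (h.HV v hv.1 K (by grind) hx).mono subset_rfl (by
        clear IH hs; grind (ematch := 20)) }
  obtain ⟨a, b, h1, h2, h3, h4, h5, h6⟩ := this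
  have e : X ∪ insert r a = insert r X ∪ a := by grind
  refine ⟨insert r a, b, by grind, by grind, by rwa [e], h4, by rwa [e], h6⟩

theorem CLH.main_aux {R X Y Z : Set V} (h : CLH G R X Y Z) [Finite V]
    (IH : ∀ R' X' Y' : Set V, R'.ncard < R.ncard → CLH G R' X' Y' Z → CLC G R' X' Y' Z)
    {r x : V} (hr : r ∈ R) (hx : x ∈ X) (hrx : G.Adj x r) : CLC G R X Y Z := by
  by_cases hs : ∀ K ⊆ R \ {r}, Tch G (Z ∪ K) (((R \ {r}) \ K) ∪ Y)
  · exact h.step IH hr hx hrx hs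
  push Not at hs
  obtain ⟨K, hK, hbad⟩ := hs
  have hZY : ¬ Tch G (Z ∪ K) Y := fun h => hbad (h.mono subset_rfl (by grind))
  obtain ⟨r', hr', y, hy, hry⟩ := h.HX R subset_rfl
  have hy' : y ∈ Y := by grind
  have hr'Z : r' ∉ Z ∪ K := fun h => hZY ⟨r', h, y, hy', hry⟩
  have hr'R : r' ∈ R := by grind
  refine (h.symm.step (fun R' X' Y' h1 h2 => (IH R' X' Y' h1 h2)) hr'R hy' hry.symm ?_).symm
  intro K' hK'
  by_contra hbad'
  obtain ⟨a, ha, b, hb, hab⟩ := h.HV r hr (K ∩ K') (by grind) (by grind)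
  have h1 : b ∉ ((R \ {r}) \ K) ∪ Y := fun hb => hbad ⟨a, by grind, b, hb, hab⟩
  have h2 : b ∉ ((R \ {r'}) \ K') ∪ X := fun hb => hbad' ⟨a, by grind, b, hb, hab⟩
  grind

theorem colouring [Finite V] {R X Y Z : Set V} (h : CLH G R X Y Z) : CLC G R X Y Z := by
  induction hn : R.ncard using Nat.strong_induction_on generalizing R X Y with
  | _ n ih =>
    subst hn
    have IH : ∀ R' X' Y' : Set V, R'.ncard < R.ncard → CLH G R' X' Y' Z → CLC G R' X' Y' Z :=
      fun R' X' Y' h1 h2 => ih _ h1 h2 rfl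
    by_cases hR : ∃ x, x ∈ R
    · obtain ⟨r, hr, x, hx, hrx⟩ := h.H0 R subset_rfl hR
      have : x ∈ X ∨ x ∈ Y := by grind
      rcases this with hx | hx
      · exact h.main_aux IH hr hx hrx.symm
      · exact (h.symm.main_aux IH hr hx hrx.symm).symm
    · have hR : R = ∅ := by grind
      subst hR
      refine ⟨∅, ∅, by simp, by grind, by simpa using h.cX, by simpa using h.cY,
        by simpa using h.HY ∅ (by simp), by simpa using h.HX ∅ (by simp)⟩

end colouring
end PQ


namespace PQ

section structures
variable {V : Type} {G : SimpleGraph V}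

def Grow (G : SimpleGraph V) (S S' U : Set V) : Prop := S ⊆ S' ∧ S' ⊆ S ∪ U ∧ Conn G S'

def QS (G : SimpleGraph V) : ℕ → Set V → Set V → Set V → Prop
  | 0 => fun _ _ _ => True
  | n + 1 => fun S T U => ∃ S' T' W U1 U2, Grow G S S' U ∧ Grow G T T' U ∧ W ⊆ U ∧ U1 ⊆ U ∧ U2 ⊆ U ∧
      (Dj S' T' ∧ Dj S' W ∧ Dj S' U1 ∧ Dj S' U2 ∧ Dj T' W ∧
        Dj T' U1 ∧ Dj T' U2 ∧ Dj W U1 ∧ Dj W U2 ∧ Dj U1 U2) ∧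
      Conn G W ∧ Tch G W S' ∧ Tch G W T' ∧ QS G n S' W U1 ∧ QS G n W T' U2

def RT (G : SimpleGraph V) : ℕ → Set V → Set V → Set V → Prop
  | 0 => fun S T U => ∃ S' T', Grow G S S' U ∧ Grow G T T' U ∧ Dj S' T' ∧ Tch G S' T'
  | n + 1 => fun S T U => ∃ S' T' T1 T2 U1 U2, Grow G S S' U ∧ Grow G T T' U ∧
      T1 ⊆ U ∧ T2 ⊆ U ∧ U1 ⊆ U ∧ U2 ⊆ U ∧
      (Dj S' T' ∧ Dj S' T1 ∧ Dj S' T2 ∧ Dj S' U1 ∧ Dj S' U2 ∧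
        Dj T' T1 ∧ Dj T' T2 ∧ Dj T' U1 ∧ Dj T' U2 ∧
        Dj T1 U1 ∧ Dj T1 U2 ∧ Dj T2 U1 ∧ Dj T2 U2 ∧ Dj U1 U2) ∧
      (T1 = T2 ∨ Dj T1 T2) ∧ Conn G T1 ∧ Conn G T2 ∧ Tch G T' T1 ∧ Tch G T' T2 ∧
      RT G n S' T1 U1 ∧ RT G n S' T2 U2

theorem Grow.lift {S S1 S' U U1 : Set V} (h : Grow G S1 S' U1) (h1 : S ⊆ S1) (h2 : S1 ⊆ S ∪ U)
    (h3 : U1 ⊆ U) : Grow G S S' U := by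
  obtain ⟨a, b, c⟩ := h
  exact ⟨by grind, by grind, c⟩

theorem Grow.refl {S U : Set V} (h : Conn G S) : Grow G S S U := ⟨by grind, by grind, h⟩

theorem Grow.enlarge {S S1 S' U : Set V} (h : Grow G S S' U) (hS : ∃ x, x ∈ S) (h1 : S ⊆ S1)
    (h2 : Conn G S1) : Grow G S1 (S' ∪ S1) U := by
  obtain ⟨a, b, c⟩ := h
  exact ⟨by grind, by grind, c.union' h2 (by grind)⟩

theorem QS.lift {n : ℕ} {S T U S1 T1 U1 : Set V} (h : QS G n S1 T1 U1) (hS : S ⊆ S1)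
    (hS' : S1 ⊆ S ∪ U) (hT : T ⊆ T1) (hT' : T1 ⊆ T ∪ U) (hU : U1 ⊆ U) : QS G n S T U := by
  cases n with
  | zero => trivial
  | succ n =>
    obtain ⟨S', T', W, A, B, h1, h2, h3, h4, h5, h6⟩ := h
    exact ⟨S', T', W, A, B, h1.lift hS hS' hU, h2.lift hT hT' hU, h3.trans hU, h4.trans hU,
      h5.trans hU, h6⟩

theorem RT.lift {n : ℕ} {S T U S1 T1 U1 : Set V} (h : RT G n S1 T1 U1) (hS : S ⊆ S1)
    (hS' : S1 ⊆ S ∪ U) (hT : T ⊆ T1) (hT' : T1 ⊆ T ∪ U) (hU : U1 ⊆ U) : RT G n S T U := by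
  cases n with
  | zero =>
    obtain ⟨S', T', h1, h2, h3⟩ := h
    exact ⟨S', T', h1.lift hS hS' hU, h2.lift hT hT' hU, h3⟩
  | succ n =>
    obtain ⟨S', T', A, B, C, D, h1, h2, h3, h4, h5, h6, h7⟩ := h
    exact ⟨S', T', A, B, C, D, h1.lift hS hS' hU, h2.lift hT hT' hU, h3.trans hU, h4.trans hU,
      h5.trans hU, h6.trans hU, h7⟩

theorem QS.enlarge {n : ℕ} {S T U S1 T1 : Set V} (h : QS G n S T U)
    (hS0 : ∃ x, x ∈ S) (hT0 : ∃ x, x ∈ T) (hS : S ⊆ S1) (hT : T ⊆ T1)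
    (cS : Conn G S1) (cT : Conn G T1) (d1 : Dj S1 T1) (d2 : Dj S1 U)
    (d3 : Dj T1 U) : QS G n S1 T1 U := by
  induction n generalizing S T U S1 T1 with
  | zero => trivial
  | succ n ih =>
    obtain ⟨S', T', W, A, B, h1, h2, h3, h4, h5, dd, cW, t1, t2, q1, q2⟩ := h
    have g1 := h1.enlarge hS0 hS cS
    have g2 := h2.enlarge hT0 hT cT
    obtain ⟨a1, b1, c1⟩ := h1
    obtain ⟨a2, b2, c2⟩ := h2
    refine ⟨S' ∪ S1, T' ∪ T1, W, A, B, g1, g2, h3, h4, h5, ?_, cW, t1.mono subset_rfl (by grind),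
      t2.mono subset_rfl (by grind), ?_, ?_⟩
    · refine ⟨?_, ?_, ?_, ?_, ?_, ?_, ?_, ?_, ?_, ?_⟩ <;> grind
    · exact ih q1 c1.1 cW.1 (by grind) subset_rfl g1.2.2 cW (by grind) (by grind) (by grind)
    · exact ih q2 cW.1 c2.1 subset_rfl (by grind) cW g2.2.2 (by grind) (by grind) (by grind)

theorem RT.enlarge {n : ℕ} {S T U S1 T1 : Set V} (h : RT G n S T U)
    (hS0 : ∃ x, x ∈ S) (hT0 : ∃ x, x ∈ T) (hS : S ⊆ S1) (hT : T ⊆ T1)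
    (cS : Conn G S1) (cT : Conn G T1) (d1 : Dj S1 T1) (d2 : Dj S1 U)
    (d3 : Dj T1 U) : RT G n S1 T1 U := by
  induction n generalizing S T U S1 T1 with
  | zero =>
    obtain ⟨S', T', h1, h2, dd, t⟩ := h
    have g1 := h1.enlarge hS0 hS cS
    have g2 := h2.enlarge hT0 hT cT
    obtain ⟨a1, b1, c1⟩ := h1
    obtain ⟨a2, b2, c2⟩ := h2
    exact ⟨S' ∪ S1, T' ∪ T1, g1, g2, by grind, t.mono (by grind) (by grind)⟩
  | succ n ih =>
    obtain ⟨S', T', A, B, C, D, h1, h2, h3, h4, h5, h6, dd, ab, cA, cB, t1, t2, q1, q2⟩ := h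
    have g1 := h1.enlarge hS0 hS cS
    have g2 := h2.enlarge hT0 hT cT
    obtain ⟨a1, b1, c1⟩ := h1
    obtain ⟨a2, b2, c2⟩ := h2
    refine ⟨S' ∪ S1, T' ∪ T1, A, B, C, D, g1, g2, h3, h4, h5, h6, ?_, ab, cA, cB,
      t1.mono (by grind) subset_rfl,
      t2.mono (by grind) subset_rfl, ?_, ?_⟩
    · clear ih q1 q2 t1 t2 cA cB
      refine ⟨?_, ?_, ?_, ?_, ?_, ?_, ?_, ?_, ?_, ?_, ?_, ?_, ?_, ?_⟩ <;> grind
    · exact ih q1 c1.1 cA.1 (by grind) subset_rfl g1.2.2 cA (by grind) (by grind) (by grind)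
    · exact ih q2 c1.1 cB.1 (by grind) subset_rfl g1.2.2 cB (by grind) (by grind) (by grind)

theorem RT.mono_succ {n : ℕ} {S T U : Set V} (h : RT G (n + 1) S T U) : RT G n S T U := by
  induction n generalizing S T U with
  | zero =>
    obtain ⟨S', T', A, B, C, D, h1, h2, h3, h4, h5, h6, dd, ab, cA, cB, t1, t2, q1, q2⟩ := h
    obtain ⟨S'', T'', g1, g2, e, t⟩ := q1
    obtain ⟨a1, b1, c1⟩ := h1
    obtain ⟨a2, b2, c2⟩ := h2
    obtain ⟨a3, b3, c3⟩ := g1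
    obtain ⟨a4, b4, c4⟩ := g2
    refine ⟨S'', T' ∪ T'', ⟨by grind, by grind, c3⟩, ⟨by grind, by grind,
      c2.union c4 (t1.mono subset_rfl a4)⟩, by grind, t.mono subset_rfl (by grind)⟩
  | succ n ih =>
    obtain ⟨S', T', A, B, C, D, h1, h2, h3, h4, h5, h6, dd, ab, cA, cB, t1, t2, q1, q2⟩ := h
    exact ⟨S', T', A, B, C, D, h1, h2, h3, h4, h5, h6, dd, ab, cA, cB, t1, t2, ih q1, ih q2⟩

theorem RT.mono {n m : ℕ} {S T U : Set V} (h : RT G n S T U) (hm : m ≤ n) : RT G m S T U := by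
  induction n with
  | zero => obtain rfl : m = 0 := by omega
            exact h
  | succ n ih =>
    rcases Nat.lt_or_ge n m with h' | h'
    · obtain rfl : m = n + 1 := by omega
      exact h
    · exact ih h.mono_succ h'

theorem QS.mono_succ {n : ℕ} {S T U : Set V} (h : QS G (n + 1) S T U) : QS G n S T U := by
  induction n generalizing S T U with
  | zero => trivial
  | succ n ih =>
    obtain ⟨S', T', W, A, B, h1, h2, h3, h4, h5, dd, cW, t1, t2, q1, q2⟩ := h
    exact ⟨S', T', W, A, B, h1, h2, h3, h4, h5, dd, cW, t1, t2, ih q1, ih q2⟩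

theorem QS.mono {n m : ℕ} {S T U : Set V} (h : QS G n S T U) (hm : m ≤ n) : QS G m S T U := by
  induction n with
  | zero => obtain rfl : m = 0 := by omega
            exact h
  | succ n ih =>
    rcases Nat.lt_or_ge n m with h' | h'
    · obtain rfl : m = n + 1 := by omega
      exact h
    · exact ih h.mono_succ h'

/-- nested tree -/
def NT (G : SimpleGraph V) : ℕ → Set V → Prop
  | 0 => fun U => Conn G U
  | n + 1 => fun U => Conn G U ∧ ∃ B C, B ⊆ U ∧ C ⊆ U ∧ Dj B C ∧ Conn G (U \ (B ∪ C)) ∧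
      ¬ Tch G B ((U \ (B ∪ C)) ∪ B)ᶜ ∧ ¬ Tch G C ((U \ (B ∪ C)) ∪ C)ᶜ ∧ NT G n B ∧ NT G n C

theorem NT.conn {n : ℕ} {U : Set V} (h : NT G n U) : Conn G U := by
  cases n with
  | zero => exact h
  | succ n => exact h.1

theorem NT.mono_succ {n : ℕ} {U : Set V} (h : NT G (n + 1) U) : NT G n U := by
  induction n generalizing U with
  | zero => exact h.1
  | succ n ih =>
    obtain ⟨h1, B, C, h2, h3, h4, h5, h6, h7, h8, h9⟩ := h
    exact ⟨h1, B, C, h2, h3, h4, h5, h6, h7, ih h8, ih h9⟩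

theorem NT.mono {n m : ℕ} {U : Set V} (h : NT G n U) (hm : m ≤ n) : NT G m U := by
  induction n with
  | zero => obtain rfl : m = 0 := by omega
            exact h
  | succ n ih =>
    rcases Nat.lt_or_ge n m with h' | h'
    · obtain rfl : m = n + 1 := by omega
      exact h
    · exact ih h.mono_succ h'

/-- `U` with two-sided frame `S`, `T` -/
structure State (G : SimpleGraph V) (S T U : Set V) : Prop where
  cS : Conn G S
  cT : Conn G T
  dST : Dj S T
  dSU : Dj S U
  dTU : Dj T U
  nb : ¬ Tch G U (S ∪ T ∪ U)ᶜ
  tS : Tch G S U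
  tT : Tch G T U

theorem State.symm {S T U : Set V} (h : State G S T U) : State G T S U where
  cS := h.cT
  cT := h.cS
  dST := h.dST.symm
  dSU := h.dTU
  dTU := h.dSU
  nb := fun hh => h.nb (hh.mono subset_rfl (by grind))
  tS := h.tT
  tT := h.tS

end structures
end PQ


namespace PQ

section localA
variable {V : Type} {G : SimpleGraph V}

/-- weak outcome A -/
def WA (G : SimpleGraph V) (n : ℕ) (S T U : Set V) : Prop :=
  ∃ S' T' U1 U2, Grow G S S' U ∧ Grow G T T' U ∧ U1 ⊆ U ∧ U2 ⊆ U ∧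
    (Dj S' T' ∧ Dj S' U1 ∧ Dj S' U2 ∧ Dj T' U1 ∧ Dj T' U2 ∧ Dj U1 U2) ∧
    U ⊆ S' ∪ T' ∪ U1 ∪ U2 ∧ Conn G (U \ (U1 ∪ U2)) ∧
    (∀ x y, G.Adj x y → x ∈ U1 → y ∈ U ∧ y ∉ U2) ∧
    (∀ x y, G.Adj x y → x ∈ U2 → y ∈ U ∧ y ∉ U1) ∧
    Tch G S' U1 ∧ Tch G S' U2 ∧ Tch G T' U1 ∧ Tch G T' U2 ∧ NT G n U1 ∧ NT G n U2

/-- outcome A -/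
def OA (G : SimpleGraph V) (n : ℕ) (S T U : Set V) : Prop :=
  ∃ S' T1 T2 U1 U2, Grow G S S' U ∧ T1 ⊆ U ∧ T2 ⊆ U ∧ U1 ⊆ U ∧ U2 ⊆ U ∧
    (Dj S' T ∧ Dj S' T1 ∧ Dj S' T2 ∧ Dj S' U1 ∧ Dj S' U2 ∧
      Dj T1 U1 ∧ Dj T1 U2 ∧ Dj T2 U1 ∧ Dj T2 U2 ∧ Dj U1 U2) ∧
    (T1 = T2 ∨ Dj T1 T2) ∧ Conn G T1 ∧ Conn G T2 ∧ Tch G T T1 ∧ Tch G T T2 ∧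
    State G S' T1 U1 ∧ State G S' T2 U2 ∧ NT G n U1 ∧ NT G n U2

/-- outcome B -/
def OB (G : SimpleGraph V) (n : ℕ) (S T U : Set V) : Prop :=
  ∃ S' T' W U1 U2, Grow G S S' U ∧ Grow G T T' U ∧ W ⊆ U ∧ U1 ⊆ U ∧ U2 ⊆ U ∧
      (Dj S' T' ∧ Dj S' W ∧ Dj S' U1 ∧ Dj S' U2 ∧ Dj T' W ∧
        Dj T' U1 ∧ Dj T' U2 ∧ Dj W U1 ∧ Dj W U2 ∧ Dj U1 U2) ∧
      Conn G W ∧ Tch G W S' ∧ Tch G W T' ∧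
      (∀ x y, G.Adj x y → x ∈ U1 → y ∈ S' ∪ W ∪ U1) ∧
      (∀ x y, G.Adj x y → x ∈ U2 → y ∈ W ∪ T' ∪ U2) ∧
      Tch G S' U1 ∧ Tch G W U1 ∧ Tch G W U2 ∧ Tch G T' U2 ∧ NT G n U1 ∧ NT G n U2

theorem WA.symm {n : ℕ} {S T U : Set V} (h : WA G n S T U) : WA G n T S U := by
  obtain ⟨S', T', U1, U2, h1, h2, h3, h4, h5, h6, h7, h8, h9, h10, h11, h12, h13, h14⟩ := h
  exact ⟨T', S', U1, U2, h2, h1, h3, h4, by grind, by grind, h7, h8, h9, h12, h13, h10, h11, h14⟩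

theorem OB.symm {n : ℕ} {S T U : Set V} (h : OB G n S T U) : OB G n T S U := by
  obtain ⟨S', T', W, U1, U2, h1, h2, h3, h4, h5, h6, h7, h8, h9, h10, h11, h12, h13, h14, h15, h16, h17⟩ := h
  exact ⟨T', S', W, U2, U1, h2, h1, h3, h5, h4, by grind, h7, h9, h8, by grind, by grind,
    h15, h14, h13, h12, h17, h16⟩

theorem recolour {n : ℕ} {S T U S' T' U1 U2 T1 T2 : Set V} (hS : Grow G S S' U) (hT : Grow G T T' U)
    (h1 : U1 ⊆ U) (h2 : U2 ⊆ U) (cT : Conn G T) (dT : Dj T U)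
    (dd : Dj S' T' ∧ Dj S' U1 ∧ Dj S' U2 ∧ Dj T' U1 ∧ Dj T' U2 ∧ Dj U1 U2)
    (hU : U ⊆ S' ∪ T' ∪ U1 ∪ U2) (hD : Conn G (U \ (U1 ∪ U2)))
    (n1 : ∀ x y, G.Adj x y → x ∈ U1 → y ∈ U ∧ y ∉ U2)
    (n2 : ∀ x y, G.Adj x y → x ∈ U2 → y ∈ U ∧ y ∉ U1)
    (t1 : Tch G S' U1) (t2 : Tch G S' U2) (w1 : NT G n U1) (w2 : NT G n U2)
    (hT1 : T1 ⊆ T' ∩ U) (hT2 : T2 ⊆ T' ∩ U) (c1 : Conn G T1) (c2 : Conn G T2)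
    (h12 : T1 = T2 ∨ Dj T1 T2)
    (q1 : ¬ Tch G T1 ((T' ∩ U) \ T1)) (q2 : ¬ Tch G T2 ((T' ∩ U) \ T2))
    (s1 : Tch G T1 U1) (s2 : Tch G T2 U2)
    (m1 : ∀ x y, G.Adj x y → x ∈ U1 → y ∈ T2 → y ∈ T1)
    (m2 : ∀ x y, G.Adj x y → x ∈ U2 → y ∈ T1 → y ∈ T2) : OA G n S T U := by
  obtain ⟨a1, b1, cS'⟩ := hS
  obtain ⟨a2, b2, cT'⟩ := hT
  have q1' : ∀ x y, G.Adj x y → x ∈ T1 → y ∈ T' → y ∈ U → y ∈ T1 := by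
    intro x y hxy hx hy hyU
    by_contra hh
    exact q1 ⟨x, hx, y, ⟨⟨hy, hyU⟩, hh⟩, hxy⟩
  have q2' : ∀ x y, G.Adj x y → x ∈ T2 → y ∈ T' → y ∈ U → y ∈ T2 := by
    intro x y hxy hx hy hyU
    by_contra hh
    exact q2 ⟨x, hx, y, ⟨⟨hy, hyU⟩, hh⟩, hxy⟩
  have tT : ∀ K, K ⊆ T' ∩ U → Conn G K → ¬ Tch G K ((T' ∩ U) \ K) → Tch G T K := by
    intro K hK cK hn
    obtain ⟨t, ht⟩ := cT.1
    obtain ⟨x, hx, y, hy, hxy⟩ := cT'.2 K (by grind) cK.1 ⟨t, by grind, by grind⟩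
    by_cases hyU : y ∈ U
    · exact absurd ⟨x, hx, y, by grind, hxy⟩ hn
    · exact ⟨y, by grind, x, hx, hxy.symm⟩
  have cS : Conn G (S' ∪ ((T' ∩ U) \ (T1 ∪ T2))) := by
    refine cS'.ext fun K hK hne => ?_
    obtain ⟨z, hz⟩ := c1.1
    obtain ⟨x, hx, y, hy, hxy⟩ := hD.2 K (by grind) hne ⟨z, by grind, by grind⟩
    have := hxy.symm
    exact ⟨x, hx, y, by grind, hxy⟩
  have tt1 := tT T1 hT1 c1 q1
  have tt2 := tT T2 hT2 c2 q2
  clear tT q1 q2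
  refine ⟨_, T1, T2, U1, U2, ⟨?_, ?_, cS⟩, by grind, by grind, h1, h2, ?_, h12, c1, c2, tt1, tt2,
    ?_, ?_, w1, w2⟩
  · grind
  · grind
  · clear q1' q2' n1 n2 m1 m2 h12
    refine ⟨?_, ?_, ?_, ?_, ?_, ?_, ?_, ?_, ?_, ?_⟩ <;> grind
  · refine ⟨cS, c1, by grind, by grind, by grind, ?_, t1.mono (by grind) subset_rfl, s1⟩
    rintro ⟨x, hx, y, hy, hxy⟩
    have := hxy.symm
    grind
  · refine ⟨cS, c2, by grind, by grind, by grind, ?_, t2.mono (by grind) subset_rfl, s2⟩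
    rintro ⟨x, hx, y, hy, hxy⟩
    have := hxy.symm
    grind

theorem comp_disj {Y K1 K2 : Set V} (hK1 : K1 ⊆ Y) (hK2 : K2 ⊆ Y) (c2 : Conn G K2)
    (q1 : ¬ Tch G K1 (Y \ K1)) (h : ∃ x ∈ K1, x ∈ K2) : K2 ⊆ K1 := by
  by_contra hh
  obtain ⟨x, hx1, hx2⟩ := h
  exact q1 ((c2.2 (K2 ∩ K1) (by grind) ⟨x, by grind⟩ (by grind)).mono (by grind) (by grind))

theorem WA.refine [Finite V] {n : ℕ} {S T U : Set V} (h : WA G n S T U) (st : State G S T U) :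
    OA G n S T U := by
  obtain ⟨S', T', U1, U2, h1, h2, h3, h4, h5, h6, h7, h8, h9, h10, h11, h12, h13, h14, h15⟩ := h
  obtain ⟨a1, ha1, u1, hu1, hau1⟩ := h12
  obtain ⟨a2, ha2, u2, hu2, hau2⟩ := h13
  have hm1 : a1 ∈ T' ∩ U := ⟨ha1, (h8 _ _ hau1.symm hu1).1⟩
  have hm2 : a2 ∈ T' ∩ U := ⟨ha2, (h9 _ _ hau2.symm hu2).1⟩
  obtain ⟨K1, p1, p2, p3, p4⟩ := exists_comp_pt (G := G) hm1
  obtain ⟨K2, r1, r2, r3, r4⟩ := exists_comp_pt (G := G) hm2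
  have e1 : Tch G K1 U1 := ⟨a1, p2, u1, hu1, hau1⟩
  have e2 : Tch G K2 U2 := ⟨a2, r2, u2, hu2, hau2⟩
  have key := fun T1 T2 => recolour (T1 := T1) (T2 := T2) h1 h2 h3 h4 st.cT st.dTU h5 h6 h7 h8 h9 h10 h11 h14 h15
  by_cases f1 : Tch G K1 U2
  · exact key K1 K1 p1 p1 p3 p3 (Or.inl rfl) p4 p4 e1 f1 (by grind) (by grind)
  by_cases f2 : Tch G K2 U1
  · exact key K2 K2 r1 r1 r3 r3 (Or.inl rfl) r4 r4 f2 e2 (by grind) (by grind)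
  refine key K1 K2 p1 r1 p3 r3 (Or.inr ?_) p4 r4 e1 e2 ?_ ?_
  · intro x hx hx2
    exact f1 (e2.mono (comp_disj p1 r1 r3 p4 ⟨x, hx, hx2⟩) subset_rfl)
  · intro x y hxy hx hy
    exact absurd ⟨y, hy, x, hx, hxy.symm⟩ f2
  · intro x y hxy hx hy
    exact absurd ⟨y, hy, x, hx, hxy.symm⟩ f1

end localA
end PQ


namespace PQ

section localB
variable {V : Type} {G : SimpleGraph V}

/-- frame: `U` split into `B`, `C` and the connected rest -/
structure Fr (G : SimpleGraph V) (S T U B C : Set V) : Prop where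
  st : State G S T U
  cU : Conn G U
  hB : B ⊆ U
  hC : C ⊆ U
  dBC : Dj B C
  cD : Conn G (U \ (B ∪ C))
  nB : ∀ x y, G.Adj x y → x ∈ B → y ∈ U ∧ y ∉ C
  nC : ∀ x y, G.Adj x y → x ∈ C → y ∈ U ∧ y ∉ B
  cB : Conn G B
  cC : Conn G C

theorem Fr.swap {S T U B C : Set V} (h : Fr G S T U B C) : Fr G S T U C B where
  st := h.st
  cU := h.cU
  hB := h.hC
  hC := h.hB
  dBC := h.dBC.symm
  cD := by rw [Set.union_comm]; exact h.cD
  nB := h.nC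
  nC := h.nB
  cB := h.cC
  cC := h.cB

theorem Fr.symm {S T U B C : Set V} (h : Fr G S T U B C) : Fr G T S U B C :=
  { h with st := h.st.symm }

theorem State.nbU {S T U : Set V} (h : State G S T U) :
    ∀ x y, G.Adj x y → x ∈ U → y ∉ U → y ∉ S → y ∈ T := by
  intro x y hxy hx h1 h2
  by_contra h3
  exact h.nb ⟨x, hx, y, by grind, hxy⟩

theorem Fr.tB {S T U B C : Set V} (h : Fr G S T U B C) : Tch G B (U \ (B ∪ C)) := by
  obtain ⟨d, hd⟩ := h.cD.1
  obtain ⟨x, hx, y, hy, hxy⟩ := h.cU.2 B h.hB h.cB.1 ⟨d, by grind, by grind⟩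
  have := h.nB x y hxy hx
  exact ⟨x, hx, y, by grind, hxy⟩

theorem Fr.tS {S T U B C : Set V} (h : Fr G S T U B C) : Tch G (U \ (B ∪ C)) S := by
  obtain ⟨x, hx, y, hy, hxy⟩ := h.st.tS
  have h1 := h.nB y x hxy.symm
  have h2 := h.nC y x hxy.symm
  have h3 := h.st.dSU
  exact ⟨y, by grind, x, hx, hxy.symm⟩

/-- the automatic part of the colouring hypotheses -/
theorem Fr.clh {S T U B C : Set V} (h : Fr G S T U B C)
    (HV : ∀ v ∈ (U \ (B ∪ C)), ∀ K ⊆ (U \ (B ∪ C)), v ∉ K →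
      Tch G (B ∪ K) ((((U \ (B ∪ C)) \ K) \ {v}) ∪ S ∪ T)) : CLH G (U \ (B ∪ C)) S T B where
  cX := h.st.cS
  cY := h.st.cT
  dXY := h.st.dST
  dRX := by have := h.st.dSU; grind
  dRY := by have := h.st.dTU; grind
  H0 := by
    intro K hK hne
    by_cases hK' : ∃ x ∈ (U \ (B ∪ C)), x ∉ K
    · exact (h.cD.2 K hK hne hK').mono subset_rfl (by grind)
    · exact h.tS.mono (by grind) (by grind)
  HX := by
    intro K hK
    by_cases hK' : ∃ x ∈ (U \ (B ∪ C)), x ∉ K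
    · by_cases hne : ∃ x, x ∈ K
      · exact (h.cD.2 K hK hne hK').mono (by grind) (by grind)
      · exact h.tB.mono (by grind) (by grind)
    · exact h.symm.tS.mono (by grind) (by grind)
  HY := by
    intro K hK
    by_cases hK' : ∃ x ∈ (U \ (B ∪ C)), x ∉ K
    · by_cases hne : ∃ x, x ∈ K
      · exact (h.cD.2 K hK hne hK').mono (by grind) (by grind)
      · exact h.tB.mono (by grind) (by grind)
    · exact h.tS.mono (by grind) (by grind)
  HV := HV

theorem Fr.full [Finite V] (tc : TC G) {S T U B C : Set V} (h : Fr G S T U B C) :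
    CLC G (U \ (B ∪ C)) S T B ∨ CLC G (U \ (B ∪ C)) S T C := by
  by_cases H1 : ∀ v ∈ (U \ (B ∪ C)), ∀ K ⊆ (U \ (B ∪ C)), v ∉ K →
      Tch G (B ∪ K) ((((U \ (B ∪ C)) \ K) \ {v}) ∪ S ∪ T)
  · exact Or.inl (colouring (h.clh H1))
  by_cases H2 : ∀ v ∈ (U \ (C ∪ B)), ∀ K ⊆ (U \ (C ∪ B)), v ∉ K →
      Tch G (C ∪ K) ((((U \ (C ∪ B)) \ K) \ {v}) ∪ S ∪ T)
  · right
    have := colouring (h.swap.clh H2)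
    rwa [Set.union_comm C B] at this
  exfalso
  push Not at H1 H2
  obtain ⟨v, hv, K, hK, hvK, h1⟩ := H1
  obtain ⟨v', hv', K', hK', hvK', h2⟩ := H2
  obtain ⟨s, hs⟩ := h.st.cS.1
  obtain ⟨t, ht⟩ := h.st.cT.1
  obtain ⟨c, hc⟩ := h.cC.1
  obtain ⟨b, hb⟩ := h.cB.1
  have hst : s ≠ t := by have := h.st.dST; grind
  have hsU : s ∉ U := h.st.dSU s hs
  have htU : t ∉ U := h.st.dTU t ht
  have nbU := h.st.nbU
  have hBU := h.hB
  have hCU := h.hC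
  have nB := h.nB
  have nC := h.nC
  have e1 : ∀ x y, G.Adj x y → x ∈ B ∪ K → y ∈ B ∪ K ∪ C ∨ y = v := by
    intro x y hxy hx
    by_contra hh
    exact h1 ⟨x, hx, y, by grind, hxy⟩
  have e2 : ∀ x y, G.Adj x y → x ∈ C ∪ K' → y ∈ C ∪ K' ∪ B ∨ y = v' := by
    intro x y hxy hx
    by_contra hh
    exact h2 ⟨x, hx, y, by grind, hxy⟩
  have hvL : v ∉ K' := by
    intro hv1
    by_cases hv2 : v' ∈ K
    · obtain ⟨x, hx, y, hy, hxy⟩ := tc.1.2 (B ∪ C ∪ K ∪ K') (by grind) ⟨b, by grind⟩ ⟨s, by grind⟩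
      grind
    · obtain ⟨x, hx, y, hy, hxy⟩ := tc.2 v' (B ∪ C ∪ K ∪ K') ⟨b, by grind⟩ (by grind) ⟨s, by grind⟩
      grind
  have hvL' : v' ∉ K := by
    intro hv1
    obtain ⟨x, hx, y, hy, hxy⟩ := tc.2 v (B ∪ C ∪ K ∪ K') ⟨b, by grind⟩ (by grind) ⟨s, by grind⟩
    grind
  have hvv : v ≠ v' := by
    rintro rfl
    obtain ⟨x, hx, y, hy, hxy⟩ := tc.2 v (B ∪ C ∪ K ∪ K') ⟨b, by grind⟩ (by grind) ⟨s, by grind⟩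
    grind
  obtain ⟨x, hx, y, hy, hxy⟩ := tc.2 v (B ∪ K) ⟨b, by grind⟩ (by grind) ⟨s, by grind⟩
  have hyC : y ∈ C := by grind
  have hxK : x ∈ K ∩ K' := by
    have := hxy.symm
    grind
  obtain ⟨x, hx, y, hy, hxy⟩ := h.cD.2 (K ∩ K') (by grind) ⟨x, hxK⟩ ⟨v, hv, by grind⟩
  grind

end localB
end PQ


namespace PQ

section localC
variable {V : Type} {G : SimpleGraph V}

/-- situation after splitting off `W` -/
structure Sp (G : SimpleGraph V) (S T U B C S' T' W : Set V) : Prop where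
  fr : Fr G S T U B C
  gS : Grow G S S' U
  gT : Grow G T T' U
  cW : Conn G W
  hWU : W ⊆ U
  dd : Dj S' T' ∧ Dj S' W ∧ Dj S' B ∧ Dj S' C ∧ Dj T' W ∧ Dj T' B ∧ Dj T' C ∧ Dj W B ∧ Dj W C
  cov : U ⊆ S' ∪ T' ∪ W ∪ B ∪ C
  nC' : ∀ x y, G.Adj x y → x ∈ C → y ∉ T'
  tWS : Tch G W S'
  tWC : Tch G W C
  tSC : Tch G S' C
  tTB : Tch G T' B

set_option maxHeartbeats 2000000 in
theorem Sp.trouble [Finite V] (tc : TC G) {n : ℕ} {S T U B C S' T' W : Set V}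
    (h : Sp G S T U B C S' T' W)
    (hB : NT G (n + 1) B) (hC : NT G n C) (hWB : Tch G W B) (hWT : ¬ Tch G W T') :
    WA G n S T U ∨ OB G n S T U := by
  obtain ⟨cB, b, c, hb, hc, dbc, cDB, nb1, nc1, ntb, ntc⟩ := hB
  obtain ⟨st, cU, hBU, hCU, dBC, cD, nB, nC, -, cC⟩ := h.fr
  obtain ⟨aS, bS, cS⟩ := h.gS
  obtain ⟨aT, bT, cT⟩ := h.gT
  obtain ⟨d1, d2, d3, d4, d5, d6, d7, d8, d9⟩ := h.dd
  have cov := h.cov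
  have hWU := h.hWU
  have cW := h.cW
  have nC' := h.nC'
  have dSU := st.dSU
  have dTU := st.dTU
  have cb := ntb.conn
  have cc := ntc.conn
  have nb : ∀ x y, G.Adj x y → x ∈ b → y ∈ B := by
    intro x y hxy hx
    by_contra hh
    exact nb1 ⟨x, hx, y, by grind, hxy⟩
  have nc : ∀ x y, G.Adj x y → x ∈ c → y ∈ B ∧ y ∉ b := by
    intro x y hxy hx
    by_contra hh
    exact nc1 ⟨x, hx, y, by grind, hxy⟩
  have cRB : Conn G (B \ b) := by
    obtain ⟨d, hd⟩ := cDB.1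
    obtain ⟨x, hx, y, hy, hxy⟩ := cB.2 c hc cc.1 ⟨d, by grind, by grind⟩
    have := cDB.union cc ⟨y, by grind, x, hx, hxy.symm⟩
    have e : B \ (b ∪ c) ∪ c = B \ b := by grind
    rwa [e] at this
  clear nb1 nc1 nc
  have tTR : Tch G T' (B \ b) := by
    obtain ⟨x, hx, y, hy, hxy⟩ := h.tTB
    exact ⟨x, hx, y, by have := nb y x hxy.symm; grind, hxy⟩
  have tWR : Tch G W (B \ b) := by
    obtain ⟨x, hx, y, hy, hxy⟩ := hWB
    exact ⟨x, hx, y, by have := nb y x hxy.symm; grind, hxy⟩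
  clear cc ntc cDB dbc hc
  obtain ⟨w0, hw0⟩ := cW.1
  obtain ⟨t0, ht0⟩ := cT.1
  obtain ⟨b0, hb0⟩ := cb.1
  obtain ⟨r0, hr0⟩ := cRB.1
  obtain ⟨s0, hs0⟩ := st.cS.1
  have cBT := cB.union cT h.tTB.symm
  have cBW := cB.union cW hWB.symm
  by_cases HV : ∀ v ∈ B \ b, ∀ K ⊆ B \ b, v ∉ K → Tch G (b ∪ K) ((((B \ b) \ K) \ {v}) ∪ W ∪ T')
  · right
    have H : CLH G (B \ b) W T' b :=
      { cX := cW
        cY := cT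
        dXY := d5.symm
        dRX := by grind
        dRY := by grind
        H0 := by
          intro K hK hne
          by_cases hK' : ∃ x ∈ B \ b, x ∉ K
          · exact (cRB.2 K hK hne hK').mono subset_rfl (by grind)
          · exact tTR.symm.mono (by grind) (by grind)
        HX := by
          intro K hK
          exact (cBT.2 (b ∪ K) (by grind) ⟨b0, by grind⟩ ⟨t0, by grind⟩).mono subset_rfl (by grind)
        HY := by
          intro K hK
          exact (cBW.2 (b ∪ K) (by grind) ⟨b0, by grind⟩ ⟨w0, by grind⟩).mono subset_rfl (by grind)
        HV := HV }
    obtain ⟨RX, RY, ⟨e1, e2, e3⟩, e4, c1, c2, t1, t2⟩ := colouring H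
    have c3 := (cRB.union cW tWR.symm).union cT (tTR.symm.mono (by grind) subset_rfl)
    have t3 : Tch G (W ∪ RX) (T' ∪ RY) :=
      (c3.2 (W ∪ RX) (by grind) ⟨w0, by grind⟩ ⟨t0, by grind⟩).mono subset_rfl (by grind)
    refine ⟨S', T' ∪ RY, W ∪ RX, C, b, ⟨aS, bS, cS⟩, ⟨by grind, by grind, c2⟩, by grind, hCU,
      by grind, ?_, c1, h.tWS.mono (by grind) subset_rfl, t3, ?_, ?_, h.tSC, h.tWC.mono (by grind) subset_rfl,
      t1.symm, t2.symm, hC, ntb⟩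
    · clear c3 t3 H HV c1 c2 t1 t2 nC nB cov
      refine ⟨?_, ?_, ?_, ?_, ?_, ?_, ?_, ?_, ?_, ?_⟩ <;> grind
    · intro x y hxy hx
      have := nC x y hxy hx
      have := nC' x y hxy hx
      grind
    · intro x y hxy hx
      have := nb x y hxy hx
      grind
  · left
    push Not at HV
    obtain ⟨v, hv, K0, hK0, hvK0, hbad⟩ := HV
    obtain ⟨K, hK1, hK2, cK, hK4⟩ := exists_comp (G := G) (Y := B \ {v}) cb (by grind)
    have hK5 : K ⊆ b ∪ K0 := by
      by_contra hh
      obtain ⟨x, hx, y, hy, hxy⟩ := cK.2 (K ∩ (b ∪ K0)) (by grind) ⟨b0, by grind⟩ (by grind)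
      exact hbad ⟨x, by grind, y, by grind, hxy⟩
    have hKn : ∀ x y, G.Adj x y → x ∈ K → y ∉ W ∧ y ∉ T' := by
      intro x y hxy hx
      by_contra hh
      exact hbad ⟨x, by grind, y, by grind, hxy⟩
    have hKc : ∀ x y, G.Adj x y → x ∈ K → y ∈ B → y ≠ v → y ∈ K := by
      intro x y hxy hx hy hyv
      by_contra hh
      exact hK4 ⟨x, hx, y, by grind, hxy⟩
    have tKS : Tch G K S' := by
      obtain ⟨x, hx, y, hy, hxy⟩ := tc.2 v K ⟨b0, by grind⟩ (by grind) ⟨s0, by grind⟩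
      have := nB x y hxy (by grind)
      exact ⟨x, hx, y, by grind, hxy⟩
    have cBK : Conn G (B \ K) := by
      have := (conn_singleton (G := G) v).ext (M := (B \ K) \ {v}) (by
        intro J hJ hne
        obtain ⟨x, hx, y, hy, hxy⟩ := cB.2 J (by grind) hne ⟨v, by grind⟩
        have := hxy.symm
        exact ⟨x, hx, y, by grind, hxy⟩)
      have hvBK : v ∈ B \ K := by grind
      have e : {v} ∪ ((B \ K) \ {v}) = B \ K := by
        rw [Set.union_diff_self]; exact Set.union_eq_right.2 (by grind)
      rwa [e] at this
    have cY : Conn G (((B \ K) ∪ W) ∪ T') := by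
      refine (cBK.union cW ?_).union cT ?_
      · obtain ⟨x, hx, y, hy, hxy⟩ := hWB
        exact ⟨y, by have := hKn y x hxy.symm; grind, x, hx, hxy.symm⟩
      · obtain ⟨x, hx, y, hy, hxy⟩ := h.tTB
        exact ⟨y, by have := hKn y x hxy.symm; grind, x, hx, hxy.symm⟩
    have cKS := cK.union cS tKS
    have H : CLH G (K \ b) S' (((B \ K) ∪ W) ∪ T') b :=
      { cX := cS
        cY := cY
        dXY := by grind
        dRX := by grind
        dRY := by grind
        H0 := by
          intro J hJ hne
          exact (cRB.2 J (by grind) hne ⟨v, by grind⟩).mono subset_rfl (by grind)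
        HX := by
          intro J hJ
          exact (cB.2 (b ∪ J) (by grind) ⟨b0, by grind⟩ ⟨v, by grind⟩).mono subset_rfl (by grind)
        HY := by
          intro J hJ
          exact (cKS.2 (b ∪ J) (by grind) ⟨b0, by grind⟩ ⟨s0, by grind⟩).mono subset_rfl (by grind)
        HV := by
          intro w hw J hJ hwJ
          obtain ⟨x, hx, y, hy, hxy⟩ := tc.2 w (b ∪ J) ⟨b0, by grind⟩ (by grind) ⟨s0, by grind⟩
          have := nB x y hxy (by grind)
          have h5 := cov this.1
          exact ⟨x, hx, y, by clear * - h5 this hy; grind (ematch := 10), hxy⟩ }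
    obtain ⟨RX, RY, ⟨e1, e2, e3⟩, e4, c1, c2, t1, t2⟩ := colouring H
    have cD' : Conn G (U \ (b ∪ C)) := by
      have := cD.union cRB (by
        obtain ⟨x, hx, y, hy, hxy⟩ := h.fr.tB
        exact ⟨y, hy, x, by have := nb x y hxy; grind, hxy.symm⟩)
      have e : U \ (B ∪ C) ∪ B \ b = U \ (b ∪ C) := by grind
      rwa [e] at this
    refine ⟨S' ∪ RX, B \ K ∪ W ∪ T' ∪ RY, b, C, ⟨by grind, by grind, c1⟩, ⟨by grind, by grind, c2⟩,
      by grind, hCU, ?_, by grind (ematch := 10), cD', ?_, ?_, t1.symm, h.tSC.mono (by grind) subset_rfl, t2.symm,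
      h.tWC.mono (by grind) subset_rfl, ntb, hC⟩
    · clear H c1 c2 t1 t2 nC nB cov hKc hKn
      refine ⟨?_, ?_, ?_, ?_, ?_, ?_⟩ <;> grind
    · intro x y hxy hx
      have := nb x y hxy hx
      grind
    · intro x y hxy hx
      have := nC x y hxy hx
      grind

end localC
end PQ


namespace PQ

section localD
variable {V : Type} {G : SimpleGraph V}

theorem Sp.wa {n : ℕ} {S T U B C S' T' W : Set V} (h : Sp G S T U B C S' T' W)
    (hB : NT G n B) (hC : NT G n C) (hWT : Tch G W T') (hSB : Tch G S' B) : WA G n S T U := by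
  obtain ⟨st, cU, hBU, hCU, dBC, cD, nB, nC, -, cC⟩ := h.fr
  obtain ⟨aT, bT, cT⟩ := h.gT
  obtain ⟨d1, d2, d3, d4, d5, d6, d7, d8, d9⟩ := h.dd
  have cov := h.cov
  have hWU := h.hWU
  refine ⟨S', T' ∪ W, B, C, h.gS, ⟨by grind, by grind, cT.union h.cW hWT.symm⟩, hBU, hCU, ?_,
    by grind, cD, nB, nC, hSB, h.tSC, h.tTB.mono (by grind) subset_rfl,
    h.tWC.mono (by grind) subset_rfl, hB, hC⟩
  clear nB nC cov
  refine ⟨?_, ?_, ?_, ?_, ?_, ?_⟩ <;> grind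

theorem Sp.fin [Finite V] (tc : TC G) {n : ℕ} {S T U B C S' T' W : Set V}
    (h : Sp G S T U B C S' T' W)
    (hB : NT G (n + 1) B) (hC : NT G n C) (hW : Tch G W (T' ∪ B)) (hS : Tch G B (S' ∪ W)) :
    WA G n S T U ∨ OB G n S T U := by
  by_cases hWT : Tch G W T'
  · by_cases hSB : Tch G S' B
    · exact Or.inl (h.wa hB.mono_succ hC hWT hSB)
    · right
      obtain ⟨st, cU, hBU, hCU, dBC, cD, nB, nC, -, cC⟩ := h.fr
      obtain ⟨d1, d2, d3, d4, d5, d6, d7, d8, d9⟩ := h.dd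
      have cov := h.cov
      have nC' := h.nC'
      refine ⟨S', T', W, C, B, h.gS, h.gT, h.hWU, hCU, hBU, by grind, h.cW, h.tWS, hWT, ?_, ?_,
        h.tSC, h.tWC, ?_, h.tTB, hC, hB.mono_succ⟩
      · intro x y hxy hx
        have := nC x y hxy hx
        have := nC' x y hxy hx
        grind
      · intro x y hxy hx
        have := nB x y hxy hx
        have h9 : y ∉ S' := fun hy => hSB ⟨y, hy, x, hx, hxy.symm⟩
        have h8 := cov this.1
        clear * - this h9 h8
        grind (gen := 20) (ematch := 20)
      · rcases hS.of_union_right with h1 | h1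
        · exact absurd h1.symm hSB
        · exact h1.symm
  · have hWB : Tch G W B := by
      rcases hW.of_union_right with h1 | h1
      · exact absurd h1 hWT
      · exact h1
    exact h.trouble tc hB hC hWB hWT

theorem Fr.ll3 [Finite V] (tc : TC G) {n : ℕ} {S T U B C DS DT : Set V} (h : Fr G S T U B C)
    (hB : NT G (n + 1) B) (hC : NT G n C)
    (h1 : DS ⊆ U \ (B ∪ C)) (h2 : DT ⊆ U \ (B ∪ C)) (h3 : U \ (B ∪ C) ⊆ DS ∪ DT) (h4 : Dj DS DT)
    (c1 : Conn G (S ∪ DS)) (c2 : Conn G (T ∪ DT)) (t1 : Tch G B (S ∪ DS)) (t2 : Tch G B (T ∪ DT))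
    (nC' : ∀ x y, G.Adj x y → x ∈ C → y ∉ T ∪ DT) :
    WA G n S T U ∨ OB G n S T U := by
  have ⟨st, cU, hBU, hCU, dBC, cD, nB, nC, cB, cC⟩ := h
  have nbU := st.nbU
  have dSU := st.dSU
  have dTU := st.dTU
  have dST := st.dST
  obtain ⟨b0, hb0⟩ := cB.1
  obtain ⟨c0, hc0⟩ := cC.1
  obtain ⟨s0, hs0⟩ := st.cS.1
  have tC : Tch G C (S ∪ DS) := by
    obtain ⟨x, hx, y, hy, hxy⟩ := h.swap.tB
    have := nC' x y hxy hx
    exact ⟨x, hx, y, by grind, hxy⟩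
  have cSC := c1.union cC tC.symm
  have cTB := c2.union cB t2.symm
  have H : CLH G DS S (T ∪ DT ∪ B) C :=
    { cX := st.cS
      cY := cTB
      dXY := by clear nB nC nC' nbU; grind
      dRX := by grind
      dRY := by clear nB nC nC' nbU; grind
      H0 := by
        intro K hK hne
        exact (c1.2 K (by grind) hne ⟨s0, by grind⟩).mono subset_rfl (by grind)
      HX := by
        intro K hK
        exact (cU.2 (C ∪ K) (by grind) ⟨c0, by grind⟩ ⟨b0, by grind⟩).mono subset_rfl (by clear nB nC nC' nbU; grind)
      HY := by
        intro K hK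
        exact (cSC.2 (C ∪ K) (by grind) ⟨c0, by grind⟩ ⟨s0, by grind⟩).mono subset_rfl (by grind)
      HV := by
        intro v hv K hK hvK
        obtain ⟨x, hx, y, hy, hxy⟩ := tc.2 v (C ∪ K) ⟨c0, by grind⟩ (by grind) ⟨s0, by grind⟩
        have e1 : y ∈ U ∨ y ∈ S ∨ y ∈ T := by
          have := nC x y hxy
          have := nbU x y hxy (by grind)
          grind
        exact ⟨x, hx, y, by clear * - hy h3 e1; have := @h3 y; grind (gen := 20) (ematch := 20), hxy⟩ }
  obtain ⟨RX, RY, ⟨e1, e2, e3⟩, e4, r1, r2, q1, q2⟩ := colouring H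
  obtain ⟨c, hc, w, hw, hcw⟩ := q2
  have hwR : w ∈ RY := by
    have := nC c w hcw hc
    have := nC' c w hcw hc
    grind
  obtain ⟨W, hW1, hW2, cW, hW3⟩ := exists_comp_pt (G := G) hwR
  have hW4 : ∀ x y, G.Adj x y → x ∈ W → y ∈ RY → y ∈ W := by
    intro x y hxy hx hy
    by_contra hh
    exact hW3 ⟨x, hx, y, by grind, hxy⟩
  have tW : Tch G W (T ∪ DT ∪ B) := by
    obtain ⟨x, hx, y, hy, hxy⟩ := r2.2 W (by grind) ⟨w, hW2⟩ ⟨b0, by grind, by grind⟩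
    have := hW4 x y hxy hx
    exact ⟨x, hx, y, by grind, hxy⟩
  have cS2 : Conn G (S ∪ RX ∪ (RY \ W)) := by
    refine r1.ext fun K hK hne => ?_
    obtain ⟨x, hx, y, hy, hxy⟩ := c1.2 K (by grind) hne ⟨s0, by grind⟩
    have := hW4 y x hxy.symm
    exact ⟨x, hx, y, by grind, hxy⟩
  have tWS : Tch G W (S ∪ RX ∪ (RY \ W)) :=
    (c1.2 W (by grind) ⟨w, hW2⟩ ⟨s0, by grind⟩).mono subset_rfl (by grind)
  have sp : Sp G S T U B C (S ∪ RX ∪ (RY \ W)) (T ∪ DT) W :=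
    { fr := h
      gS := ⟨by grind, by grind, cS2⟩
      gT := ⟨by grind, by grind, c2⟩
      cW := cW
      hWU := by grind
      dd := by
        clear H hW3 hW4 nB nC nC' nbU
        have hWU : W ⊆ U \ (B ∪ C) := by grind
        refine ⟨?_, ?_, ?_, ?_, ?_, ?_, ?_, ?_, ?_⟩ <;> grind
      cov := by clear * - h3 e3; intro x hx; have := @h3 x; have := @e3 x; grind (gen := 20) (ematch := 20)
      nC' := nC'
      tWS := tWS
      tWC := ⟨w, hW2, c, hc, hcw.symm⟩
      tSC := (q1.mono subset_rfl (by grind)).symm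
      tTB := t2.symm }
  exact sp.fin tc hB hC tW (t1.mono subset_rfl (by clear * - e3; grind))

theorem Fr.ll2 [Finite V] (tc : TC G) {n : ℕ} {S T U B C : Set V} (h : Fr G S T U B C)
    (hB : NT G (n + 1) B) (hC : NT G n C) (hc : CLC G (U \ (B ∪ C)) S T B) :
    WA G n S T U ∨ OB G n S T U := by
  obtain ⟨DS, DT, ⟨h1, h2, h3⟩, h4, c1, c2, t1, t2⟩ := hc
  by_cases tT : Tch G C (T ∪ DT)
  · by_cases tS : Tch G C (S ∪ DS)
    · left
      have ⟨st, cU, hBU, hCU, dBC, cD, nB, nC, cB, cC⟩ := h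
      have dSU := st.dSU
      have dTU := st.dTU
      have dST := st.dST
      refine ⟨S ∪ DS, T ∪ DT, B, C, ⟨by grind, by grind, c1⟩, ⟨by grind, by grind, c2⟩, hBU, hCU,
        ?_, by intro x hx; have := @h3 x; grind (gen := 20) (ematch := 20), cD, nB, nC, t1.symm, tS.symm, t2.symm, tT.symm, hB.mono_succ, hC⟩
      clear nB nC
      refine ⟨?_, ?_, ?_, ?_, ?_, ?_⟩ <;> grind
    · have := h.symm.ll3 tc hB hC h2 h1 (by grind) h4.symm c2 c1 t2 t1
        (fun x y hxy hx hy => tS ⟨x, hx, y, hy, hxy⟩)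
      exact this.imp WA.symm OB.symm
  · exact h.ll3 tc hB hC h1 h2 h3 h4 c1 c2 t1 t2 (fun x y hxy hx hy => tT ⟨x, hx, y, hy, hxy⟩)

theorem LL [Finite V] (tc : TC G) {n : ℕ} {S T U : Set V} (st : State G S T U)
    (h : NT G (n + 2) U) : OA G n S T U ∨ OB G n S T U := by
  obtain ⟨cU, B, C, h1, h2, h3, h4, h5, h6, h7, h8⟩ := h
  have fr : Fr G S T U B C :=
    { st := st
      cU := cU
      hB := h1
      hC := h2
      dBC := h3
      cD := h4
      nB := by
        intro x y hxy hx
        by_contra hh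
        exact h5 ⟨x, hx, y, by grind, hxy⟩
      nC := by
        intro x y hxy hx
        by_contra hh
        exact h6 ⟨x, hx, y, by grind, hxy⟩
      cB := h7.conn
      cC := h8.conn }
  have : WA G n S T U ∨ OB G n S T U := by
    rcases fr.full tc with hc | hc
    · exact fr.ll2 tc h7 h8.mono_succ hc
    · exact fr.swap.ll2 tc h8 h7.mono_succ (by rwa [Set.union_comm C B])
  exact this.imp (fun h => h.refine st) id

end localD
end PQ


namespace PQ

theorem OA.main {V : Type} {G : SimpleGraph V} {n i m : ℕ} {S T U : Set V} (st : State G S T U)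
    (h : OA G n S T U)
    (ih : ∀ S T U : Set V, NT G n U → State G S T U → RT G i S T U ∨ QS G m S T U) :
    RT G (i + 1) S T U ∨ QS G m S T U := by
  obtain ⟨S', T1, T2, U1, U2, gS, h1, h2, h3, h4, dd, h12, c1, c2, t1, t2, st1, st2, n1, n2⟩ := h
  have dTU := st.dTU
  obtain ⟨g1, g2, g3⟩ := gS
  have key : ∀ T1 U1, T1 ⊆ U → U1 ⊆ U → Tch G T T1 → State G S' T1 U1 → Dj S' T → QS G m S' T1 U1 →
      QS G m S T U := by
    intro T1 U1 h1 h3 t1 st1 d q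
    have := q.enlarge (T1 := T ∪ T1) st1.cS.1 st1.cT.1 subset_rfl (by grind) st1.cS
      (st.cT.union st1.cT t1) (by have := st1.dST; grind) st1.dSU (by have := st1.dTU; grind)
    exact this.lift g1 g2 (by grind) (by grind) h3
  rcases ih S' T1 U1 n1 st1 with r1 | q
  · rcases ih S' T2 U2 n2 st2 with r2 | q
    · left
      refine ⟨S', T, T1, T2, U1, U2, ⟨g1, g2, g3⟩, .refl st.cT, h1, h2, h3, h4, ?_, h12, c1, c2, t1, t2, r1, r2⟩
      obtain ⟨d1, d2, d3, d4, d5, d6, d7, d8, d9, d10⟩ := dd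
      exact ⟨d1, d2, d3, d4, d5, by grind, by grind, by grind, by grind, d6, d7, d8, d9, d10⟩
    · exact Or.inr (key T2 U2 h2 h4 t2 st2 dd.1 q)
  · exact Or.inr (key T1 U1 h1 h3 t1 st1 dd.1 q)

theorem OB.main {V : Type} {G : SimpleGraph V} {n i m : ℕ} {S T U : Set V} (st : State G S T U)
    (h : OB G n S T U)
    (ih : ∀ S T U : Set V, NT G n U → State G S T U → RT G i S T U ∨ QS G m S T U) :
    RT G i S T U ∨ QS G (m + 1) S T U := by
  obtain ⟨S', T', W, U1, U2, gS, gT, h3, h4, h5, dd, cW, ts, tt, nb1, nb2, t1, t2, t3, t4, n1, n2⟩ := h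
  have ⟨g1, g2, g3⟩ := gS
  have ⟨f1, f2, f3⟩ := gT
  have ⟨d1, d2, d3, d4, d5, d6, d7, d8, d9, d10⟩ := dd
  have st1 : State G S' W U1 := ⟨g3, cW, d2, d3, d8, by
    rintro ⟨x, hx, y, hy, hxy⟩; exact hy (nb1 x y hxy hx), t1, t2⟩
  have st2 : State G W T' U2 := ⟨cW, f3, d5.symm, d9, d7, by
    rintro ⟨x, hx, y, hy, hxy⟩; exact hy (nb2 x y hxy hx), t3, t4⟩
  rcases ih _ _ _ n1 st1 with r | q1
  · left
    have := r.enlarge (T1 := T' ∪ W) st1.cS.1 st1.cT.1 subset_rfl (by grind) g3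
      (f3.union cW tt.symm) (by grind) d3 (by grind)
    exact this.lift g1 g2 (by grind) (by grind) h4
  rcases ih _ _ _ n2 st2 with r | q2
  · left
    have := r.enlarge (S1 := S' ∪ W) st2.cS.1 st2.cT.1 (by grind) subset_rfl 
      (g3.union cW ts.symm) f3 (by grind) (by grind) d7
    exact this.lift (by grind) (by grind) f1 f2 h5
  exact Or.inr ⟨S', T', W, U1, U2, gS, gT, h3, h4, h5, dd, cW, ts, tt, q1, q2⟩

theorem main_local (i m : ℕ) : ∃ h, ∀ (V : Type) [Finite V] (G : SimpleGraph V), TC G →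
    ∀ S T U : Set V, NT G h U → State G S T U → RT G i S T U ∨ QS G m S T U := by
  induction i generalizing m with
  | zero =>
    refine ⟨0, fun V _ G tc S T U hn st => Or.inl ⟨S, T ∪ U, .refl st.cS, ⟨by grind, by grind, ?_⟩, ?_, ?_⟩⟩
    · exact st.cT.union hn.conn st.tT
    · have := st.dST; have := st.dSU; grind
    · exact st.tS.mono subset_rfl (by grind)
  | succ i ihi =>
    induction m with
    | zero => exact ⟨0, fun V _ G tc S T U hn st => Or.inr trivial⟩
    | succ m ihm =>
      obtain ⟨a, ha⟩ := ihi (m + 1)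
      obtain ⟨b, hb⟩ := ihm
      refine ⟨max a b + 2, fun V _ G tc S T U hn st => ?_⟩
      rcases LL tc st hn with h | h
      · exact h.main st fun S T U hn st => ha V G tc S T U (hn.mono (by omega)) st
      · exact h.main st fun S T U hn st => hb V G tc S T U (hn.mono (by omega)) st

end PQ


namespace PQ

theorem acyclic_leaf {W : Type} {F : SimpleGraph W} (hF : F.IsAcyclic) [Finite W] [Nonempty W] :
    ∃ w : W, ∀ a b, F.Adj w a → F.Adj w b → a = b := by
  obtain ⟨u, v, p, hp, hmax⟩ := SimpleGraph.Walk.exists_isPath_forall_isPath_length_le_length F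
  have key : ∀ a, F.Adj u a → a = p.snd := by
    intro a ha
    by_cases h : a ∈ p.support
    · exact hF.eq_snd_of_adj_start hp ha h
    · have := hmax _ _ (SimpleGraph.Walk.cons ha.symm p) (by simp [hp, h])
      simp at this
  exact ⟨u, fun a b ha hb => (key a ha).trans (key b hb).symm⟩

theorem acyclic_leaf' {W : Type} {P : SimpleGraph W} [Finite W] {v : W}
    (hF : (P.induce {u | u ≠ v}).IsAcyclic) (s : Set W) (hs : v ∉ s) (hne : ∃ x, x ∈ s) :
    ∃ w ∈ s, ∀ a ∈ s, ∀ b ∈ s, P.Adj w a → P.Adj w b → a = b := by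
  have h1 : (P.induce s).IsAcyclic := by
    refine hF.embedding (G := P.induce s) (SimpleGraph.induceHomOfLE P ?_)
    intro x hx; rintro rfl; exact hs hx
  obtain ⟨x, hx⟩ := hne
  haveI : Nonempty s := ⟨⟨x, hx⟩⟩
  obtain ⟨w, hw⟩ := acyclic_leaf h1
  exact ⟨w.1, w.2, fun a ha b hb h2 h3 => congrArg Subtype.val (hw ⟨a, ha⟩ ⟨b, hb⟩ h2 h3)⟩

section
variable {V : Type} {G : SimpleGraph V}

theorem RT.branch {j : ℕ} {S T U : Set V} (h : RT G (j + 2) S T U) :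
    ∃ S' T' w U1 U2, Grow G S S' U ∧ Grow G T T' U ∧ w ⊆ U ∧ U1 ⊆ U ∧ U2 ⊆ U ∧
      (Dj S' T' ∧ Dj S' w ∧ Dj S' U1 ∧ Dj S' U2 ∧ Dj T' w ∧ Dj T' U1 ∧ Dj T' U2 ∧
        Dj w U1 ∧ Dj w U2 ∧ Dj U1 U2) ∧ Conn G w ∧ Tch G T' w ∧ RT G j S' T' U2 ∧ RT G j S' w U1 := by
  obtain ⟨S', T', T1, T2, U1, U2, ⟨a1, a2, a3⟩, ⟨b1, b2, b3⟩, h1, h2, h3, h4,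
    ⟨d1, d2, d3, d4, d5, d6, d7, d8, d9, d10, d11, d12, d13, d14⟩, h12, c1, c2, t1, t2, r1, r2⟩ := h
  rcases h12 with rfl | h12
  · obtain ⟨S'', T'', A1, A2, V1, V2, ⟨p1, p2, p3⟩, ⟨q1, q2, q3⟩, e1, e2, e3, e4,
      ⟨f1, f2, f3, f4, f5, f6, f7, f8, f9, f10, f11, f12, f13, f14⟩, -, g1, g2, s1, s2, r3, r4⟩ := r1
    have cT : Conn G (T' ∪ T'') := b3.union q3 (t1.mono subset_rfl q1)
    have r := r2.enlarge (S1 := S'') (T1 := T' ∪ T'') a3.1 c1.1 p1 (by grind) p3 cT (by grind)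
      (by grind) (by grind)
    refine ⟨S'', T' ∪ T'', A1, V1, U2, ⟨by grind, by grind, p3⟩, ⟨by grind, by grind, cT⟩,
      by grind, by grind, h4, ?_, g1, s1.mono (by grind) subset_rfl, r.mono (by omega), r3⟩
    refine ⟨?_, ?_, ?_, ?_, ?_, ?_, ?_, ?_, ?_, ?_⟩ <;> grind
  · have cT : Conn G (T' ∪ T2) := b3.union c2 t2
    have r := r2.enlarge (S1 := S') (T1 := T' ∪ T2) a3.1 c2.1 subset_rfl (by grind) a3 cT (by grind)
      (by grind) (by grind)
    refine ⟨S', T' ∪ T2, T1, U1, U2, ⟨by grind, by grind, a3⟩, ⟨by grind, by grind, cT⟩,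
      by grind, by grind, h4, ?_, c1, t1.mono (by grind) subset_rfl, r.mono (by omega), r1.mono (by omega)⟩
    refine ⟨?_, ?_, ?_, ?_, ?_, ?_, ?_, ?_, ?_, ?_⟩ <;> grind

def FS {W : Type} (P : SimpleGraph W) (G : SimpleGraph V) (s : Set W) (j : ℕ) (S T U : Set V) : Prop :=
  ∃ (S' : Set V) (f R : W → Set V), Grow G S S' U ∧
    (∀ u ∈ s, Conn G (f u) ∧ f u ⊆ T ∪ U ∧ R u ⊆ U ∧ Dj S' (f u) ∧ Dj S' (R u) ∧ Dj (f u) (R u) ∧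
      RT G j S' (f u) (R u)) ∧
    (∀ u ∈ s, ∀ u' ∈ s, u ≠ u' → Dj (f u) (f u') ∧ Dj (R u) (R u') ∧ Dj (f u) (R u')) ∧
    (∀ u ∈ s, ∀ u' ∈ s, P.Adj u u' → Tch G (f u) (f u'))

open Classical in
theorem FS.step {W : Type} {P : SimpleGraph W} {s : Set W} {j : ℕ} {S T U : Set V}
    (h : FS P G s (j + 2) S T U) {w p : W} (hw : w ∉ s) (hp : p ∈ s)
    (hwp : ∀ a ∈ s, P.Adj w a → a = p) : FS P G (insert w s) j S T U := by
  obtain ⟨S', f, R, ⟨g1, g2, g3⟩, h1, h2, h3⟩ := h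
  obtain ⟨i1, i2, i3, i4, i5, i6, i7⟩ := h1 p hp
  obtain ⟨S2, T', w', U1, U2, ⟨a1, a2, a3⟩, ⟨b1, b2, b3⟩, e1, e2, e3,
    ⟨d1, d2, d3, d4, d5, d6, d7, d8, d9, d10⟩, cw, tw, r1, r2⟩ := i7.branch
  have hpw : p ≠ w := by rintro rfl; exact hw hp
  set f' : W → Set V := fun u => if u = w then w' else if u = p then T' else f u with hf'
  set R' : W → Set V := fun u => if u = w then U1 else if u = p then U2 else R u with hR'
  have fw : f' w = w' := by simp [hf']
  have fp : f' p = T' := by simp [hf', hpw]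
  have fo : ∀ u ∈ s, u ≠ p → f' u = f u := by
    intro u hu hup
    have : u ≠ w := by rintro rfl; exact hw hu
    simp [hf', this, hup]
  have Rw : R' w = U1 := by simp [hR']
  have Rp : R' p = U2 := by simp [hR', hpw]
  have Ro : ∀ u ∈ s, u ≠ p → R' u = R u := by
    intro u hu hup
    have : u ≠ w := by rintro rfl; exact hw hu
    simp [hR', this, hup]
  clear_value f' R'
  have cases : ∀ u ∈ insert w s, u = w ∨ u = p ∨ (u ∈ s ∧ u ≠ p) := by
    intro u hu
    rcases hu with h | h
    · exact Or.inl h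
    · by_cases hup : u = p
      · exact Or.inr (Or.inl hup)
      · exact Or.inr (Or.inr ⟨h, hup⟩)
  have fpo : ∀ u ∈ s, u ≠ p → (Dj T' (f u) ∧ Dj U2 (R u) ∧ Dj T' (R u) ∧ Dj (f u) U2) ∧
      (Dj w' (f u) ∧ Dj U1 (R u) ∧ Dj w' (R u) ∧ Dj (f u) U1) := by
    intro u hu hup
    obtain ⟨k1, k2, k3⟩ := h2 u hu p hp hup
    obtain ⟨k4, k5, k6⟩ := h2 p hp u hu (Ne.symm hup)
    clear h1 h2 h3 cases fo Ro hwp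
    refine ⟨⟨?_, ?_, ?_, ?_⟩, ?_, ?_, ?_, ?_⟩ <;> grind
  refine ⟨S2, f', R', ⟨by grind, by grind, a3⟩, ?_, ?_, ?_⟩
  · intro u hu
    rcases cases u hu with rfl | rfl | ⟨hu, hup⟩
    · rw [fw, Rw]
      exact ⟨cw, by grind, by grind, d2, d3, d8, r2⟩
    · rw [fp, Rp]
      exact ⟨b3, by grind, by grind, d1, d4, d7, r1⟩
    · rw [fo u hu hup, Ro u hu hup]
      obtain ⟨k1, k2, k3⟩ := h2 u hu p hp hup
      obtain ⟨k4, k5, k6⟩ := h2 p hp u hu (Ne.symm hup)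
      obtain ⟨l1, l2, l3, l4, l5, l6, l7⟩ := h1 u hu
      clear h1 h2 h3 cases fo Ro hwp fpo
      have m1 : Dj S2 (f u) := by grind
      have m2 : Dj S2 (R u) := by grind
      exact ⟨l1, l2, l3, m1, m2, l6,
        (l7.enlarge g3.1 l1.1 a1 subset_rfl a3 l1 m1 m2 l6).mono (by omega)⟩
  · have sym : ∀ A B C D E F : Set V, (Dj A B ∧ Dj C D ∧ Dj E F) → (Dj B A ∧ Dj D C ∧ Dj F E) :=
      fun A B C D E F h => ⟨h.1.symm, h.2.1.symm, h.2.2.symm⟩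
    intro u hu u' hu' hne
    rcases cases u hu with rfl | rfl | ⟨hu1, hup⟩
    · rcases cases u' hu' with rfl | rfl | ⟨hu', hup'⟩
      · exact absurd rfl hne
      · rw [fw, fp, Rw, Rp]
        exact ⟨d5.symm, d10, d9⟩
      · rw [fw, Rw, fo u' hu' hup', Ro u' hu' hup']
        have := (fpo u' hu' hup').2
        exact ⟨this.1, this.2.1, this.2.2.1⟩
    · rcases cases u' hu' with rfl | rfl | ⟨hu', hup'⟩
      · rw [fw, fp, Rw, Rp]
        exact ⟨d5, d10.symm, d6⟩
      · exact absurd rfl hne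
      · rw [fp, Rp, fo u' hu' hup', Ro u' hu' hup']
        have := (fpo u' hu' hup').1
        exact ⟨this.1, this.2.1, this.2.2.1⟩
    · rw [fo u hu1 hup, Ro u hu1 hup]
      rcases cases u' hu' with rfl | rfl | ⟨hu', hup'⟩
      · rw [fw, Rw]
        have := (fpo u hu1 hup).2
        exact ⟨this.1.symm, this.2.1.symm, this.2.2.2⟩
      · rw [fp, Rp]
        have := (fpo u hu1 hup).1
        exact ⟨this.1.symm, this.2.1.symm, this.2.2.2⟩
      · rw [fo u' hu' hup', Ro u' hu' hup']
        exact h2 u hu1 u' hu' hne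
  · intro u hu u' hu' hadj
    have key : ∀ u ∈ s, u ≠ p → ∀ u' ∈ insert w s, P.Adj u u' → Tch G (f u) (f' u') := by
      intro u hu1 hup u' hu' hadj
      rcases cases u' hu' with rfl | rfl | ⟨hu', hup'⟩
      · exact absurd (hwp u hu1 hadj.symm) hup
      · rw [fp]; exact (h3 u hu1 _ hp hadj).mono subset_rfl b1
      · rw [fo u' hu' hup']; exact h3 u hu1 u' hu' hadj
    rcases cases u hu with rfl | rfl | ⟨hu1, hup⟩
    · rcases cases u' hu' with rfl | rfl | ⟨hu', hup'⟩
      · exact absurd hadj (by simp)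
      · rw [fw, fp]; exact tw.symm
      · exact absurd (hwp u' hu' hadj) hup'
    · rcases cases u' hu' with rfl | rfl | ⟨hu', hup'⟩
      · rw [fw, fp]; exact tw
      · exact absurd hadj (by simp)
      · rw [fo u' hu' hup']; exact (key u' hu' hup' _ hu hadj.symm).symm
    · rw [fo u hu1 hup]; exact key u hu1 hup u' hu' hadj

theorem FS.all {W : Type} {P : SimpleGraph W} [Finite W] {v : W}
    (hF : (P.induce {u | u ≠ v}).IsAcyclic) (n : ℕ) : ∀ (s : Finset W), v ∉ s → s.card = n + 1 →
    ∀ (j : ℕ) (S T U : Set V), Conn G S → Conn G T → Dj S T → Dj S U → Dj T U →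
    RT G (j + 2 * n) S T U → FS P G (s : Set W) j S T U := by
  classical
  induction n with
  | zero =>
    intro s hv hs j S T U cS cT d1 d2 d3 h
    obtain ⟨a, rfl⟩ := Finset.card_eq_one.1 hs
    refine ⟨S, fun _ => T, fun _ => U, .refl cS, ?_, ?_, ?_⟩
    · intro u hu; exact ⟨cT, by grind, by grind, d1, d2, d3, h⟩
    · intro u hu u' hu' hne
      simp at hu hu'
      exact absurd (hu.trans hu'.symm) hne
    · intro u hu u' hu' hadj
      simp at hu hu'
      subst hu hu'
      exact absurd hadj (by simp)
  | succ n ih =>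
    intro s hv hs j S T U cS cT d1 d2 d3 h
    obtain ⟨w, hw, hl⟩ := acyclic_leaf' hF (s : Set W) (by simpa using hv)
      (by obtain ⟨x, hx⟩ := Finset.card_pos.1 (by omega : 0 < s.card); exact ⟨x, by simpa using hx⟩)
    have hcard : (s.erase w).card = n + 1 := by
      rw [Finset.card_erase_of_mem (by simpa using hw)]; omega
    have h0 := ih (s.erase w) (fun hh => hv (Finset.mem_of_mem_erase hh)) hcard (j + 2) S T U cS cT d1 d2 d3
      (by rw [show j + 2 + 2 * n = j + 2 * (n + 1) by ring]; exact h)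
    have : ∃ p ∈ s.erase w, ∀ a ∈ s.erase w, P.Adj w a → a = p := by
      by_cases hx : ∃ p ∈ s.erase w, P.Adj w p
      · obtain ⟨p, hp, hwp⟩ := hx
        exact ⟨p, hp, fun a ha hwa => hl a (Finset.mem_of_mem_erase ha) p (Finset.mem_of_mem_erase hp) hwa hwp⟩
      · obtain ⟨p, hp⟩ := Finset.card_pos.1 (by omega : 0 < (s.erase w).card)
        exact ⟨p, hp, fun a ha hwa => absurd ⟨a, ha, hwa⟩ hx⟩
    obtain ⟨p, hp, hwp⟩ := this
    have := FS.step (w := w) (p := p) h0 (by simp) (by exact_mod_cast hp) (by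
      intro a ha; exact hwp a (by exact_mod_cast ha))
    rwa [← Finset.coe_insert, Finset.insert_erase (by simpa using hw)] at this

/-- absorb reserves so that every branch set touches the apex set -/
theorem FS.absorb {W : Type} {P : SimpleGraph W} {s : Set W} {S T U : Set V} (t : Finset W) :
    (t : Set W) ⊆ s → FS P G s 0 S T U →
    ∃ (S' : Set V) (f R : W → Set V), Grow G S S' U ∧
    (∀ u ∈ s, Conn G (f u) ∧ f u ⊆ T ∪ U ∧ R u ⊆ U ∧ Dj S' (f u) ∧ Dj S' (R u) ∧ Dj (f u) (R u) ∧
      RT G 0 S' (f u) (R u)) ∧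
    (∀ u ∈ s, ∀ u' ∈ s, u ≠ u' → Dj (f u) (f u') ∧ Dj (R u) (R u') ∧ Dj (f u) (R u')) ∧
    (∀ u ∈ s, ∀ u' ∈ s, P.Adj u u' → Tch G (f u) (f u')) ∧ ∀ u ∈ t, R u = ∅ := by
  classical
  induction t using Finset.induction_on with
  | empty =>
    rintro - ⟨S', f, R, h1, h2, h3, h4⟩
    exact ⟨S', f, R, h1, h2, h3, h4, by simp⟩
  | insert p t hpt ih =>
    intro hts h0
    obtain ⟨S', f, R, ⟨g1, g2, g3⟩, h1, h2, h3, h5⟩ := ih (fun x hx => hts (by simp [Finset.mem_coe.1 hx])) h0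
    have hp : p ∈ s := hts (by simp)
    obtain ⟨i1, i2, i3, i4, i5, i6, i7⟩ := h1 p hp
    obtain ⟨S2, T', ⟨a1, a2, a3⟩, ⟨b1, b2, b3⟩, d1, tt⟩ := i7
    have hlo : ∀ u ∈ s, u ≠ p → Dj T' (f u) ∧ Dj T' (R u) ∧ Dj S2 (f u) ∧ Dj S2 (R u) := by
      intro u hu hup
      obtain ⟨k1, k2, k3⟩ := h2 u hu p hp hup
      obtain ⟨k4, k5, k6⟩ := h2 p hp u hu (Ne.symm hup)
      obtain ⟨l1, l2, l3, l4, l5, l6, l7⟩ := h1 u hu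
      clear h1 h2 h3 h5 ih
      refine ⟨?_, ?_, ?_, ?_⟩ <;> grind
    set f' : W → Set V := fun u => if u = p then T' else f u with hf'
    set R' : W → Set V := fun u => if u = p then ∅ else R u with hR'
    have fp : f' p = T' := by simp [hf']
    have fo : ∀ u, u ≠ p → f' u = f u := by
      intro u hup
      simp [hf', hup]
    have Rp : R' p = ∅ := by simp [hR']
    have Ro : ∀ u, u ≠ p → R' u = R u := by
      intro u hup
      simp [hR', hup]
    clear_value f' R'
    refine ⟨S2, f', R', ⟨by grind, by grind, a3⟩, ?_, ?_, ?_, ?_⟩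
    · intro u hu
      by_cases hup : u = p
      · subst hup
        rw [fp, Rp]
        exact ⟨b3, by grind, by grind, d1, by grind, by grind, ⟨S2, T', .refl a3, .refl b3, d1, tt⟩⟩
      · rw [fo u hup, Ro u hup]
        obtain ⟨l1, l2, l3, l4, l5, l6, l7⟩ := h1 u hu
        obtain ⟨m0, m3, m1, m2⟩ := hlo u hu hup
        exact ⟨l1, l2, l3, m1, m2, l6, (l7.enlarge g3.1 l1.1 a1 subset_rfl a3 l1 m1 m2 l6)⟩
    · intro u hu u' hu' hne
      by_cases hup : u = p
      · subst hup
        have hup' : u' ≠ u := hne.symm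
        rw [fp, Rp, fo u' hup', Ro u' hup']
        obtain ⟨m0, m3, m1, m2⟩ := hlo u' hu' hup'
        exact ⟨m0, by grind, m3⟩
      · rw [fo u hup, Ro u hup]
        by_cases hup' : u' = p
        · subst hup'
          rw [fp, Rp]
          obtain ⟨m0, m3, m1, m2⟩ := hlo u hu hup
          exact ⟨m0.symm, by grind, by grind⟩
        · rw [fo u' hup', Ro u' hup']
          exact h2 u hu u' hu' hne
    · intro u hu u' hu' hadj
      have e : ∀ u, f u ⊆ f' u := by
        intro u
        by_cases hup : u = p
        · subst hup; rw [fp]; exact b1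
        · rw [fo u hup]
      exact (h3 u hu u' hu' hadj).mono (e u) (e u')
    · intro u hu
      by_cases hup : u = p
      · subst hup; exact Rp
      · rw [Ro u hup]; exact h5 u (by simpa [hup] using hu)

theorem isMinor_of {W : Type} {P : SimpleGraph W} (f : W → Set V) (h1 : ∀ u, Conn G (f u))
    (h2 : ∀ u u', u ≠ u' → Dj (f u) (f u')) (h3 : ∀ u u', P.Adj u u' → Tch G (f u) (f u')) :
    IsMinor P G :=
  ⟨f, fun u => (h1 u).1, fun u => conn_iff.1 (h1 u),
    fun u u' h => Set.disjoint_left.2 (h2 u u' h), fun u u' h => h3 u u' h⟩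

end

theorem forest_extract {W : Type} (P : SimpleGraph W) [Finite W] (v : W)
    (hF : (P.induce {u | u ≠ v}).IsAcyclic) : ∃ k, ∀ (V : Type) (G : SimpleGraph V) (S T U : Set V),
    Conn G S → Conn G T → Dj S T → Dj S U → Dj T U → RT G k S T U → IsMinor P G := by
  classical
  haveI := Fintype.ofFinite W
  refine ⟨0 + 2 * ((Finset.univ.erase v).card - 1), fun V G S T U cS cT d1 d2 d3 h => ?_⟩
  by_cases hc : (Finset.univ.erase v).card = 0
  · refine isMinor_of (fun _ => S) (fun _ => cS) ?_ ?_
    · intro u u' hne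
      exfalso
      rw [Finset.card_eq_zero] at hc
      have e : ∀ u, u = v := by
        intro u; by_contra hh
        have : u ∈ Finset.univ.erase v := by simp [hh]
        rw [hc] at this; simp at this
      exact hne ((e u).trans (e u').symm)
    · intro u u' hadj
      exfalso
      rw [Finset.card_eq_zero] at hc
      have e : ∀ u, u = v := by
        intro u; by_contra hh
        have : u ∈ Finset.univ.erase v := by simp [hh]
        rw [hc] at this; simp at this
      exact hadj.ne ((e u).trans (e u').symm)
  have h0 := FS.all hF _ (Finset.univ.erase v) (by simp) (by omega : _ = ((Finset.univ.erase v).card - 1) + 1)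
    0 S T U cS cT d1 d2 d3 h
  obtain ⟨S', f, R, ⟨g1, g2, g3⟩, h1, h2, h3, h5⟩ := FS.absorb (Finset.univ.erase v) subset_rfl h0
  have mem : ∀ u, u ≠ v → u ∈ (↑(Finset.univ.erase v) : Set W) := by simp
  have tS : ∀ u, u ≠ v → Tch G S' (f u) := by
    intro u hu
    obtain ⟨-, -, -, -, -, -, q⟩ := h1 u (mem u hu)
    rw [h5 u (by simp [hu])] at q
    obtain ⟨A, B, ⟨a1, a2, a3⟩, ⟨b1, b2, b3⟩, -, t⟩ := q
    exact t.mono (by grind) (by grind)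
  refine isMinor_of (fun u => if u = v then S' else f u) ?_ ?_ ?_
  · intro u
    by_cases hu : u = v
    · simp [hu, g3]
    · simp [hu, (h1 u (mem u hu)).1]
  · intro u u' hne
    by_cases hu : u = v
    · have hu' : u' ≠ v := by rintro rfl; exact hne hu
      simpa [hu, hu'] using (h1 u' (mem u' hu')).2.2.2.1
    · by_cases hu' : u' = v
      · simpa [hu, hu'] using (h1 u (mem u hu)).2.2.2.1.symm
      · simpa [hu, hu'] using (h2 u (mem u hu) u' (mem u' hu') hne).1
  · intro u u' hadj
    by_cases hu : u = v
    · have hu' : u' ≠ v := by rintro rfl; exact hadj.ne hu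
      simpa [hu, hu'] using tS u' hu'
    · by_cases hu' : u' = v
      · simpa [hu, hu'] using (tS u hu).symm
      · simpa [hu, hu'] using h3 u (mem u hu) u' (mem u' hu') hadj

end PQ


namespace PQ

section menger
variable {V : Type}

theorem Conn.le {G H : SimpleGraph V} {A : Set V} (h : Conn G A) (hGH : ∀ x y, G.Adj x y → H.Adj x y) :
    Conn H A := by
  refine ⟨h.1, fun K h1 h2 h3 => ?_⟩
  obtain ⟨x, hx, y, hy, hxy⟩ := h.2 K h1 h2 h3
  exact ⟨x, hx, y, hy, hGH x y hxy⟩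

/-- if `A` is connected and all edges at vertices have their ends in `M` then either trivial or inside -/
theorem Conn.sub {G : SimpleGraph V} {A M : Set V} (h : Conn G A) {a : V} (ha : a ∈ A) (haM : a ∈ M)
    (hM : ∀ x y, G.Adj x y → x ∈ M) : A ⊆ M := by
  by_contra hh
  obtain ⟨x, hx, hxM⟩ := Set.not_subset.1 hh
  obtain ⟨u, hu, w, hw, huw⟩ := h.2 (A ∩ M) (by grind) ⟨a, ha, haM⟩ ⟨x, hx, by grind⟩
  have := hM w u huw.symm
  grind

/-- vertices of `K` in `B` or with a neighbour outside `K` -/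
def sep (G : SimpleGraph V) (B K : Set V) : Set V := {v | v ∈ K ∧ (v ∈ B ∨ ∃ w, w ∉ K ∧ G.Adj v w)}

/-- `k` disjoint connected sets from `A` to `B`, indexed by their vertices in `A` -/
def Lk (G : SimpleGraph V) (A B : Set V) (k : ℕ) : Prop :=
  ∃ (I : Set V) (g : V → Set V), I ⊆ A ∧ I.ncard = k ∧
    (∀ a ∈ I, a ∈ g a ∧ Conn G (g a) ∧ ∃ b ∈ g a, b ∈ B) ∧
    (∀ a ∈ I, ∀ a' ∈ I, a ≠ a' → Dj (g a) (g a'))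

def resIn (G : SimpleGraph V) (K : Set V) : SimpleGraph V where
  Adj x y := G.Adj x y ∧ x ∈ K ∧ y ∈ K
  symm := ⟨fun x y h => ⟨h.1.symm, h.2.2, h.2.1⟩⟩
  loopless := ⟨fun x h => G.loopless.irrefl x h.1⟩

def resOut (G : SimpleGraph V) (K : Set V) : SimpleGraph V where
  Adj x y := G.Adj x y ∧ ¬ (x ∈ K ∧ y ∈ K)
  symm := ⟨fun x y h => ⟨h.1.symm, fun hh => h.2 ⟨hh.2, hh.1⟩⟩⟩
  loopless := ⟨fun x h => G.loopless.irrefl x h.1⟩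

def delE (G : SimpleGraph V) (a b : V) : SimpleGraph V where
  Adj x y := G.Adj x y ∧ ¬ (x = a ∧ y = b) ∧ ¬ (x = b ∧ y = a)
  symm := ⟨fun x y h => ⟨h.1.symm, by tauto, by tauto⟩⟩
  loopless := ⟨fun x h => G.loopless.irrefl x h.1⟩

def eset (G : SimpleGraph V) : Set (V × V) := {p | G.Adj p.1 p.2}

theorem eset_lt [Finite V] {G H : SimpleGraph V} (h : ∀ x y, H.Adj x y → G.Adj x y) {a b : V}
    (h1 : G.Adj a b) (h2 : ¬ H.Adj a b) : (eset H).ncard < (eset G).ncard := by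
  refine Set.ncard_lt_ncard ?_ (Set.toFinite _)
  refine ⟨fun p hp => h _ _ hp, fun hh => h2 (hh (show (a, b) ∈ eset G from h1))⟩

theorem menger_glue [Finite V] {G : SimpleGraph V} {A B K : Set V} {k : ℕ} {x y : V}
    (hAK : A ⊆ K) (hxy : G.Adj x y) (hx : x ∈ K) (hy : y ∉ K)
    (hk : (sep (delE G x y) B K).ncard < k)
    (h1 : Lk (resIn G K) A (sep G B K) k)
    (h2 : Lk (resOut (delE G x y) K) (insert y (sep (delE G x y) B K)) B k) :
    Lk G A B k := by
  classical
  set Q := sep (delE G x y) B K with hQ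
  have sepQ : sep G B K ⊆ insert x Q := by
    rintro v ⟨hv, hv'⟩
    by_cases hvx : v = x
    · exact Or.inl hvx
    · refine Or.inr ⟨hv, hv'.imp id ?_⟩
      rintro ⟨w, hw, hvw⟩
      exact ⟨w, hw, hvw, by tauto, by rintro ⟨h, h'⟩; subst h'; exact hw hx⟩
  have hQK : Q ⊆ K := fun v hv => hv.1
  have hyQ : y ∉ Q := fun h => hy (hQK h)
  have c1 : (insert x Q).ncard ≤ k := (Set.ncard_insert_le x Q).trans hk
  have c2 : (insert y Q).ncard ≤ k := (Set.ncard_insert_le y Q).trans hk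
  obtain ⟨I, p, hI, cI, hp, dp⟩ := h1
  obtain ⟨I2, q, hI2, cI2, hq, dq⟩ := h2
  have eI2 : I2 = insert y Q := Set.eq_of_subset_of_ncard_le hI2 (by omega) (Set.toFinite _)
  subst eI2
  have : ∀ a, ∃ b, a ∈ I → b ∈ p a ∧ b ∈ sep G B K := by
    intro a
    by_cases ha : a ∈ I
    · obtain ⟨b, hb⟩ := (hp a ha).2.2
      exact ⟨b, fun _ => hb⟩
    · exact ⟨a, fun h => absurd h ha⟩
  choose t ht using this
  have tinj : Set.InjOn t I := by
    intro a ha a' ha' e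
    by_contra hne
    exact dp a ha a' ha' hne (t a) (ht a ha).1 (e ▸ (ht a' ha').1)
  have timg : t '' I = insert x Q := by
    refine Set.eq_of_subset_of_ncard_le ?_ ?_ (Set.toFinite _)
    · rintro _ ⟨a, ha, rfl⟩
      exact sepQ (ht a ha).2
    · rw [Set.ncard_image_of_injOn tinj]; omega
  have psep : ∀ a ∈ I, ∀ v ∈ p a, v ∈ insert x Q → v = t a := by
    intro a ha v hv hvQ
    rw [← timg] at hvQ
    obtain ⟨a', ha', rfl⟩ := hvQ
    by_cases e : a = a'
    · rw [e]
    · exact absurd (ht a' ha').1 (dp a ha a' ha' e _ hv)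
  have pK : ∀ a ∈ I, p a ⊆ K := fun a ha =>
    (hp a ha).2.1.sub (hp a ha).1 (hAK (hI ha)) (fun u v h => h.2.1)
  have qK : ∀ s ∈ insert y Q, ∀ v ∈ q s, v ∈ K → v = s ∧ s ∈ Q := by
    intro s hs v hv hvK
    have hvQ : v ∈ Q := by
      by_cases e : v = s
      · subst e
        rcases hs with rfl | hs
        · exact absurd hvK hy
        · exact hs
      · have c := (hq s hs).2.1
        obtain ⟨u, hu, w, hw, huw⟩ := c.2 {v} (by grind) ⟨v, rfl⟩ ⟨s, (hq s hs).1, by grind⟩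
        obtain rfl : u = v := hu
        exact ⟨hvK, Or.inr ⟨w, fun h => huw.2 ⟨hvK, h⟩, huw.1⟩⟩
    have : v = s := by
      by_contra e
      exact dq v (Or.inr hvQ) s hs e v (hq v (Or.inr hvQ)).1 hv
    exact ⟨this, this ▸ hvQ⟩
  set σ : V → V := fun v => if v = x then y else v with hσ
  have σm : ∀ v ∈ insert x Q, σ v ∈ insert y Q := by
    intro v hv
    by_cases e : v = x
    · simp [hσ, e]
    · simp only [hσ, e, if_false]; exact Or.inr (by grind)
  have tm : ∀ a ∈ I, t a ∈ insert x Q := fun a ha => sepQ (ht a ha).2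
  have σinj : ∀ u ∈ insert x Q, ∀ v ∈ insert x Q, σ u = σ v → u = v := by
    intro u hu v hv e
    have mK : ∀ w ∈ insert x Q, w ∈ K := by
      rintro w (rfl | hw)
      · exact hx
      · exact hQK hw
    have := mK u hu
    have := mK v hv
    simp only [hσ] at e
    grind
  refine ⟨I, fun a => p a ∪ q (σ (t a)), hI, cI, ?_, ?_⟩
  · intro a ha
    obtain ⟨e1, e2, e3⟩ := hp a ha
    obtain ⟨f1, f2, f3⟩ := hq _ (σm _ (tm a ha))
    have g2 : Conn G (q (σ (t a))) := f2.le fun u v h => h.1.1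
    have g1 : Conn G (p a) := e2.le fun u v h => h.1
    refine ⟨Or.inl e1, ?_, ?_⟩
    · by_cases e : t a = x
      · have e' : σ (t a) = y := by simp [hσ, e]
        refine g1.union g2 ⟨t a, (ht a ha).1, y, ?_, e ▸ hxy⟩
        rw [e'] at f1 ⊢; exact f1
      · have e' : σ (t a) = t a := by simp [hσ, e]
        refine g1.union' g2 ⟨t a, (ht a ha).1, ?_⟩
        rw [e'] at f1 ⊢; exact f1
    · obtain ⟨b, hb, hb'⟩ := f3
      exact ⟨b, Or.inr hb, hb'⟩
  · intro a ha a' ha' hne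
    have key : ∀ a ∈ I, ∀ a' ∈ I, a ≠ a' → Dj (p a) (q (σ (t a'))) := by
      intro a ha a' ha' hne v hv hv'
      obtain ⟨r1, r2⟩ := qK _ (σm _ (tm a' ha')) v hv' (pK a ha hv)
      have r3 : v = t a := psep a ha v hv (Or.inr (r1 ▸ r2))
      have r4 : t a' ≠ x := by
        intro e
        have : σ (t a') = y := by simp [hσ, e]
        exact hyQ (this ▸ r2)
      have r5 : σ (t a') = t a' := by simp [hσ, r4]
      exact hne (tinj ha ha' (by rw [← r3, r1, r5]))
    have k1 := key a ha a' ha' hne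
    have k2 := key a' ha' a ha (Ne.symm hne)
    have k3 := dp a ha a' ha' hne
    have k4 : Dj (q (σ (t a))) (q (σ (t a'))) := by
      refine dq _ (σm _ (tm a ha)) _ (σm _ (tm a' ha')) ?_
      intro e
      exact hne (tinj ha ha' (σinj _ (tm a ha) _ (tm a' ha') e))
    clear * - k1 k2 k3 k4
    grind

theorem menger_aux [Finite V] (n : ℕ) : ∀ (G : SimpleGraph V), (eset G).ncard = n → ∀ (A B : Set V) (k : ℕ),
    (∀ K, A ⊆ K → k ≤ (sep G B K).ncard) → Lk G A B k := by
  induction n using Nat.strong_induction_on with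
  | _ n ih =>
  intro G hn A B k hk
  by_cases hE : ∃ x y, G.Adj x y
  swap
  · have h := hk A subset_rfl
    obtain ⟨I, hI, hI'⟩ := Set.exists_subset_card_eq h
    have hI2 : ∀ v ∈ I, v ∈ A ∧ v ∈ B := by
      intro v hv
      obtain ⟨h1, h2 | ⟨w, -, h2⟩⟩ := hI hv
      · exact ⟨h1, h2⟩
      · exact absurd ⟨v, w, h2⟩ hE
    exact ⟨I, fun a => {a}, fun v hv => (hI2 v hv).1, hI', fun a ha => ⟨rfl, conn_singleton a, a, rfl, (hI2 a ha).2⟩,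
      fun a _ a' _ hne => by grind⟩
  obtain ⟨x0, y0, hxy0⟩ := hE
  by_cases hg : ∀ K, A ⊆ K → k ≤ (sep (delE G x0 y0) B K).ncard
  · obtain ⟨I, g, h1, h2, h3, h4⟩ := ih _ (hn ▸ eset_lt (H := delE G x0 y0) (fun x y h => h.1) hxy0
      (fun h => h.2.1 ⟨rfl, rfl⟩)) _ rfl A B k hg
    exact ⟨I, g, h1, h2, fun a ha => ⟨(h3 a ha).1, (h3 a ha).2.1.le fun x y h => h.1, (h3 a ha).2.2⟩, h4⟩
  push Not at hg
  obtain ⟨K, hAK, hK⟩ := hg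
  have : ∃ x y, G.Adj x y ∧ x ∈ K ∧ y ∉ K ∧ (sep (delE G x y) B K).ncard < k := by
    by_cases h1 : x0 ∈ K ∧ y0 ∉ K
    · exact ⟨x0, y0, hxy0, h1.1, h1.2, hK⟩
    by_cases h2 : y0 ∈ K ∧ x0 ∉ K
    · refine ⟨y0, x0, hxy0.symm, h2.1, h2.2, ?_⟩
      have : delE G y0 x0 = delE G x0 y0 := by ext u v; simp only [delE]; tauto
      rwa [this]
    exfalso
    have : sep G B K ⊆ sep (delE G x0 y0) B K := by
      rintro v ⟨hv, hv'⟩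
      refine ⟨hv, hv'.imp id ?_⟩
      rintro ⟨w, hw, hvw⟩
      exact ⟨w, hw, hvw, by rintro ⟨rfl, rfl⟩; tauto, by rintro ⟨rfl, rfl⟩; tauto⟩
    have := Set.ncard_le_ncard this (Set.toFinite _)
    have := hk K hAK
    omega
  obtain ⟨x, y, hxy, hx, hy, hK⟩ := this
  refine menger_glue hAK hxy hx hy hK ?_ ?_
  · refine ih _ (hn ▸ eset_lt (fun x y h => h.1) hxy (fun h => hy h.2.2)) _ rfl _ _ _ ?_
    intro J hJ
    refine (hk (J ∩ K) (by grind)).trans (Set.ncard_le_ncard ?_ (Set.toFinite _))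
    rintro v ⟨⟨hvJ, hvK⟩, hv⟩
    refine ⟨hvJ, ?_⟩
    rcases hv with hv | ⟨w, hw, hvw⟩
    · exact Or.inl ⟨hvK, Or.inl hv⟩
    · by_cases hwK : w ∈ K
      · exact Or.inr ⟨w, fun h => hw ⟨h, hwK⟩, hvw, hvK, hwK⟩
      · exact Or.inl ⟨hvK, Or.inr ⟨w, hwK, hvw⟩⟩
  · refine ih _ (hn ▸ eset_lt (fun x y h => h.1.1) hxy (fun h => h.1.2.1 ⟨rfl, rfl⟩)) _ rfl _ _ _ ?_
    intro J hJ
    refine (hk (J ∪ K) (by grind)).trans (Set.ncard_le_ncard ?_ (Set.toFinite _))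
    have hyJ : y ∈ J := hJ (Or.inl rfl)
    rintro v ⟨hvJK, hv⟩
    have hvJ : v ∈ J := by
      by_contra hvJ
      have hvK : v ∈ K := by grind
      refine hvJ (hJ (Or.inr ⟨hvK, hv.imp id ?_⟩))
      rintro ⟨w, hw, hvw⟩
      exact ⟨w, by grind, hvw, by rintro ⟨rfl, rfl⟩; grind, by rintro ⟨rfl, rfl⟩; grind⟩
    refine ⟨hvJ, hv.imp id ?_⟩
    rintro ⟨w, hw, hvw⟩
    exact ⟨w, by grind, ⟨hvw, by rintro ⟨rfl, rfl⟩; grind, by rintro ⟨rfl, rfl⟩; grind⟩, by grind⟩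

theorem menger [Finite V] (G : SimpleGraph V) (A B : Set V) (k : ℕ)
    (h : ∀ K, A ⊆ K → k ≤ (sep G B K).ncard) : Lk G A B k := menger_aux _ G rfl A B k h

end menger
end PQ


namespace PQ

section
variable {W : Type} {Q : SimpleGraph W}

theorem no_k23 (h : ¬ IsMinor K23 Q) {a1 a2 b1 b2 b3 : Set W} (c1 : Conn Q a1) (c2 : Conn Q a2)
    (d1 : Conn Q b1) (d2 : Conn Q b2) (d3 : Conn Q b3) (e : Dj a1 a2)
    (e1 : Dj b1 b2 ∧ Dj b1 b3 ∧ Dj b2 b3) (e2 : Dj a1 b1 ∧ Dj a1 b2 ∧ Dj a1 b3)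
    (e3 : Dj a2 b1 ∧ Dj a2 b2 ∧ Dj a2 b3)
    (t1 : Tch Q b1 a1 ∧ Tch Q b2 a1 ∧ Tch Q b3 a1) (t2 : Tch Q b1 a2 ∧ Tch Q b2 a2 ∧ Tch Q b3 a2) :
    False := by
  apply h
  obtain ⟨s1, s2, s3⟩ := t1
  obtain ⟨r1, r2, r3⟩ := t2
  have s1' := s1.symm
  have s2' := s2.symm
  have s3' := s3.symm
  have r1' := r1.symm
  have r2' := r2.symm
  have r3' := r3.symm
  refine isMinor_of (Sum.elim ![a1, a2] ![b1, b2, b3]) ?_ ?_ ?_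
  · rintro (i | i) <;> fin_cases i <;> assumption
  · rintro (i | i) (j | j) <;> fin_cases i <;> fin_cases j <;> intro hne <;> simp at hne ⊢ <;> grind
  · rintro (i | i) (j | j) <;> fin_cases i <;> fin_cases j <;> simp [K23] <;> assumption

theorem no_k4 (h : ¬ IsMinor K4 Q) {a b c d : Set W} (c1 : Conn Q a) (c2 : Conn Q b)
    (c3 : Conn Q c) (c4 : Conn Q d) (e1 : Dj a b ∧ Dj a c ∧ Dj a d ∧ Dj b c ∧ Dj b d ∧ Dj c d)
    (t1 : Tch Q a b) (t2 : Tch Q a c) (t3 : Tch Q a d) (t4 : Tch Q b c) (t5 : Tch Q b d)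
    (t6 : Tch Q c d) : False := by
  apply h
  have s1 := t1.symm
  have s2 := t2.symm
  have s3 := t3.symm
  have s4 := t4.symm
  have s5 := t5.symm
  have s6 := t6.symm
  refine isMinor_of ![a, b, c, d] ?_ ?_ ?_
  · intro i; fin_cases i <;> assumption
  · intro i j; fin_cases i <;> fin_cases j <;> intro hne <;> simp at hne ⊢ <;> grind
  · intro i j; fin_cases i <;> fin_cases j <;> simp [K4] <;> assumption

/-- extraction statement for the part `A` attached at `s`, `t` -/
def HE (Q : SimpleGraph W) (A : Set W) (s t : W) : Prop :=
  ∃ n, ∀ (V : Type) (G : SimpleGraph V) (S T U : Set V), Conn G S → Conn G T → Dj S T → Dj S U →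
    Dj T U → Tch G S T → QS G n S T U → ∃ f : W → Set V, S ⊆ f s ∧ T ⊆ f t ∧
      (∀ u, u ∈ A ∨ u = s ∨ u = t → f u ⊆ S ∪ T ∪ U ∧ Conn G (f u)) ∧
      (∀ u u', (u ∈ A ∨ u = s ∨ u = t) → (u' ∈ A ∨ u' = s ∨ u' = t) → u ≠ u' → Dj (f u) (f u')) ∧
      (∀ u u', u ∈ A → (u' ∈ A ∨ u' = s ∨ u' = t) → Q.Adj u u' → Tch G (f u) (f u'))

theorem HE.empty (s t : W) : HE Q ∅ s t := by
  classical
  refine ⟨0, fun V G S T U cS cT d1 d2 d3 tt _ => ?_⟩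
  by_cases h : s = t
  · subst h
    exact ⟨fun _ => S ∪ T, by grind, by grind, fun u hu => ⟨by grind, cS.union cT tt⟩,
      fun u u' hu hu' hne => by grind, fun u u' hu => by grind⟩
  · have h' : t ≠ s := Ne.symm h
    refine ⟨fun u => if u = s then S else T, by simp, by simp [h'], ?_, ?_, fun u u' hu => by grind⟩
    · rintro u (hu | rfl | rfl)
      · grind
      · simp [cS]; grind
      · simp [h', cT]; grind
    · have := d1.symm
      rintro u u' (hu | rfl | rfl) (hu' | rfl | rfl) hne
      all_goals first | grind | (simp [h']; assumption)

set_option maxHeartbeats 1000000 in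
theorem HE.glue {L R : Set W} {s w t : W} (h1 : HE Q L s w) (h2 : HE Q R w t)
    (nL : ∀ x y, Q.Adj x y → x ∈ L → y ∈ L ∨ y = s ∨ y = w)
    (nR : ∀ x y, Q.Adj x y → x ∈ R → y ∈ R ∨ y = w ∨ y = t)
    (hL : s ∉ L ∧ w ∉ L ∧ t ∉ L) (hR : s ∉ R ∧ w ∉ R ∧ t ∉ R) (d : Dj L R)
    {A : Set W} (hA : ∀ u, u ∈ A ↔ u ∈ L ∨ u ∈ R ∨ (u = w ∧ u ≠ s ∧ u ≠ t)) : HE Q A s t := by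
  obtain ⟨n1, h1⟩ := h1
  obtain ⟨n2, h2⟩ := h2
  refine ⟨max n1 n2 + 1, fun V G S T U cS cT d1 d2 d3 tt q => ?_⟩
  obtain ⟨S', T', M, U1, U2, ⟨a1, a2, a3⟩, ⟨b1, b2, b3⟩, i1, i2, i3,
    ⟨e1, e2, e3, e4, e5, e6, e7, e8, e9, e10⟩, cM, tS, tT, q1, q2⟩ := q
  obtain ⟨f, f1, f2, f3, f4, f5⟩ := h1 V G S' M U1 a3 cM e2 e3 e8 tS.symm (q1.mono (by omega))
  obtain ⟨g, g1, g2, g3, g4, g5⟩ := h2 V G M T' U2 cM b3 e5.symm e9 e7 tT (q2.mono (by omega))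
  have key : ∀ u u' x, (u ∈ L ∨ u = s ∨ u = w) → (u' ∈ R ∨ u' = w ∨ u' = t) → u ≠ u' →
      x ∈ f u → x ∉ g u' := by
    intro u u' x hu hu' hne hx hx'
    have k1 := (f3 u hu).1 hx
    have k2 := (g3 u' hu').1 hx'
    have k3 : x ∈ M := by clear * - k1 k2 e1 e2 e3 e4 e5 e6 e7 e8 e9 e10; grind
    have k4 : u = w := by
      by_contra hh
      exact f4 u w hu (by simp) hh x hx (f2 k3)
    have k5 : u' = w := by
      by_contra hh
      exact g4 u' w hu' (by simp) hh x hx' (g1 k3)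
    exact hne (k4.trans k5.symm)
  set F : W → Set V := fun u => {x | ((u ∈ L ∨ u = s ∨ u = w) ∧ x ∈ f u) ∨ ((u ∈ R ∨ u = w ∨ u = t) ∧ x ∈ g u)} with hF
  have mF : ∀ u x, x ∈ F u ↔ ((u ∈ L ∨ u = s ∨ u = w) ∧ x ∈ f u) ∨ ((u ∈ R ∨ u = w ∨ u = t) ∧ x ∈ g u) :=
    fun u x => Iff.rfl
  have F1 : ∀ u, (u ∈ L ∨ u = s ∨ u = w) → f u ⊆ F u := fun u hu x hx => Or.inl ⟨hu, hx⟩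
  have F2 : ∀ u, (u ∈ R ∨ u = w ∨ u = t) → g u ⊆ F u := fun u hu x hx => Or.inr ⟨hu, hx⟩
  clear_value F
  have cases : ∀ u, (u ∈ A ∨ u = s ∨ u = t) → (u ∈ L ∨ u = s ∨ u = w) ∨ (u ∈ R ∨ u = w ∨ u = t) := by
    intro u hu
    rw [hA] at hu
    clear * - hu
    tauto
  refine ⟨F, ?_, ?_, ?_, ?_, ?_⟩
  · exact fun x hx => F1 s (by simp) (f1 (a1 hx))
  · exact fun x hx => F2 t (by simp) (g2 (b1 hx))
  · intro u hu
    constructor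
    · intro x hx
      rcases (mF _ _).1 hx with ⟨hu', hx⟩ | ⟨hu', hx⟩
      · have := (f3 u hu').1 hx
        clear * - this a2 b2 i1 i2 i3
        grind
      · have := (g3 u hu').1 hx
        clear * - this a2 b2 i1 i2 i3
        grind
    · by_cases p1 : u ∈ L ∨ u = s ∨ u = w
      · by_cases p2 : u ∈ R ∨ u = w ∨ u = t
        · have eF : F u = f u ∪ g u := Set.ext fun x => by rw [mF]; simp only [Set.mem_union, p1, p2, true_and]
          rw [eF]
          by_cases huw : u = w
          · subst huw
            obtain ⟨m, hm⟩ := cM.1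
            exact (f3 u p1).2.union' (g3 u p2).2 ⟨m, f2 hm, g1 hm⟩
          · have hus : u = s ∧ u = t := by
              obtain ⟨l1, l2, l3⟩ := hL
              obtain ⟨r1, r2, r3⟩ := hR
              have := d u
              clear * - p1 p2 l1 l2 l3 r1 r2 r3 huw this
              grind
            obtain ⟨rfl, rfl⟩ := hus
            exact (f3 u p1).2.union (g3 u p2).2 (tt.mono (a1.trans f1) (b1.trans g2))
        · have eF : F u = f u := Set.ext fun x => by rw [mF]; simp only [p1, p2, true_and, false_and, or_false]
          rw [eF]; exact (f3 u p1).2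
      · have p2 : u ∈ R ∨ u = w ∨ u = t := by exact (cases u hu).resolve_left p1
        have eF : F u = g u := Set.ext fun x => by rw [mF]; simp only [p1, p2, true_and, false_and, false_or]
        rw [eF]; exact (g3 u p2).2
  · intro u u' hu hu' hne x hx hx'
    rcases (mF _ _).1 hx with ⟨p, hx⟩ | ⟨p, hx⟩
    · rcases (mF _ _).1 hx' with ⟨p', hx'⟩ | ⟨p', hx'⟩
      · exact f4 u u' p p' hne x hx hx'
      · exact key u u' x p p' hne hx hx'
    · rcases (mF _ _).1 hx' with ⟨p', hx'⟩ | ⟨p', hx'⟩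
      · exact key u' u x p' p (Ne.symm hne) hx' hx
      · exact g4 u u' p p' hne x hx hx'
  · have main : ∀ u u', (u ∈ L ∨ u ∈ R) → Q.Adj u u' → Tch G (F u) (F u') := by
      rintro u u' (hu | hu) hadj
      · exact (f5 u u' hu (nL u u' hadj hu) hadj).mono (F1 u (Or.inl hu)) (F1 u' (nL u u' hadj hu))
      · exact (g5 u u' hu (nR u u' hadj hu) hadj).mono (F2 u (Or.inl hu)) (F2 u' (nR u u' hadj hu))
    intro u u' hu hu' hadj
    by_cases hu1 : u ∈ L ∨ u ∈ R
    · exact main u u' hu1 hadj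
    by_cases hu1' : u' ∈ L ∨ u' ∈ R
    · exact (main u' u hu1' hadj.symm).symm
    obtain ⟨rfl, h8, h9⟩ : u = w ∧ u ≠ s ∧ u ≠ t := by
      have := (hA u).1 hu; clear * - this hu1; tauto
    have : u' = s ∨ u' = t := by
      rw [hA] at hu'
      have := hadj.ne
      clear * - hu' hu1' this
      grind
    rcases this with rfl | rfl
    · exact tS.mono (f2.trans (F1 u (by simp))) (f1.trans (F1 _ (by simp)))
    · exact tT.mono (f2.trans (F1 u (by simp))) (g2.trans (F2 _ (by simp)))

end
end PQ


namespace PQ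

section
variable {W : Type} {Q : SimpleGraph W}

def Thin (Q : SimpleGraph W) (A : Set W) (s t : W) : Prop :=
  ∀ P1 P2, P1 ⊆ A → P2 ⊆ A → Conn Q P1 → Conn Q P2 → Dj P1 P2 → Tch Q P1 {s} → Tch Q P1 {t} →
    Tch Q P2 {s} → Tch Q P2 {t} → False

def EE (Q : SimpleGraph W) (A : Set W) (s t : W) : Prop :=
  Q.Adj s t ∨ ∃ Z, Conn Q Z ∧ Dj A Z ∧ s ∉ Z ∧ t ∉ Z ∧ Tch Q Z {s} ∧ Tch Q Z {t}

theorem EE.symm {A : Set W} {s t : W} (h : EE Q A s t) : EE Q A t s := by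
  rcases h with h | ⟨Z, h1, h2, h3, h4, h5, h6⟩
  · exact Or.inl h.symm
  · exact Or.inr ⟨Z, h1, h2, h4, h3, h6, h5⟩

theorem EE.mono {A B : Set W} {s t : W} (h : EE Q A s t) (hB : B ⊆ A) : EE Q B s t := by
  rcases h with h | ⟨Z, h1, h2, h3⟩
  · exact Or.inl h
  · exact Or.inr ⟨Z, h1, fun x hx => h2 x (hB hx), h3⟩

theorem Thin.mono {A B : Set W} {s t : W} (h : Thin Q A s t) (hB : B ⊆ A) : Thin Q B s t :=
  fun P1 P2 h1 h2 => h P1 P2 (h1.trans hB) (h2.trans hB)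

theorem EE.zt {A : Set W} {s t : W} (h : EE Q A s t) (hst : s ≠ t) (htA : t ∉ A) :
    ∃ Z, Conn Q Z ∧ t ∈ Z ∧ s ∉ Z ∧ Dj A Z ∧ Tch Q Z {s} := by
  rcases h with h | ⟨Z, h1, h2, h3, h4, h5, h6⟩
  · exact ⟨{t}, conn_singleton t, rfl, hst, fun x hx hx' => htA (by cases hx'; exact hx),
      t, rfl, s, rfl, h.symm⟩
  · exact ⟨Z ∪ {t}, h1.union (conn_singleton t) h6, Or.inr rfl, by grind, by grind,
      h5.mono (by grind) (by grind)⟩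

theorem cutside [Finite W] {A L R : Set W} {s t w : W} (cA : Conn Q A)
    (hA : ∀ u, u ∈ A ↔ u ∈ L ∨ u ∈ R ∨ u = w) (dLR : Dj L R) (hwL : w ∉ L) (hwR : w ∉ R)
    (hst : s ≠ t) (hs : s ∉ A) (ht : t ∉ A)
    (nL : ∀ x y, Q.Adj x y → x ∈ L → y ∈ L ∨ y = s ∨ y = w)
    (nR : ∀ x y, Q.Adj x y → x ∈ R → y ∈ R ∨ y = w ∨ y = t)
    (tA : Tch Q A {t}) (e : EE Q A s t) :
    ∃ Z, Conn Q Z ∧ Dj L Z ∧ s ∉ Z ∧ w ∉ Z ∧ Tch Q Z {s} ∧ Tch Q Z {w} := by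
  obtain ⟨Z, cZ, tZ, sZ, dZ, tsZ⟩ := e.zt hst ht
  obtain ⟨C, hC, tC, cC, nC⟩ := exists_comp_pt (G := Q) (y := t) (Y := R ∪ {t}) (by grind)
  have hwC : w ∉ C := by intro h; have := hC h; grind
  have hsub : C ⊆ A ∪ {t} := by intro x hx; have := hC hx; grind
  have : Tch Q C ((A ∪ {t}) \ C) := (cA.union (conn_singleton t) tA).2 C hsub ⟨t, tC⟩
    ⟨w, by grind, hwC⟩
  obtain ⟨x, hx, y, ⟨hy, hyC⟩, hxy⟩ := this
  have hnC : y ∉ R ∪ {t} := fun hh => nC ⟨x, hx, y, ⟨hh, hyC⟩, hxy⟩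
  have hyw : y = w := by
    have h1 := nL y x hxy.symm
    have h2 := nR x y hxy
    have h3 := hC hx
    have h4 := hA y
    have h5 := hA x
    have h6 := dLR x
    have h7 := dLR y
    have h8 := hA t
    clear * - h1 h2 h3 h4 h5 h6 h7 h8 hnC hst hs ht hy hwC hx
    grind
  subst hyw
  refine ⟨C ∪ Z, cC.union' cZ ⟨t, tC, tZ⟩, ?_, ?_, ?_, tsZ.mono (by grind) (by grind),
    x, Or.inl hx, y, rfl, hxy⟩
  · intro u hu
    have h1 := (hA u).2 (Or.inl hu)
    have h2 := @hC u
    have h3 := dZ u h1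
    have h4 := dLR u hu
    clear * - h1 h2 h3 h4 ht
    grind
  · have h2 := @hC s
    have h1 := hA s
    clear * - h1 h2 sZ hs hst
    grind
  · have h1 := dZ y ((hA y).2 (by simp))
    clear * - h1 hwC
    grind

def OneH (Q : SimpleGraph W) (A : Set W) (s : W) : Prop :=
  s ∉ A → (∀ x y, Q.Adj x y → x ∈ A → y ∈ A ∨ y = s) → HE Q A s s

def MH (Q : SimpleGraph W) (A : Set W) (s t : W) : Prop :=
  s ≠ t → s ∉ A → t ∉ A → (∀ x y, Q.Adj x y → x ∈ A → y ∈ A ∨ y = s ∨ y = t) → EE Q A s t →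
    Thin Q A s t → HE Q A s t

theorem ncard_lt [Finite W] {A B : Set W} (h : B ⊆ A) {x : W} (hx : x ∈ A) (hxB : x ∉ B) :
    B.ncard < A.ncard :=
  Set.ncard_lt_ncard ⟨h, fun hh => hxB (hh hx)⟩ (Set.toFinite A)

theorem HE.cast {A B : Set W} {s t : W} (h : HE Q A s t) (hAB : ∀ x, x ∈ A ↔ x ∈ B) : HE Q B s t := by
  have : A = B := Set.ext hAB
  exact this ▸ h

theorem nT_pt {K Y : Set W} (h : ¬ Tch Q K (Y \ K)) :
    ∀ x y, Q.Adj x y → x ∈ K → y ∈ Y → y ∈ K := by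
  intro x y hxy hx hy
  by_contra hh
  exact h ⟨x, hx, y, ⟨hy, hh⟩, hxy⟩

theorem one_step [Finite W] (k4 : ¬ IsMinor K4 Q) (k23 : ¬ IsMinor K23 Q) {A : Set W} {s : W}
    (IH : ∀ B : Set W, B.ncard < A.ncard → (∀ s, OneH Q B s) ∧ ∀ s t, MH Q B s t) : OneH Q A s := by
  intro hs nA
  by_cases hne : ∃ a, a ∈ A
  swap
  · exact (HE.empty s s).cast (by grind)
  obtain ⟨a, ha⟩ := hne
  obtain ⟨X, hX, haX, cX, qX⟩ := exists_comp_pt (G := Q) ha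
  have qX' := nT_pt qX
  by_cases hXA : ∃ b ∈ A, b ∉ X
  · obtain ⟨b, hb, hbX⟩ := hXA
    have nX : ∀ x y, Q.Adj x y → x ∈ X → y ∈ X ∨ y = s := by
      intro x y hxy hx; have := nA x y hxy (hX hx); have := qX' x y hxy hx; grind
    have nX' : ∀ x y, Q.Adj x y → x ∈ A \ X → y ∈ A \ X ∨ y = s := by
      intro x y hxy hx; have := nA x y hxy hx.1; have := qX' y x hxy.symm; grind
    have h1 := (IH X (ncard_lt hX hb hbX)).1 s (by grind) nX
    have h2 := (IH (A \ X) (ncard_lt (by grind) ha (by grind))).1 s (by grind) nX'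
    refine HE.glue h1 h2 (fun x y h h' => by have := nX x y h h'; tauto)
      (fun x y h h' => by have := nX' x y h h'; tauto) (by grind) (by grind) (by grind) ?_
    intro u
    have := @hX u
    grind
  have hXA' : X = A := by
    apply Set.Subset.antisymm hX; intro x hx; by_contra hh; exact hXA ⟨x, hx, hh⟩
  subst hXA'
  clear qX qX' haX hX hXA
  by_cases hc : ∃ w ∈ X, ¬ Tch Q (X \ {w}) {s}
  · obtain ⟨w, hw, hn⟩ := hc
    have nX : ∀ x y, Q.Adj x y → x ∈ X \ {w} → y ∈ X \ {w} ∨ y = w := by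
      intro x y hxy hx
      have h1 := nA x y hxy hx.1
      have h2 : y ≠ s := by rintro rfl; exact hn ⟨x, hx, y, rfl, hxy⟩
      grind
    have h1 := (IH (X \ {w}) (ncard_lt (by grind) hw (by grind))).1 w (by grind) nX
    have h2 : HE Q (X \ {w}) w s := by
      refine HE.glue h1 (HE.empty w s) (fun x y h h' => by have := nX x y h h'; tauto)
        (by grind) (by grind) (by grind) (by grind) (by grind)
    refine HE.glue (HE.empty s w) h2 (by grind) (fun x y h h' => by have := nX x y h h'; tauto)
      (by grind) (by grind) (by grind) (by grind)
  have hc' : ∀ w ∈ X, Tch Q (X \ {w}) {s} := by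
    intro w hw; by_contra hh; exact hc ⟨w, hw, hh⟩
  obtain ⟨w, hw, s', rfl, hws⟩ := hc' a ha
  replace hw := hw.1
  obtain ⟨x, hx, s'', rfl, hxs⟩ := hc' w hw
  obtain ⟨Y, hY, hxY, cY, qY⟩ := exists_comp_pt (G := Q) hx
  have qY' := nT_pt qY
  have hwY : w ∉ Y := by intro h; have := hY h; grind
  have hYX : Y ⊆ X := by intro z hz; exact (hY hz).1
  have tYw : Tch Q Y {w} := by
    obtain ⟨p, hp, q, hq, hpq⟩ := cX.2 Y hYX ⟨x, hxY⟩ ⟨w, hw, hwY⟩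
    have : q = w := by
      by_contra hh
      exact hq.2 (qY' p q hpq hp ⟨hq.1, hh⟩)
    exact ⟨p, hp, q, this, hpq⟩
  have tYs : Tch Q Y {s''} := ⟨x, hxY, s'', rfl, hxs⟩
  have hsw : s'' ≠ w := hws.ne'
  have nY : ∀ x y, Q.Adj x y → x ∈ Y → y ∈ Y ∨ y = s'' ∨ y = w := by
    intro x y hxy hx; have := nA x y hxy (hYX hx); have := qY' x y hxy hx; grind
  have nR : ∀ x y, Q.Adj x y → x ∈ (X \ {w}) \ Y → y ∈ (X \ {w}) \ Y ∨ y = w ∨ y = s'' := by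
    intro x y hxy hx; have := nA x y hxy hx.1.1; have := qY' y x hxy.symm; grind
  have h1 : HE Q Y s'' w := by
    refine (IH Y (ncard_lt hYX hw hwY)).2 s'' w hsw (by grind) hwY nY (Or.inl hws.symm) ?_
    intro P1 P2 p1 p2 c1 c2 d t1 t2 t3 t4
    obtain ⟨P3, hP3, h13, c3, q3⟩ := exists_comp (G := Q) (Y := Y \ P2) c1 (by grind)
    obtain ⟨z, hz⟩ := c2.1
    obtain ⟨p, hp, q, hq, hpq⟩ := cY.2 P3 (by grind) c3.1 ⟨z, p2 hz, fun h => (hP3 h).2 hz⟩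
    have hqP : q ∈ P2 := by
      by_contra hh
      exact q3 ⟨p, hp, q, ⟨⟨hq.1, hh⟩, hq.2⟩, hpq⟩
    have hsY : s'' ∉ Y := fun h => hs (hYX h)
    refine no_k4 k4 c3 c2 (conn_singleton s'') (conn_singleton w) ?_ ⟨p, hp, q, hqP, hpq⟩
      (t1.mono h13 (by rfl)) (t2.mono h13 (by rfl)) t3 t4 ⟨s'', rfl, w, rfl, hws.symm⟩
    clear * - hP3 hsY hwY p2 hsw
    refine ⟨?_, ?_, ?_, ?_, ?_, ?_⟩ <;> intro z hz hz' <;> have := @hP3 z <;> have := @p2 z <;> grind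
  have h2 : HE Q ((X \ {w}) \ Y) w s'' := by
    refine (IH ((X \ {w}) \ Y) (ncard_lt (by grind) hw (by grind))).2 w s'' hsw.symm (by grind)
      (by grind) nR (Or.inl hws) ?_
    intro P1 P2 p1 p2 c1 c2 d t1 t2 t3 t4
    have hsY : s'' ∉ Y := fun h => hs (hYX h)
    refine no_k23 k23 (conn_singleton w) (conn_singleton s'') c1 c2 cY ?_ ?_ ?_ ?_
      ⟨t1, t3, tYw⟩ ⟨t2, t4, tYs⟩
    all_goals clear * - hsY hwY p1 p2 hsw hs d
    · grind
    · refine ⟨d, ?_, ?_⟩ <;> intro z hz hz' <;> have := @p1 z <;> have := @p2 z <;> grind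
    · refine ⟨?_, ?_, ?_⟩ <;> intro z hz hz' <;> have := @p1 z <;> have := @p2 z <;> grind
    · refine ⟨?_, ?_, ?_⟩ <;> intro z hz hz' <;> have := @p1 z <;> have := @p2 z <;> grind
  refine HE.glue h1 h2 nY nR (by grind) (by grind) (by grind) ?_
  intro u
  have := @hYX u
  grind

theorem m_step [Finite W] (k4 : ¬ IsMinor K4 Q) (k23 : ¬ IsMinor K23 Q) {A : Set W} {s t : W}
    (IH : ∀ B : Set W, B.ncard < A.ncard → ∀ s t, MH Q B s t)
    (IH' : ∀ B : Set W, B.ncard ≤ A.ncard → ∀ s, OneH Q B s) : MH Q A s t := by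
  intro hst hs ht nA e th
  by_cases hne : ∃ a, a ∈ A
  swap
  · exact (HE.empty s t).cast (by grind)
  obtain ⟨a, ha⟩ := hne
  by_cases h1 : ∃ X, X ⊆ A ∧ Conn Q X ∧ ¬ Tch Q X (A \ X) ∧ ¬ (Tch Q X {s} ∧ Tch Q X {t})
  · obtain ⟨X, hX, cX, qX, hn⟩ := h1
    have qX' := nT_pt qX
    obtain ⟨b, hb⟩ := cX.1
    have nX' : ∀ x y, Q.Adj x y → x ∈ A \ X → y ∈ A \ X ∨ y = s ∨ y = t := by
      intro x y hxy hx; have := nA x y hxy hx.1; have := qX' y x hxy.symm; grind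
    have g2 := IH (A \ X) (ncard_lt (by grind) (hX hb) (by grind)) s t hst (by grind) (by grind) nX'
      (e.mono (by grind)) (th.mono (by grind))
    have hle := Set.ncard_le_ncard hX
    by_cases hs' : Tch Q X {s}
    · have ht' : ¬ Tch Q X {t} := fun h => hn ⟨hs', h⟩
      have nX : ∀ x y, Q.Adj x y → x ∈ X → y ∈ X ∨ y = s := by
        intro x y hxy hx
        have h2 : y ≠ t := by rintro rfl; exact ht' ⟨x, hx, y, rfl, hxy⟩
        have := nA x y hxy (hX hx); have := qX' x y hxy hx; grind
      refine HE.glue (IH' X hle s (by grind) nX) g2 (fun x y h h' => by have := nX x y h h'; tauto)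
        nX' (by grind) (by grind) (by grind) (fun u => ?_)
      have := @hX u
      grind
    · have nX : ∀ x y, Q.Adj x y → x ∈ X → y ∈ X ∨ y = t := by
        intro x y hxy hx
        have h2 : y ≠ s := by rintro rfl; exact hs' ⟨x, hx, y, rfl, hxy⟩
        have := nA x y hxy (hX hx); have := qX' x y hxy hx; grind
      refine HE.glue g2 (IH' X hle t (by grind) nX) nX' (fun x y h h' => by have := nX x y h h'; tauto)
        (by grind) (by grind) (by grind) (fun u => ?_)
      have := @hX u
      grind
  have hT : ∀ X, X ⊆ A → Conn Q X → ¬ Tch Q X (A \ X) → Tch Q X {s} ∧ Tch Q X {t} := by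
    intro X h2 h3 h4; by_contra hh; exact h1 ⟨X, h2, h3, h4, hh⟩
  clear h1
  obtain ⟨X, hX, haX, cX, qX⟩ := exists_comp_pt (G := Q) ha
  have hXA' : X = A := by
    apply Set.Subset.antisymm hX; intro x hx; by_contra hh
    obtain ⟨Y, hY, hxY, cY, qY⟩ := exists_comp_pt (G := Q) hx
    obtain ⟨t1, t2⟩ := hT X hX cX qX
    obtain ⟨t3, t4⟩ := hT Y hY cY qY
    refine th X Y hX hY cX cY ?_ t1 t2 t3 t4
    intro z hz hz'
    exact hh (comp_disj hX hY cY qX ⟨z, hz, hz'⟩ hxY)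
  subst hXA'
  obtain ⟨t1, t2⟩ := hT X hX cX qX
  clear qX haX hX hT
  set A0 : Set W := {x | x ∈ X ∧ Q.Adj x s} with hA0
  set B0 : Set W := {x | x ∈ X ∧ Q.Adj x t} with hB0
  by_cases hM : ∀ K, A0 ⊆ K → 2 ≤ (sep (resIn Q X) B0 K).ncard
  · exfalso
    obtain ⟨I, g, hI, hI2, hg, hd⟩ := menger (resIn Q X) A0 B0 2 hM
    obtain ⟨b, c, hbc, rfl⟩ := Set.ncard_eq_two.1 hI2
    have key : ∀ z ∈ ({b, c} : Set W), g z ⊆ X ∧ Conn Q (g z) ∧ Tch Q (g z) {s} ∧ Tch Q (g z) {t} := by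
      intro z hz
      obtain ⟨g1, g2, y, g3, g4⟩ := hg z hz
      exact ⟨g2.sub g1 (hI hz).1 (fun x y h => h.2.1), g2.le (fun x y h => h.1),
        ⟨z, g1, s, rfl, (hI hz).2⟩, ⟨y, g3, t, rfl, g4.2⟩⟩
    obtain ⟨p1, p2, p3, p4⟩ := key b (by simp)
    obtain ⟨q1, q2, q3, q4⟩ := key c (by simp)
    exact th _ _ p1 q1 p2 q2 (hd b (by simp) c (by simp) hbc) p3 p4 q3 q4
  obtain ⟨K, hK, hKc⟩ : ∃ K, A0 ⊆ K ∧ (sep (resIn Q X) B0 K).ncard ≤ 1 := by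
    by_contra hh
    exact hM fun K hK => by by_contra h2; exact hh ⟨K, hK, by omega⟩
  clear hM
  have sub1 : ∀ x ∈ sep (resIn Q X) B0 K, ∀ y ∈ sep (resIn Q X) B0 K, x = y :=
    fun x hx y hy => (Set.ncard_le_one (Set.toFinite _)).1 hKc x hx y hy
  have mB : ∀ x, x ∈ K → x ∈ X → Q.Adj x t → x ∈ sep (resIn Q X) B0 K :=
    fun x h1 h2 h3 => ⟨h1, Or.inl ⟨h2, h3⟩⟩
  have mO : ∀ x y, x ∈ K → x ∈ X → y ∈ X → y ∉ K → Q.Adj x y → x ∈ sep (resIn Q X) B0 K :=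
    fun x y h1 h2 h3 h4 h5 => ⟨h1, Or.inr ⟨y, h4, h5, h2, h3⟩⟩
  have mA : ∀ x, x ∈ X → Q.Adj x s → x ∈ K := fun x h1 h2 => hK ⟨h1, h2⟩
  obtain ⟨w, hwK, hwX, hw⟩ : ∃ w, w ∈ K ∧ w ∈ X ∧ w ∈ sep (resIn Q X) B0 K := by
    obtain ⟨x0, hx0, s', rfl, hxs⟩ := t1
    by_cases hall : ∃ y ∈ X, y ∉ K
    · obtain ⟨y, hy, hyK⟩ := hall
      obtain ⟨p, hp, q, hq, hpq⟩ := cX.2 (X ∩ K) (by grind) ⟨x0, hx0, mA x0 hx0 hxs⟩ ⟨y, hy, by grind⟩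
      exact ⟨p, hp.2, hp.1, mO p q hp.2 hp.1 hq.1 (by grind) hpq⟩
    · obtain ⟨y0, hy0, t', rfl, hyt⟩ := t2
      have : y0 ∈ K := by grind
      exact ⟨y0, this, hy0, mB y0 this hy0 hyt⟩
  have sw : ∀ x ∈ sep (resIn Q X) B0 K, x = w := fun x hx => sub1 x hx w hw
  clear_value A0 B0
  have nL : ∀ x y, Q.Adj x y → x ∈ (X ∩ K) \ {w} → y ∈ (X ∩ K) \ {w} ∨ y = s ∨ y = w := by
    rintro x y hxy ⟨⟨h1, h2⟩, h3⟩
    rcases nA x y hxy h1 with h4 | h4 | h4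
    · by_cases h5 : y ∈ K
      · grind
      · exact absurd (sw x (mO x y h2 h1 h4 h5 hxy)) h3
    · grind
    · subst h4
      exact absurd (sw x (mB x h2 h1 hxy)) h3
  have nR : ∀ x y, Q.Adj x y → x ∈ X \ K → y ∈ X \ K ∨ y = w ∨ y = t := by
    rintro x y hxy ⟨h1, h2⟩
    rcases nA x y hxy h1 with h4 | h4 | h4
    · by_cases h5 : y ∈ K
      · exact Or.inr (Or.inl (sw y (mO y x h5 h4 h1 h2 hxy.symm)))
      · grind
    · subst h4
      exact absurd (mA x h1 hxy) h2
    · grind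
  have hAL : ∀ u, u ∈ X ↔ u ∈ (X ∩ K) \ {w} ∨ u ∈ X \ K ∨ u = w := by intro u; grind
  have hAR : ∀ u, u ∈ X ↔ u ∈ X \ K ∨ u ∈ (X ∩ K) \ {w} ∨ u = w := by intro u; grind
  obtain ⟨Z1, z1⟩ := cutside cX hAL (by grind) (by grind) (by grind) hst hs ht nL nR t2 e
  obtain ⟨Z2, z2⟩ := cutside cX hAR (by grind) (by grind) (by grind) hst.symm ht hs
    (fun x y h h' => by have := nR x y h h'; tauto) (fun x y h h' => by have := nL x y h h'; tauto)
    t1 e.symm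
  have hsw : s ≠ w := by rintro rfl; exact hs hwX
  have htw : w ≠ t := by rintro rfl; exact ht hwX
  have g1 : HE Q ((X ∩ K) \ {w}) s w := by
    refine IH _ (ncard_lt (by grind) hwX (by grind)) s w hsw (by grind) (by grind) nL (Or.inr ⟨Z1, z1⟩) ?_
    obtain ⟨z1, z2, z3, z4, z5, z6⟩ := z1
    intro P1 P2 p1 p2 c1 c2 d t1 t2 t3 t4
    refine no_k23 k23 (conn_singleton s) (conn_singleton w) c1 c2 z1 ?_ ?_ ?_ ?_
      ⟨t1, t3, z5⟩ ⟨t2, t4, z6⟩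
    all_goals clear * - z2 z3 z4 p1 p2 hsw hs d
    · grind
    · refine ⟨d, ?_, ?_⟩ <;> intro z hz hz' <;> have := @p1 z <;> have := @p2 z <;> grind
    · refine ⟨?_, ?_, ?_⟩ <;> intro z hz hz' <;> have := @p1 z <;> have := @p2 z <;> grind
    · refine ⟨?_, ?_, ?_⟩ <;> intro z hz hz' <;> have := @p1 z <;> have := @p2 z <;> grind
  have g2 : HE Q (X \ K) w t := by
    refine IH _ (ncard_lt (by grind) hwX (by grind)) w t htw (by grind) (by grind) nR
      (EE.symm (Or.inr ⟨Z2, z2⟩)) ?_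
    obtain ⟨z1, z2, z3, z4, z5, z6⟩ := z2
    intro P1 P2 p1 p2 c1 c2 d t1 t2 t3 t4
    refine no_k23 k23 (conn_singleton w) (conn_singleton t) c1 c2 z1 ?_ ?_ ?_ ?_
      ⟨t1, t3, z6⟩ ⟨t2, t4, z5⟩
    all_goals clear * - z2 z3 z4 p1 p2 htw ht d hwK
    · grind
    · refine ⟨d, ?_, ?_⟩ <;> intro z hz hz' <;> have := @p1 z <;> have := @p2 z <;> grind
    · refine ⟨?_, ?_, ?_⟩ <;> intro z hz hz' <;> have := @p1 z <;> have := @p2 z <;> grind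
    · refine ⟨?_, ?_, ?_⟩ <;> intro z hz hz' <;> have := @p1 z <;> have := @p2 z <;> grind
  refine HE.glue g1 g2 nL nR (by grind) (by grind) (by grind) ?_
  intro u
  grind

theorem both_step [Finite W] (k4 : ¬ IsMinor K4 Q) (k23 : ¬ IsMinor K23 Q) :
    ∀ n, ∀ A : Set W, A.ncard < n → (∀ s, OneH Q A s) ∧ ∀ s t, MH Q A s t := by
  intro n
  induction n with
  | zero => intro A h; omega
  | succ n ih =>
    intro A hA
    have h1 : ∀ B : Set W, B.ncard ≤ A.ncard → ∀ s, OneH Q B s := fun B hB s =>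
      one_step k4 k23 (fun C hC => ih C (by omega))
    exact ⟨h1 A le_rfl, fun s t => m_step k4 k23 (fun C hC => (ih C (by omega)).2) h1⟩

theorem outer_extract [Finite W] (hQ : Outerplanar Q) : ∃ n, ∀ (V : Type) (G : SimpleGraph V)
    (S T U : Set V), Conn G S → Conn G T → Dj S T → Dj S U → Dj T U → Tch G S T → QS G n S T U →
    IsMinor Q G := by
  by_cases hW : Nonempty W
  · obtain ⟨x⟩ := hW
    obtain ⟨n, h⟩ := (both_step hQ.1 hQ.2 _ ({x}ᶜ : Set W) (Nat.lt_succ_self _)).1 x (by simp)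
      (by intro y z _ _; simp; tauto)
    refine ⟨n, fun V G S T U cS cT d1 d2 d3 tt q => ?_⟩
    obtain ⟨f, f1, f2, f3, f4, f5⟩ := h V G S T U cS cT d1 d2 d3 tt q
    have all : ∀ u, u ∈ ({x}ᶜ : Set W) ∨ u = x ∨ u = x := by intro u; simp; tauto
    refine isMinor_of f (fun u => (f3 u (all u)).2) (fun u u' => f4 u u' (all u) (all u')) ?_
    intro u u' hadj
    by_cases hu : u = x
    · have : u' ≠ x := by rintro rfl; exact hadj.ne hu
      exact (f5 u' u (by simpa using this) (all u) hadj.symm).symm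
    · exact f5 u u' (by simpa using hu) (all u') hadj
  · refine ⟨0, fun V G S T U _ _ _ _ _ _ _ => isMinor_of (fun u => ∅) ?_ ?_ ?_⟩ <;>
      intro u <;> exact absurd ⟨u⟩ hW

end
end PQ


namespace PQ

section
variable {V : Type} {G : SimpleGraph V}

def bd (G : SimpleGraph V) (X : Set V) : Set V := {v | v ∈ X ∧ ∃ w, w ∉ X ∧ G.Adj v w}

inductive Reach (G : SimpleGraph V) (k : ℕ) : Set V → Prop
  | empty : Reach G k ∅
  | step {X : Set V} (y : V) : Reach G k X → (bd G (insert y X)).ncard ≤ k → Reach G k (insert y X)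

theorem Reach.card {k : ℕ} {X : Set V} (h : Reach G k X) : (bd G X).ncard ≤ k := by
  cases h with
  | empty =>
    have : bd G ∅ = ∅ := by ext x; simp [bd]
    simp [this]
  | step y h1 h2 => exact h2

theorem bd_submod [Finite V] (A B : Set V) :
    (bd G (A ∩ B)).ncard + (bd G (A ∪ B)).ncard ≤ (bd G A).ncard + (bd G B).ncard := by
  rw [← Set.ncard_union_add_ncard_inter, ← Set.ncard_union_add_ncard_inter (bd G A)]
  apply Nat.add_le_add
  · apply Set.ncard_le_ncard _ (Set.toFinite _)
    rintro x (⟨⟨h1, h2⟩, w, h3, h4⟩ | ⟨h1, w, h3, h4⟩)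
    · by_cases hw : w ∈ A
      · exact Or.inr ⟨h2, w, fun h => h3 ⟨hw, h⟩, h4⟩
      · exact Or.inl ⟨h1, w, hw, h4⟩
    · rcases h1 with h1 | h1
      · exact Or.inl ⟨h1, w, fun h => h3 (Or.inl h), h4⟩
      · exact Or.inr ⟨h1, w, fun h => h3 (Or.inr h), h4⟩
  · apply Set.ncard_le_ncard _ (Set.toFinite _)
    rintro x ⟨⟨⟨h1, h2⟩, _⟩, ⟨_, w, h3, h4⟩⟩
    exact ⟨⟨h1, w, fun h => h3 (Or.inl h), h4⟩, ⟨h2, w, fun h => h3 (Or.inr h), h4⟩⟩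

theorem Reach.inter [Finite V] {k : ℕ} {Y Z X : Set V} (hXZ : X ⊆ Z) (hZY : Z ⊆ Y)
    (hmin : ∀ Z', X ⊆ Z' → Z' ⊆ Y → (bd G Z).ncard ≤ (bd G Z').ncard) {Y' : Set V}
    (h : Reach G k Y') (hY' : Y' ⊆ Y) : Reach G k (Z ∩ Y') := by
  induction h with
  | empty => rw [Set.inter_empty]; exact .empty
  | @step X' y h1 h2 ih =>
    have ih := ih (fun x hx => hY' (Or.inr hx))
    by_cases hy : y ∈ Z
    · have e : Z ∩ insert y X' = insert y (Z ∩ X') := by ext x; simp; grind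
      have h3 := bd_submod (G := G) Z (insert y X')
      have h4 := hmin (Z ∪ insert y X') (by grind) (by grind)
      rw [e] at h3 ⊢
      exact ih.step y (by omega)
    · have e : Z ∩ insert y X' = Z ∩ X' := by ext x; simp; grind
      rw [e]; exact ih

theorem Reach.dec [Finite V] {k : ℕ} {X' Y Z : Set V} (hY : Reach G k Y) (h1 : X' ⊆ Z) (h2 : Z ⊆ Y) :
    ∃ Z', X' ⊆ Z' ∧ Reach G k Z' ∧ (bd G Z').ncard ≤ (bd G Z).ncard := by
  obtain ⟨Z', ⟨h3, h4⟩, h5⟩ := Set.exists_min_image {Z | X' ⊆ Z ∧ Z ⊆ Y} (fun Z => (bd G Z).ncard)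
    (Set.toFinite _) ⟨Z, h1, h2⟩
  refine ⟨Z', h3, ?_, h5 Z ⟨h1, h2⟩⟩
  have := hY.inter h3 h4 (fun Z'' a b => h5 Z'' ⟨a, b⟩) subset_rfl
  rwa [Set.inter_eq_left.2 h4] at this

/-- path decomposition from a reachable set -/
theorem Reach.decomp [Fintype V] {k : ℕ} {X : Set V} (h : Reach G k X) :
    ∃ (n : ℕ) (b : ℕ → Finset V), (∀ i < n, (b i).card ≤ k + 1 ∧ ∀ v ∈ b i, v ∈ X) ∧
      (∀ v ∈ X, ∃ i < n, v ∈ b i) ∧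
      (∀ u v, G.Adj u v → u ∈ X → v ∈ X → ∃ i < n, u ∈ b i ∧ v ∈ b i) ∧
      (∀ i j l, i ≤ j → j ≤ l → l < n → ∀ v, v ∈ b i → v ∈ b l → v ∈ b j) ∧
      (∀ v ∈ bd G X, ∀ i j, i ≤ j → j < n → v ∈ b i → v ∈ b j) := by
  classical
  induction h with
  | empty => exact ⟨0, fun _ => ∅, by simp, by simp, by simp, by simp, by simp⟩
  | @step X y h1 h2 ih =>
    by_cases hy : y ∈ X
    · rw [Set.insert_eq_of_mem hy]; exact ih
    obtain ⟨n, b, b1, b2, b3, b4, b5⟩ := ih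
    have hc := h1.card
    have bdX : ∀ v ∈ bd G (insert y X), v = y ∨ v ∈ bd G X := by
      rintro v ⟨hv | hv, w, hw, hvw⟩
      · exact Or.inl hv
      · exact Or.inr ⟨hv, w, fun h => hw (Or.inr h), hvw⟩
    let B : Finset V := insert y (bd G X).toFinset
    have mB : ∀ v, v ∈ B ↔ v = y ∨ v ∈ bd G X := by intro v; simp [B]
    have cB : B.card ≤ k + 1 := by
      refine (Finset.card_insert_le _ _).trans ?_
      rw [← Set.ncard_eq_toFinset_card']; omega
    clear_value B
    have nb : ∀ u, u ∈ X → G.Adj u y → u ∈ bd G X := fun u hu h => ⟨hu, y, hy, h⟩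
    have bsub : ∀ v ∈ bd G X, v ∈ X := fun v hv => hv.1
    let b' : ℕ → Finset V := fun i => if i = n then B else b i
    have e1 : b' n = B := by simp [b']
    have e2 : ∀ i, i < n → b' i = b i := fun i hi => by simp [b', Nat.ne_of_lt hi]
    clear_value b'
    refine ⟨n + 1, b', ?_, ?_, ?_, ?_, ?_⟩
    · intro i hi
      rcases Nat.lt_succ_iff_lt_or_eq.1 hi with hi | rfl
      · rw [e2 i hi]; exact ⟨(b1 i hi).1, fun v hv => Or.inr ((b1 i hi).2 v hv)⟩
      · rw [e1]; refine ⟨cB, fun v hv => ?_⟩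
        rcases (mB v).1 hv with rfl | h
        · exact Or.inl rfl
        · exact Or.inr h.1
    · rintro v (rfl | hv)
      · exact ⟨n, by omega, by rw [e1, mB]; simp⟩
      · obtain ⟨i, hi, h⟩ := b2 v hv
        exact ⟨i, by omega, by rw [e2 i hi]; exact h⟩
    · rintro u v huv (rfl | hu) (rfl | hv)
      · exact absurd rfl huv.ne
      · exact ⟨n, by omega, by rw [e1, mB]; simp, by rw [e1, mB]; exact Or.inr (nb v hv huv.symm)⟩
      · exact ⟨n, by omega, by rw [e1, mB]; exact Or.inr (nb u hu huv), by rw [e1, mB]; simp⟩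
      · obtain ⟨i, hi, h⟩ := b3 u v huv hu hv
        exact ⟨i, by omega, by rw [e2 i hi]; exact h⟩
    · intro i j l hij hjl hl v hv1 hv2
      by_cases hln : l < n
      · rw [e2 _ (by omega)] at hv1 hv2 ⊢
        exact b4 i j l hij hjl hln v hv1 hv2
      · have : l = n := by omega
        subst this
        by_cases hjn : j = l
        · rw [hjn]; exact hv2
        · rw [e2 _ (by omega)] at hv1 ⊢
          rw [e1, mB] at hv2
          rcases hv2 with rfl | hv2
          · exact absurd ((b1 i (by omega)).2 _ hv1) hy
          · exact b5 v hv2 i j hij (by omega) hv1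
    · intro v hv i j hij hj hvi
      by_cases hjn : j = n
      · subst hjn; rw [e1, mB]; exact bdX v hv
      · rw [e2 _ (by omega)] at hvi ⊢
        rcases bdX v hv with rfl | hv2
        · exact absurd ((b1 i (by omega)).2 _ hvi) hy
        · exact b5 v hv2 i j hij (by omega) hvi

theorem pathwidth_le [Fintype V] {k : ℕ} (h : Reach G k Set.univ) : pathwidth G ≤ k := by
  obtain ⟨n, b, b1, b2, b3, b4, b5⟩ := h.decomp
  apply Nat.sInf_le
  refine ⟨n, fun i => b i, ⟨?_, ?_, ?_⟩, fun i => (b1 i i.2).1⟩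
  · intro v
    obtain ⟨i, hi, h⟩ := b2 v trivial
    exact ⟨⟨i, hi⟩, h⟩
  · intro u v huv
    obtain ⟨i, hi, h⟩ := b3 u v huv trivial trivial
    exact ⟨⟨i, hi⟩, h⟩
  · intro i j l hij hjl v h1 h2
    exact b4 i j l hij hjl l.2 v h1 h2

structure St (G : SimpleGraph V) (k i : ℕ) (X : Set V) (f : ℕ → Set V) (c : ℕ → V) : Prop where
  r : Reach G k X
  card : (bd G X).ncard = i
  mx : ∀ Y, X ⊆ Y → Reach G k Y → (∃ y ∈ Y, y ∉ X) → i < (bd G Y).ncard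
  cn : ∀ j, 1 ≤ j → j ≤ i → Conn G (f j) ∧ f j ⊆ X ∧ c j ∈ f j ∧ c j ∈ bd G X
  dj : ∀ j l, 1 ≤ j → j ≤ i → 1 ≤ l → l ≤ i → j ≠ l → Dj (f j) (f l)
  tc : ∀ j, 2 ≤ j → j ≤ i → Tch G (f j) (f (j / 2))

theorem exists_maxl [Finite V] {k i : ℕ} {X : Set V} (h : Reach G k X) (hc : (bd G X).ncard ≤ i) :
    ∃ Y, X ⊆ Y ∧ Reach G k Y ∧ (bd G Y).ncard ≤ i ∧
      ∀ Y', Y ⊆ Y' → Reach G k Y' → (∃ y ∈ Y', y ∉ Y) → i < (bd G Y').ncard := by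
  obtain ⟨Y, ⟨h1, h2, h3⟩, h4⟩ := Set.exists_max_image {Z | X ⊆ Z ∧ Reach G k Z ∧ (bd G Z).ncard ≤ i}
    (fun Z => Z.ncard) (Set.toFinite _) ⟨X, subset_rfl, h, hc⟩
  refine ⟨Y, h1, h2, h3, fun Y' h5 h6 h7 => ?_⟩
  obtain ⟨y, hy, hy'⟩ := h7
  by_contra hh
  have := h4 Y' ⟨h1.trans h5, h6, by omega⟩
  have := ncard_lt h5 hy hy'
  omega

theorem St.step [Finite V] {k i : ℕ} (hk : ¬ Reach G k Set.univ) (hi : i < k) {X f c}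
    (h : St G k i X f c) : ∃ X f c, St G k (i + 1) X f c := by
  classical
  obtain ⟨hr, hcard, hmx, hcn, hdj, htc⟩ := h
  obtain ⟨y, hyX, hyc⟩ : ∃ y, y ∉ X ∧ (1 ≤ i → G.Adj (c ((i + 1) / 2)) y) := by
    by_cases h1 : 1 ≤ i
    · obtain ⟨_, _, _, _, y, hy, hyc⟩ := hcn ((i + 1) / 2) (by omega) (by omega)
      exact ⟨y, hy, fun _ => hyc⟩
    · have : ∃ y, y ∉ X := by
        by_contra hh
        push Not at hh
        rw [Set.eq_univ_of_forall hh] at hr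
        exact hk hr
      obtain ⟨y, hy⟩ := this
      exact ⟨y, hy, fun h => absurd h h1⟩
  have bsub : bd G (insert y X) ⊆ insert y (bd G X) := by
    rintro v ⟨hv | hv, w, hw, hvw⟩
    · exact Or.inl hv
    · exact Or.inr ⟨hv, w, fun h => hw (Or.inr h), hvw⟩
  have c1 : (insert y (bd G X)).ncard ≤ i + 1 := by
    have := Set.ncard_insert_le y (bd G X); omega
  have c2 := Set.ncard_le_ncard bsub (Set.toFinite _)
  have hr' : Reach G k (insert y X) := hr.step y (by omega)
  have c3 := hmx _ (Set.subset_insert y X) hr' ⟨y, Or.inl rfl, hyX⟩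
  have bdeq : bd G (insert y X) = insert y (bd G X) :=
    Set.eq_of_subset_of_ncard_le bsub (by omega) (Set.toFinite _)
  obtain ⟨Y, hXY, hY, cY, mY⟩ := exists_maxl hr' (i := i + 1) (by omega)
  have hXY' : X ⊆ Y := fun x hx => hXY (Or.inr hx)
  have hyY : y ∈ Y := hXY (Or.inl rfl)
  have cY' := hmx Y hXY' hY ⟨y, hyY, hyX⟩
  set M : Set V := {v | v ∈ Y ∧ (v ∈ insert y X → v ∈ bd G (insert y X))} with hM
  have hL : Lk (resIn G M) (bd G (insert y X)) (bd G Y) (i + 1) := by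
    apply menger
    intro K hK
    by_contra hlt
    obtain ⟨Z', z1, z2, z3⟩ := hY.dec (X' := insert y X) (Z := insert y X ∪ (K ∩ Y)) (by grind) (by grind)
    have z4 := hmx Z' (fun x hx => z1 (Or.inr hx)) z2 ⟨y, z1 (Or.inl rfl), hyX⟩
    have : bd G (insert y X ∪ (K ∩ Y)) ⊆ sep (resIn G M) (bd G Y) K := by
      rintro v ⟨hv, w, hw, hvw⟩
      have hwX : w ∉ insert y X := fun h => hw (Or.inl h)
      have hwK : w ∈ Y → w ∉ K := fun h h' => hw (Or.inr ⟨h', h⟩)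
      have hv' : v ∈ K ∧ v ∈ M := by
        by_cases hvX : v ∈ insert y X
        · have : v ∈ bd G (insert y X) := ⟨hvX, w, hwX, hvw⟩
          exact ⟨hK this, hXY hvX, fun _ => this⟩
        · rcases hv with hv | hv
          · exact absurd hv hvX
          · exact ⟨hv.1, hv.2, fun h => absurd h hvX⟩
      refine ⟨hv'.1, ?_⟩
      by_cases hwY : w ∈ Y
      · exact Or.inr ⟨w, hwK hwY, hvw, hv'.2, hwY, fun h => absurd h hwX⟩
      · exact Or.inl ⟨hv'.2.1, w, hwY, hvw⟩
    have := Set.ncard_le_ncard this (Set.toFinite _)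
    omega
  obtain ⟨I, g, hI, hIc, hg, hd⟩ := hL
  have hIe : I = bd G (insert y X) := Set.eq_of_subset_of_ncard_le hI (by omega) (Set.toFinite _)
  subst hIe
  clear hI hIc
  have gM : ∀ a ∈ bd G (insert y X), g a ⊆ M := fun a ha =>
    (hg a ha).2.1.sub (hg a ha).1 ⟨hXY ha.1, fun _ => ha⟩ (fun x y h => h.2.1)
  have gX : ∀ a ∈ bd G (insert y X), ∀ z ∈ g a, z ∈ insert y X → z = a := by
    intro a ha z hz hzX
    have h1 := (gM a ha hz).2 hzX
    by_contra hne
    exact hd z h1 a ha hne z (hg z h1).1 hz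
  have gc : ∀ a ∈ bd G (insert y X), Conn G (g a) := fun a ha => (hg a ha).2.1.le (fun x y h => h.1)
  have gb : ∀ a, ∃ b, a ∈ bd G (insert y X) → b ∈ g a ∧ b ∈ bd G Y := by
    intro a
    by_cases ha : a ∈ bd G (insert y X)
    · obtain ⟨b, h1, h2⟩ := (hg a ha).2.2
      exact ⟨b, fun _ => ⟨h1, h2⟩⟩
    · exact ⟨a, fun h => absurd h ha⟩
  choose b hb using gb
  have hy' : y ∈ bd G (insert y X) := by rw [bdeq]; exact Or.inl rfl
  have hc' : ∀ j, 1 ≤ j → j ≤ i → c j ∈ bd G (insert y X) := by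
    intro j h1 h2; rw [bdeq]; exact Or.inr (hcn j h1 h2).2.2.2
  have fg : ∀ j a, 1 ≤ j → j ≤ i → a ∈ bd G (insert y X) → ∀ z ∈ f j, z ∈ g a → z = a :=
    fun j a h1 h2 ha z hz hz' => gX a ha z hz' (Or.inr ((hcn j h1 h2).2.1 hz))
  let f' : ℕ → Set V := fun j => if j = i + 1 then g y else f j ∪ g (c j)
  let c' : ℕ → V := fun j => if j = i + 1 then b y else b (c j)
  have f1 : f' (i + 1) = g y := by simp [f']
  have f2 : ∀ j, j ≤ i → f' j = f j ∪ g (c j) := fun j hj => if_neg (by omega)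
  have c1 : c' (i + 1) = b y := by simp [c']
  have c2 : ∀ j, j ≤ i → c' j = b (c j) := fun j hj => if_neg (by omega)
  clear_value f' c'
  have dy : ∀ j, 1 ≤ j → j ≤ i → Dj (f' j) (g y) := by
    intro j h1 h2 z hz hz'
    rw [f2 j h2] at hz
    rcases hz with hz | hz
    · have := fg j y h1 h2 hy' z hz hz'
      subst this
      exact hyX ((hcn j h1 h2).2.1 hz)
    · refine hd (c j) (hc' j h1 h2) y hy' ?_ z hz hz'
      rintro h
      exact hyX (h ▸ (hcn j h1 h2).2.2.2.1)
  refine ⟨Y, f', c', hY, by omega, mY, ?_, ?_, ?_⟩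
  · intro j h1 h2
    by_cases hj : j = i + 1
    · subst hj
      rw [f1, c1]
      exact ⟨gc y hy', fun z hz => (gM y hy' hz).1, (hb y hy').1, (hb y hy').2⟩
    · have hj : j ≤ i := by omega
      rw [f2 j hj, c2 j hj]
      obtain ⟨k1, k2, k3, k4⟩ := hcn j h1 hj
      refine ⟨k1.union' (gc _ (hc' j h1 hj)) ⟨c j, k3, (hg _ (hc' j h1 hj)).1⟩, ?_,
        Or.inr (hb _ (hc' j h1 hj)).1, (hb _ (hc' j h1 hj)).2⟩
      rintro z (hz | hz)
      · exact hXY' (k2 hz)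
      · exact (gM _ (hc' j h1 hj) hz).1
  · intro j l h1 h2 h3 h4 hne
    by_cases hj : j = i + 1
    · subst hj
      rw [f1]
      exact (dy l h3 (by omega)).symm
    by_cases hl : l = i + 1
    · subst hl
      rw [f1]
      exact dy j h1 (by omega)
    replace hj : j ≤ i := by omega
    replace hl : l ≤ i := by omega
    rw [f2 j hj, f2 l hl]
    rintro z (hz | hz) (hz' | hz')
    · exact hdj j l h1 hj h3 hl hne z hz hz'
    · have := fg j _ h1 hj (hc' l h3 hl) z hz hz'
      exact hdj j l h1 hj h3 hl hne z hz (this ▸ (hcn l h3 hl).2.2.1)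
    · have := fg l _ h3 hl (hc' j h1 hj) z hz' hz
      exact hdj j l h1 hj h3 hl hne z (this ▸ (hcn j h1 hj).2.2.1) hz'
    · refine hd _ (hc' j h1 hj) _ (hc' l h3 hl) ?_ z hz hz'
      intro h
      exact hdj j l h1 hj h3 hl hne (c j) (hcn j h1 hj).2.2.1 (h ▸ (hcn l h3 hl).2.2.1)
  · intro j h1 h2
    rw [f2 (j / 2) (by omega)]
    by_cases hj : j = i + 1
    · subst hj
      rw [f1]
      exact ⟨y, (hg y hy').1, c ((i + 1) / 2), Or.inl (hcn _ (by omega) (by omega)).2.2.1,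
        (hyc (by omega)).symm⟩
    · rw [f2 j (by omega)]
      exact (htc j h1 (by omega)).mono (by grind) (by grind)

theorem heap_of_pathwidth [Fintype V] {k : ℕ} (h : k < pathwidth G) : ∃ f : ℕ → Set V,
    (∀ j, 1 ≤ j → j ≤ k → Conn G (f j)) ∧
    (∀ j l, 1 ≤ j → j ≤ k → 1 ≤ l → l ≤ k → j ≠ l → Dj (f j) (f l)) ∧
    (∀ j, 2 ≤ j → j ≤ k → Tch G (f j) (f (j / 2))) := by
  have hk : ¬ Reach G k Set.univ := fun hh => by have := pathwidth_le hh; omega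
  have hne : Nonempty V := by
    by_contra hh
    apply hk
    have : (Set.univ : Set V) = ∅ := by
      ext x; exact absurd ⟨x⟩ hh
    rw [this]; exact .empty
  obtain ⟨v⟩ := hne
  have key : ∀ i, i ≤ k → ∃ X f c, St G k i X f c := by
    intro i
    induction i with
    | zero =>
      intro _
      have hb : bd G ∅ = ∅ := by ext x; simp [bd]
      obtain ⟨Y, h1, h2, h3, h4⟩ := exists_maxl (G := G) (k := k) (i := 0) .empty (by simp [hb])
      exact ⟨Y, fun _ => ∅, fun _ => v, h2, by omega, h4, by omega, by omega, by omega⟩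
    | succ i ih =>
      intro hi
      obtain ⟨X, f, c, h⟩ := ih (by omega)
      exact h.step hk (by omega)
  obtain ⟨X, f, c, h⟩ := key k le_rfl
  exact ⟨f, fun j h1 h2 => (h.cn j h1 h2).1, h.dj, h.tc⟩

end
end PQ


namespace PQ

section
variable {V : Type} {G : SimpleGraph V}

def MT (G : SimpleGraph V) : ℕ → Set V → Set V → Prop
  | 0 => fun R U => Conn G R ∧ R ⊆ U ∧ U ⊆ R
  | n + 1 => fun R U => Conn G R ∧ ∃ B C RB RC, (R ⊆ U ∧ B ⊆ U ∧ C ⊆ U ∧ U ⊆ R ∪ B ∪ C) ∧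
      (Dj R B ∧ Dj R C ∧ Dj B C) ∧ Tch G R RB ∧ Tch G R RC ∧ MT G n RB B ∧ MT G n RC C

theorem MT.cR {n : ℕ} {R U : Set V} (h : MT G n R U) : Conn G R := by
  cases n <;> exact h.1

theorem MT.sub {n : ℕ} {R U : Set V} (h : MT G n R U) : R ⊆ U := by
  cases n with
  | zero => exact h.2.1
  | succ n =>
    obtain ⟨_, _, _, _, _, h, _⟩ := h
    exact h.1

theorem Conn.cast {A B : Set V} (h : Conn G A) (h1 : A ⊆ B) (h2 : B ⊆ A) : Conn G B := by
  rwa [← Set.Subset.antisymm h1 h2]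

theorem MT.cU {n : ℕ} {R U : Set V} (h : MT G n R U) : Conn G U := by
  induction n generalizing R U with
  | zero => exact h.1.cast h.2.1 h.2.2
  | succ n ih =>
    obtain ⟨cR, B, C, RB, RC, h1, h2, t1, t2, m1, m2⟩ := h
    have c1 := cR.union (ih m1) (t1.mono (by rfl) m1.sub)
    have c2 := c1.union (ih m2) (t2.mono (by grind) m2.sub)
    exact c2.cast (by grind) h1.2.2.2

theorem MT.absorb {n : ℕ} {R U : Set V} (h : MT G n R U) {u v : V} (hv : v ∉ U) (hu : u ∈ U)
    (huv : G.Adj u v) : ∃ R', R ⊆ R' ∧ MT G n R' (insert v U) := by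
  induction n generalizing R U with
  | zero =>
    obtain ⟨h1, h2, h3⟩ := h
    exact ⟨insert v R, by grind, h1.insert (h3 hu) huv, by grind, by grind⟩
  | succ n ih =>
    obtain ⟨cR, B, C, RB, RC, ⟨h1, h2, h3, h4⟩, ⟨d1, d2, d3⟩, t1, t2, m1, m2⟩ := h
    have hu' := h4 hu
    rcases hu' with (hu' | hu') | hu'
    · exact ⟨insert v R, by grind, cR.insert hu' huv, B, C, RB, RC, by grind, by grind,
        t1.mono (by grind) (by rfl), t2.mono (by grind) (by rfl), m1, m2⟩
    · obtain ⟨RB', k1, k2⟩ := ih m1 (fun h => hv (h2 h)) hu'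
      refine ⟨R, by rfl, cR, insert v B, C, RB', RC, ?_, ?_, t1.mono (by rfl) k1, t2, k2, m2⟩
      · clear * - h1 h2 h3 h4; grind
      · clear * - d1 d2 d3 h1 h2 h3 hv; grind
    · obtain ⟨RC', k1, k2⟩ := ih m2 (fun h => hv (h3 h)) hu'
      refine ⟨R, by rfl, cR, B, insert v C, RB, RC', ?_, ?_, t1, t2.mono (by rfl) k1, m1, k2⟩
      · clear * - h1 h2 h3 h4; grind
      · clear * - d1 d2 d3 h1 h2 h3 hv; grind

theorem MT.univ [Finite V] (hc : Conn G Set.univ) {n : ℕ} {R U : Set V} (h : MT G n R U) :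
    ∃ R, MT G n R Set.univ := by
  obtain ⟨Y, ⟨R', h1⟩, h4⟩ := Set.exists_max_image {Z | ∃ R, MT G n R Z}
    (fun Z => Z.ncard) (Set.toFinite _) ⟨U, R, h⟩
  by_cases hY : ∃ x, x ∉ Y
  · exfalso
    obtain ⟨x, hx⟩ := hY
    obtain ⟨p, hp, q, hq, hpq⟩ := hc.2 Y (Set.subset_univ _) h1.cU.1 ⟨x, trivial, hx⟩
    obtain ⟨R2, _, h2⟩ := h1.absorb hq.2 hp hpq
    have := h4 _ ⟨R2, h2⟩
    have := ncard_lt (A := insert q Y) (B := Y) (by grind) (x := q) (by grind) hq.2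
    omega
  · push Not at hY
    rw [Set.eq_univ_of_forall hY] at h1
    exact ⟨R', h1⟩

def DD (f : ℕ → Set V) : ℕ → ℕ → Set V
  | 0 => fun j => f j
  | n + 1 => fun j => f j ∪ DD f n (2 * j) ∪ DD f n (2 * j + 1)

theorem DD.mem {f : ℕ → Set V} {n j : ℕ} {x : V} (h : x ∈ DD f n j) :
    ∃ i m, i / 2 ^ m = j ∧ i + 1 ≤ (j + 1) * 2 ^ n ∧ x ∈ f i := by
  induction n generalizing j with
  | zero => exact ⟨j, 0, by simp, by simp, h⟩
  | succ n ih =>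
    rcases h with (h | h) | h
    · exact ⟨j, 0, by simp, Nat.le_mul_of_pos_right _ (by positivity), h⟩
    · obtain ⟨i, m, h1, h2, h3⟩ := ih h
      refine ⟨i, m + 1, ?_, ?_, h3⟩
      · rw [pow_succ, ← Nat.div_div_eq_div_mul, h1]; omega
      · rw [pow_succ]; nlinarith [Nat.two_pow_pos n]
    · obtain ⟨i, m, h1, h2, h3⟩ := ih h
      refine ⟨i, m + 1, ?_, ?_, h3⟩
      · rw [pow_succ, ← Nat.div_div_eq_div_mul, h1]; omega
      · rw [pow_succ]; nlinarith

theorem div_lt_aux {i m m' a b : ℕ} (h1 : i / 2 ^ m = a) (h2 : i / 2 ^ m' = b) (hab : a ≠ b) :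
    2 * b ≤ a ∨ 2 * a ≤ b := by
  rcases Nat.lt_trichotomy m m' with h | h | h
  · obtain ⟨d, rfl⟩ := Nat.exists_eq_add_of_lt h
    rw [show m + d + 1 = m + 1 + d by omega, pow_add, pow_succ, ← Nat.div_div_eq_div_mul,
      ← Nat.div_div_eq_div_mul, h1] at h2
    have := Nat.div_le_self (a / 2) (2 ^ d)
    omega
  · subst h; omega
  · obtain ⟨d, rfl⟩ := Nat.exists_eq_add_of_lt h
    rw [show m' + d + 1 = m' + 1 + d by omega, pow_add, pow_succ, ← Nat.div_div_eq_div_mul,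
      ← Nat.div_div_eq_div_mul, h2] at h1
    have := Nat.div_le_self (b / 2) (2 ^ d)
    omega

theorem mt_of_heap {f : ℕ → Set V} {k : ℕ} (h1 : ∀ j, 1 ≤ j → j ≤ k → Conn G (f j))
    (h2 : ∀ j l, 1 ≤ j → j ≤ k → 1 ≤ l → l ≤ k → j ≠ l → Dj (f j) (f l))
    (h3 : ∀ j, 2 ≤ j → j ≤ k → Tch G (f j) (f (j / 2))) (n j : ℕ) (hj : 1 ≤ j)
    (hk : (j + 1) * 2 ^ n ≤ k + 1) : MT G n (f j) (DD f n j) := by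
  induction n generalizing j with
  | zero => exact ⟨h1 j hj (by simpa using hk), subset_rfl, subset_rfl⟩
  | succ n ih =>
    have hp : 1 ≤ 2 ^ n := Nat.one_le_two_pow
    have e1 : (j + 1) * 2 ^ (n + 1) = (2 * j + 1 + 1) * 2 ^ n := by rw [pow_succ]; ring
    rw [e1] at hk
    have hk' : (2 * j + 1) * 2 ^ n ≤ k + 1 := le_trans (Nat.mul_le_mul_right _ (by omega)) hk
    have hjk : 2 * j + 1 ≤ k := by nlinarith
    have idx : ∀ i m, i / 2 ^ m = 2 * j ∨ i / 2 ^ m = 2 * j + 1 → 1 ≤ i := by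
      intro i m h
      have := Nat.div_le_self i (2 ^ m)
      omega
    refine ⟨h1 j hj (by omega), DD f n (2 * j), DD f n (2 * j + 1), f (2 * j), f (2 * j + 1),
      ⟨fun x h => Or.inl (Or.inl h), fun x h => Or.inl (Or.inr h), fun x h => Or.inr h, subset_rfl⟩,
      ⟨?_, ?_, ?_⟩, ?_, ?_, ih (2 * j) (by omega) hk', ih (2 * j + 1) (by omega) hk⟩
    · intro x hx hx'
      obtain ⟨i, m, a1, a2, a3⟩ := DD.mem hx'
      have := idx i m (Or.inl a1)
      have := Nat.div_le_self i (2 ^ m)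
      exact h2 j i hj (by omega) (by omega) (by omega) (by omega) x hx a3
    · intro x hx hx'
      obtain ⟨i, m, a1, a2, a3⟩ := DD.mem hx'
      have := idx i m (Or.inr a1)
      have := Nat.div_le_self i (2 ^ m)
      exact h2 j i hj (by omega) (by omega) (by omega) (by omega) x hx a3
    · intro x hx hx'
      obtain ⟨i, m, a1, a2, a3⟩ := DD.mem hx
      obtain ⟨i', m', b1, b2, b3⟩ := DD.mem hx'
      have := idx i m (Or.inl a1)
      have := idx i' m' (Or.inr b1)
      by_cases hii : i = i'
      · subst hii
        have := div_lt_aux a1 b1 (by omega)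
        omega
      · exact h2 i i' (by omega) (by omega) (by omega) (by omega) hii x a3 b3
    · have := (h3 (2 * j) (by omega) (by omega)).symm
      rwa [show 2 * j / 2 = j by omega] at this
    · have := (h3 (2 * j + 1) (by omega) (by omega)).symm
      rwa [show (2 * j + 1) / 2 = j by omega] at this

theorem E1 {h k : ℕ} {R U O : Set V} (hm : MT G (h + k + 1) R U) (cO : Conn G O) (dO : Dj O U) :
    RT G k O R (U \ R) ∨ ∃ U' R', MT G h R' U' ∧ U' ⊆ U ∧ ¬ Tch G U' O ∧ Conn G (U \ U') ∧
      R ⊆ U \ U' := by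
  induction k generalizing R U with
  | zero =>
    obtain ⟨cR, B, C, RB, RC, ⟨h1, h2, h3, h4⟩, ⟨d1, d2, d3⟩, t1, t2, m1, m2⟩ := hm
    by_cases ht : Tch G B O
    · refine Or.inl ⟨O, R ∪ B, ⟨by grind, by grind, cO⟩,
        ⟨by grind, by grind, cR.union m1.cU (t1.mono (by rfl) m1.sub)⟩, ?_, ht.symm.mono (by rfl) (by grind)⟩
      clear * - dO h1 h2
      grind
    · refine Or.inr ⟨B, RB, m1, h2, ht, ?_, by grind⟩
      exact (cR.union m2.cU (t2.mono (by rfl) m2.sub)).cast (by grind) (by grind)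
  | succ k ih =>
    obtain ⟨cR, B, C, RB, RC, ⟨h1, h2, h3, h4⟩, ⟨d1, d2, d3⟩, t1, t2, m1, m2⟩ := hm
    have sB := m1.sub
    have sC := m2.sub
    rcases ih m1 (fun x hx hx' => dO x hx (h2 hx')) with r1 | ⟨U', R', a1, a2, a3, a4, a5⟩
    · rcases ih m2 (fun x hx hx' => dO x hx (h3 hx')) with r2 | ⟨U', R', a1, a2, a3, a4, a5⟩
      · refine Or.inl ⟨O, R, RB, RC, B \ RB, C \ RC, ⟨by grind, by grind, cO⟩, ⟨by grind, by grind, cR⟩,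
          ?_, ?_, ?_, ?_, ?_, Or.inr ?_, m1.cR, m2.cR, t1, t2, r1, r2⟩
        all_goals clear * - dO h1 h2 h3 d1 d2 d3 sB sC
        · grind
        · grind
        · grind
        · grind
        · refine ⟨?_, ?_, ?_, ?_, ?_, ?_, ?_, ?_, ?_, ?_, ?_, ?_, ?_, ?_⟩ <;> grind
        · grind
      · refine Or.inr ⟨U', R', a1, a2.trans h3, a3, ?_, by grind⟩
        refine ((cR.union m1.cU (t1.mono (by rfl) m1.sub)).union a4 (t2.mono (by grind) a5)).cast ?_ ?_
        · clear * - h1 h2 h3 h4 d1 d2 d3 a2; intro x; have := @a2 x; grind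
        · clear * - h1 h2 h3 h4 d1 d2 d3 a2; intro x; have := @h4 x; grind
    · refine Or.inr ⟨U', R', a1, a2.trans h2, a3, ?_, by grind⟩
      refine ((cR.union m2.cU (t2.mono (by rfl) m2.sub)).union a4 (t1.mono (by grind) a5)).cast ?_ ?_
      · clear * - h1 h2 h3 h4 d1 d2 d3 a2; intro x; have := @a2 x; grind
      · clear * - h1 h2 h3 h4 d1 d2 d3 a2; intro x; have := @h4 x; grind

def Win (G : SimpleGraph V) (k : ℕ) : Prop :=
  ∃ S T U, Conn G S ∧ Conn G T ∧ Dj S T ∧ Dj S U ∧ Dj T U ∧ RT G k S T U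

theorem E2child (hc : Conn G Set.univ) {a k : ℕ} {U B0 RB : Set V} (cU : Conn G Uᶜ)
    (m : MT G (a + k + 1 + k + 1) RB B0) (hB : B0 ⊆ U) (cUB : Conn G (U \ B0))
    (tB : Tch G RB (U \ B0)) : Win G k ∨ ∃ B2 R2, MT G a R2 B2 ∧ B2 ⊆ B0 ∧ RB ⊆ B0 \ B2 ∧
      Conn G (B0 \ B2) ∧ Conn G B2ᶜ ∧ ¬ Tch G B2 B0ᶜ := by
  rcases E1 m cU (fun x hx hx' => hx (hB hx')) with r | ⟨B1, R1, m1, s1, n1, c1, rb1⟩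
  · refine Or.inl ⟨_, _, _, cU, m.cR, ?_, ?_, ?_, r⟩
    · intro x hx hx'; exact hx (hB (m.sub hx'))
    · intro x hx hx'; exact hx (hB hx'.1)
    · grind
  have cO : Conn G (U \ B1) :=
    (cUB.union c1 (tB.symm.mono (by rfl) rb1)).cast (by grind) (by grind)
  rcases E1 m1 cO (by grind) with r | ⟨B2, R2, m2, s2, n2, c2, rb2⟩
  · have := m1.sub
    refine Or.inl ⟨_, _, _, cO, m1.cR, ?_, ?_, ?_, r⟩ <;> clear * - this <;> grind
  refine Or.inr ⟨B2, R2, m2, s2.trans s1, by grind, ?_⟩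
  obtain ⟨z1, hz1⟩ := c1.1
  obtain ⟨z2, hz2⟩ := m1.cU.1
  have t12 : Tch G (B0 \ B1) (B1 \ B2) := by
    obtain ⟨p, hp, q, hq, hpq⟩ := m.cU.2 B1 s1 ⟨z2, hz2⟩ ⟨z1, hz1.1, hz1.2⟩
    have : p ∉ B2 := fun h => n2 ⟨p, h, q, ⟨hB hq.1, hq.2⟩, hpq⟩
    exact ⟨q, hq, p, ⟨hp, this⟩, hpq.symm⟩
  have cB : Conn G (B0 \ B2) := (c1.union c2 t12).cast (by grind) (by grind)
  have cUB2 : Conn G (U \ B2) :=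
    (cUB.union cB (tB.symm.mono (by rfl) (by grind))).cast (by grind) (by grind)
  obtain ⟨z3, hz3⟩ := cUB.1
  have tU : Tch G Uᶜ (U \ B2) := by
    obtain ⟨p, hp, q, hq, hpq⟩ := hc.2 Uᶜ (Set.subset_univ _) cU.1 ⟨z3, trivial, by simpa using hz3.1⟩
    have : q ∉ B2 := fun h => n1 ⟨q, s2 h, p, hp, hpq.symm⟩
    exact ⟨p, hp, q, ⟨by simpa using hq.2, this⟩, hpq⟩
  refine ⟨cB, (cU.union cUB2 tU).cast ?_ ?_, ?_⟩
  · clear * - s1 s2 hB; intro x; have := @s1 x; have := @s2 x; have := @hB x; grind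
  · clear * - s1 s2 hB; intro x; have := @s1 x; have := @s2 x; have := @hB x; grind
  · rintro ⟨p, hp, q, hq, hpq⟩
    by_cases hqU : q ∈ U
    · exact n2 ⟨p, hp, q, ⟨hqU, fun h => hq (s1 h)⟩, hpq⟩
    · exact n1 ⟨p, s2 hp, q, hqU, hpq⟩

def gg (k : ℕ) : ℕ → ℕ
  | 0 => 0
  | n + 1 => gg k n + k + 1 + k + 1 + 1

theorem E2 (hc : Conn G Set.univ) {k n : ℕ} {R U : Set V} (m : MT G (gg k n) R U)
    (cU : Conn G Uᶜ) : Win G k ∨ NT G n U := by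
  induction n generalizing R U with
  | zero => exact Or.inr m.cU
  | succ n ih =>
    have cc := m.cU
    obtain ⟨cR, B, C, RB, RC, ⟨h1, h2, h3, h4⟩, ⟨d1, d2, d3⟩, t1, t2, m1, m2⟩ := m
    have sB := m1.sub
    have sC := m2.sub
    have cUB : Conn G (U \ B) := (cR.union m2.cU (t2.mono (by rfl) m2.sub)).cast (by grind) (by grind)
    have cUC : Conn G (U \ C) := (cR.union m1.cU (t1.mono (by rfl) m1.sub)).cast (by grind) (by grind)
    rcases E2child hc cU m1 h2 cUB (t1.symm.mono (by rfl) (by grind)) with w | ⟨B2, R2, a1, a2, a3, a4, a5, a6⟩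
    · exact Or.inl w
    rcases E2child hc cU m2 h3 cUC (t2.symm.mono (by rfl) (by grind)) with w | ⟨C2, R3, b1, b2, b3, b4, b5, b6⟩
    · exact Or.inl w
    rcases ih a1 a5 with w | nB
    · exact Or.inl w
    rcases ih b1 b5 with w | nC
    · exact Or.inl w
    refine Or.inr ⟨cc, B2, C2, a2.trans h2, b2.trans h3, ?_, ?_, ?_, ?_, nB, nC⟩
    · clear * - a2 b2 d3; grind
    · refine ((cR.union a4 (t1.mono (by rfl) a3)).union b4 (t2.mono (by grind) b3)).cast ?_ ?_
      · clear * - h1 h2 h3 d1 d2 d3 a2 b2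
        intro x; have := @a2 x; have := @b2 x; grind
      · clear * - h4
        intro x; have := @h4 x; grind
    · intro hh
      refine a6 (hh.mono (by rfl) ?_)
      clear * - h2 b2 d3
      intro x; have := @b2 x; have := @h2 x; have := d3 x; grind
    · intro hh
      refine b6 (hh.mono (by rfl) ?_)
      clear * - h3 a2 d3
      intro x; have := @a2 x; have := @h3 x; have := d3 x; grind

end
end PQ


namespace PQ

section
variable {V : Type} {G : SimpleGraph V}

theorem exists_state [Finite V] (tc : TC G) {U : Set V} (cU : Conn G U) (cU' : Conn G Uᶜ) {x y : V}
    (hx : x ∉ U) (hy : y ∉ U) (hxy : x ≠ y) : ∃ S T, State G S T U ∧ Tch G S T := by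
  have hyx := hxy.symm
  obtain ⟨u0, hu0⟩ := cU.1
  have H : CLH G (Uᶜ \ {x, y}) {x} {y} U := by
    refine ⟨conn_singleton x, conn_singleton y, by grind, by grind, by grind, ?_, ?_, ?_, ?_⟩
    · intro K hK hne
      refine (cU'.2 K (by grind) hne ⟨x, hx, by grind⟩).mono (by rfl) (by grind)
    · intro K hK
      refine (tc.2 x (U ∪ K) ⟨u0, Or.inl hu0⟩ (by grind) ⟨y, by grind, hyx⟩).mono (by rfl) (by grind)
    · intro K hK
      refine (tc.2 y (U ∪ K) ⟨u0, Or.inl hu0⟩ (by grind) ⟨x, by grind, hxy⟩).mono (by rfl) (by grind)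
    · intro v hv K hK hvK
      refine (tc.2 v (U ∪ K) ⟨u0, Or.inl hu0⟩ (by grind) ⟨x, by grind, by grind⟩).mono (by rfl)
        (fun z hz => by clear * - hz; simp at hz ⊢; tauto)
  obtain ⟨RX, RY, ⟨r1, r2, r3⟩, d, c1, c2, t1, t2⟩ := colouring H
  refine ⟨{x} ∪ RX, {y} ∪ RY, ⟨c1, c2, ?_, ?_, ?_, ?_, t1.symm, t2.symm⟩, ?_⟩
  · clear * - r1 r2 d hxy hyx; intro z; have := @r1 z; have := @r2 z; grind
  · clear * - r1 hx; intro z; have := @r1 z; grind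
  · clear * - r2 hy; intro z; have := @r2 z; grind
  · rintro ⟨p, hp, q, hq, hpq⟩
    have := @r3 q
    clear * - hq this
    grind
  · refine (cU'.2 ({x} ∪ RX) (by grind) ⟨x, by grind⟩ ⟨y, hy, ?_⟩).mono (by rfl) (by grind)
    clear * - r1 hyx
    have := @r1 y
    grind

theorem final {VP VQ : Type} [Fintype VP] [Fintype VQ]
    (P : SimpleGraph VP) (v : VP) (hP : (P.induce {u | u ≠ v}).IsAcyclic)
    (Q : SimpleGraph VQ) (hQ : Outerplanar Q) :
    ∃ p : ℕ, ∀ (V : Type) [Fintype V] (G : SimpleGraph V),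
      IsKConnected 2 G → p ≤ pathwidth G → IsMinor P G ∨ IsMinor Q G := by
  obtain ⟨k, hk⟩ := forest_extract P v hP
  obtain ⟨m, hm⟩ := outer_extract hQ
  obtain ⟨h, hh⟩ := main_local k m
  refine ⟨2 * 2 ^ (gg k h + 1) + 1, fun V _ G h2 hp => ?_⟩
  have tc := tc_of_isKConnected h2
  obtain ⟨f, f1, f2, f3⟩ := heap_of_pathwidth (G := G) (k := 2 * 2 ^ (gg k h + 1)) (by omega)
  obtain ⟨R, hR⟩ := (mt_of_heap f1 f2 f3 (gg k h + 1) 1 le_rfl (by omega)).univ tc.1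
  obtain ⟨cR, B, C, RB, RC, ⟨h1, h2, h3, h4⟩, ⟨d1, d2, d3⟩, t1, t2, m1, m2⟩ := hR
  have h4' : ∀ x, x ∈ R ∪ B ∪ C := fun x => h4 trivial
  have cB : Conn G Bᶜ := (cR.union m2.cU (t2.mono (by rfl) m2.sub)).cast (by grind) (by grind)
  have win : Win G k → IsMinor P G := by
    rintro ⟨S, T, U, a1, a2, a3, a4, a5, a6⟩
    exact hk V G S T U a1 a2 a3 a4 a5 a6
  rcases E2 tc.1 m1 cB with w | nB
  · exact Or.inl (win w)
  obtain ⟨x, hx⟩ := cR.1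
  obtain ⟨y, hy⟩ := m2.cU.1
  obtain ⟨S, T, st, tST⟩ := exists_state tc m1.cU cB (x := x) (y := y) (d1 x hx) (fun h => d3 y h hy)
    (by rintro rfl; exact d2 x hx hy)
  rcases hh V G tc S T B nB st with r | q
  · exact Or.inl (hk V G S T B st.cS st.cT st.dST st.dSU st.dTU r)
  · exact Or.inr (hm V G S T B st.cS st.cT st.dST st.dSU st.dTU tST q)

end
end PQ

/-- Theorem 1.3. Let `P` be a graph with a vertex `v` such that `P \ v`
is a forest, and let `Q` be an outerplanar graph. Then there is a number `p` such that
every 2-connected graph of path-width at least `p` has a `P` or `Q` minor. -/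
theorem two_connected_large_pathwidth_has_P_or_Q_minor
    {VP VQ : Type} [Fintype VP] [Fintype VQ]
    (P : SimpleGraph VP) (v : VP) (hP : (P.induce {u | u ≠ v}).IsAcyclic)
    (Q : SimpleGraph VQ) (hQ : Outerplanar Q) :
    ∃ p : ℕ, ∀ (V : Type) [Fintype V] (G : SimpleGraph V),
      IsKConnected 2 G → p ≤ pathwidth G → IsMinor P G ∨ IsMinor Q G := PQ.final P v hP Q hQ
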